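/- arXiv:1511.02558 — 2 statements merged into one kernel-verified Lean document; each statement's English description precedes it below -/
import Mathlib

section
/- For every integer n ≥ 45, (p(n-1)/p(n)) · (1 + π/(√24 · n^{3/2})) > p(n)/p(n+1). -/
open Real

/-- The partition function, as a real number. -/
noncomputable def p (n : ℕ) : ℝ := (Fintype.card (Nat.Partition n) : ℝ)

/-
The generating function at `exp (-z)` is the Euler product, and the modular transformation of `η`
writes it as `√(z / 2π) exp (π² / (6 z) - z / 24)` times its value at `exp (-4π² / z)`, which tends
to `1` as `z → 0`. Subtracting `z ^ (1/2) (1 + A / z)` from `z ^ (1/2) exp (A / z)`, `A = π² / 6`,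
makes the inverse Laplace integral along a vertical line absolutely convergent without changing its
main part, so the integral formula for `p n` yields `p n = M (n - 1/24) + O (exp (5 u / 8))`, where
`u = π √(2 (n - 1/24) / 3)` and `M` grows like `exp u` up to a power of `u`. To leading orders the
second difference of `-log M` is `π / (√24 n ^ (3/2))` minus a positive multiple of `1 / n ^ 2`,
which exceeds the error terms for `n ≥ 1001`. The remaining values of `p` are computed by Kronecker
substitution, as the base `2 ^ 128` digits of a single natural number.
-/

namespace PartitionAsymptotics

theorem p_pos (n : ℕ) : 0 < p n :=
  Nat.cast_pos.2 Fintype.card_pos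

theorem p_nonneg (n : ℕ) : 0 ≤ p n := (p_pos n).le

section GeneratingFunction

open PowerSeries PowerSeries.WithPiTopology Finset Nat.Partition

/-- The number of partitions of `n` into parts of size at most `k`. -/
def boundedCount (k n : ℕ) : ℕ := #(restricted n (· ≤ k))

theorem boundedCount_le_p (k n : ℕ) : (boundedCount k n : ℝ) ≤ p n :=
  Nat.cast_le.2 (card_le_univ _)

theorem boundedCount_of_le {k n : ℕ} (h : n ≤ k) : (boundedCount k n : ℝ) = p n := by
  rw [boundedCount, restricted, filter_true_of_mem, card_univ, p]
  exact fun q _ i hi ↦ (Nat.Partition.le_of_mem_parts hi).trans h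

theorem mk_boundedCount_mul_prod (k : ℕ) :
    (PowerSeries.mk fun n ↦ (boundedCount k n : ℤ)) * ∏ i ∈ range k, (1 - X ^ (i + 1)) = 1 := by
  have h : HasProd (fun i ↦ if i + 1 ≤ k then ∑' j : ℕ, (X : ℤ⟦X⟧) ^ ((i + 1) * j) else 1)
      (∏ i ∈ range k, if i + 1 ≤ k then ∑' j : ℕ, (X : ℤ⟦X⟧) ^ ((i + 1) * j) else 1) :=
    hasProd_prod_of_ne_finset_one fun i hi ↦ if_neg fun h ↦ hi (mem_range.2 h)
  have hmk : (PowerSeries.mk fun n ↦ (boundedCount k n : ℤ)) = _ :=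
    (hasProd_powerSeriesMk_card_restricted ℤ (· ≤ k)).unique h
  rw [hmk, ← prod_mul_distrib]
  refine prod_eq_one fun i hi ↦ ?_
  simp_rw [if_pos (Nat.succ_le_of_lt (mem_range.1 hi)), pow_mul]
  exact tsum_pow_mul_one_sub_of_constantCoeff_eq_zero (by simp)

theorem mk_ite_dvd_mul_one_sub_X_pow {R : Type*} [CommRing R] {m : ℕ} (hm : m ≠ 0) :
    (PowerSeries.mk fun n ↦ if m ∣ n then (1 : R) else 0) * (1 - X ^ m) = 1 := by
  ext n
  rw [mul_sub, mul_one, map_sub, coeff_mul_X_pow', coeff_one]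
  simp only [coeff_mk]
  by_cases h : m ≤ n
  · have hn : n ≠ 0 := (hm.bot_lt.trans_le h).ne'
    simp [h, hn, Nat.dvd_sub_iff_left h dvd_rfl]
  · rcases eq_or_ne n 0 with rfl | hn
    · simp [hm]
    · have hd : ¬m ∣ n := fun hd ↦ h (Nat.le_of_dvd hn.bot_lt hd)
      simp [h, hn, hd]

theorem boundedCount_zero (n : ℕ) : boundedCount 0 n = if n = 0 then 1 else 0 := by
  have h := congrArg (coeff n) (mk_boundedCount_mul_prod 0)
  simp only [range_zero, prod_empty, mul_one, coeff_mk, coeff_one] at h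
  split_ifs at h ⊢ <;> exact_mod_cast h

theorem boundedCount_succ (k n : ℕ) : boundedCount (k + 1) n =
    ∑ ab ∈ antidiagonal n, boundedCount k ab.1 * if k + 1 ∣ ab.2 then 1 else 0 := by
  have hk := mk_boundedCount_mul_prod k
  have hsucc := mk_boundedCount_mul_prod (k + 1)
  have hdvd := mk_ite_dvd_mul_one_sub_X_pow (R := ℤ) (m := k + 1) k.succ_ne_zero
  rw [prod_range_succ] at hsucc
  set P := ∏ i ∈ range k, (1 - X ^ (i + 1) : ℤ⟦X⟧)
  set D := PowerSeries.mk fun n ↦ if k + 1 ∣ n then (1 : ℤ) else 0 with hD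
  set F := PowerSeries.mk fun n ↦ (boundedCount k n : ℤ) with hF
  set G := PowerSeries.mk fun n ↦ (boundedCount (k + 1) n : ℤ) with hG
  have h : G = F * D := by
    linear_combination F * D * hsucc - G * D * (1 - X ^ (k + 1)) * hk - G * hdvd
  have hn := congrArg (coeff n) h
  simp only [hG, hF, hD, coeff_mul, coeff_mk] at hn
  exact_mod_cast hn

section NormedField

variable {𝕜 : Type*} [NormedField 𝕜] {x : 𝕜}

theorem hasSum_ite_dvd_mul_pow (hx : ‖x‖ < 1) {m : ℕ} (hm : m ≠ 0) :
    HasSum (fun n ↦ (if m ∣ n then 1 else 0) * x ^ n) (1 - x ^ m)⁻¹ := by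
  have hgeom := hasSum_geometric_of_norm_lt_one (ξ := x ^ m)
    (by simpa using pow_lt_one₀ (norm_nonneg x) hx hm)
  refine ((mul_right_injective₀ hm).hasSum_iff ?_).1 ?_
  · intro n hn
    rw [if_neg fun ⟨j, hj⟩ ↦ hn ⟨j, hj.symm⟩, zero_mul]
  · simpa [Function.comp_def, pow_mul] using hgeom

theorem summable_norm_ite_dvd_mul_pow (hx : ‖x‖ < 1) {m : ℕ} (hm : m ≠ 0) :
    Summable fun n ↦ ‖(if m ∣ n then 1 else 0) * x ^ n‖ := by
  have h := (hasSum_ite_dvd_mul_pow (x := ‖x‖) (by simpa using hx) hm).summable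
  refine h.congr fun n ↦ ?_
  split_ifs <;> simp

theorem boundedCount_succ_mul_pow (k n : ℕ) :
    (boundedCount (k + 1) n : 𝕜) * x ^ n = ∑ ab ∈ antidiagonal n,
      (boundedCount k ab.1 * x ^ ab.1) * ((if k + 1 ∣ ab.2 then 1 else 0) * x ^ ab.2) := by
  rw [boundedCount_succ, Nat.cast_sum, sum_mul]
  refine sum_congr rfl fun ab hab ↦ ?_
  rw [← mem_antidiagonal.1 hab, pow_add]
  push_cast
  ring

theorem summable_norm_boundedCount_mul_pow (hx : ‖x‖ < 1) (k : ℕ) :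
    Summable fun n ↦ ‖(boundedCount k n : 𝕜) * x ^ n‖ := by
  induction k with
  | zero =>
    refine summable_of_ne_finset_zero (s := {0}) fun n hn ↦ ?_
    rw [boundedCount_zero, if_neg (notMem_singleton.1 hn), Nat.cast_zero, zero_mul, norm_zero]
  | succ k ih =>
    have h := summable_norm_sum_mul_antidiagonal_of_summable_norm ih
      (summable_norm_ite_dvd_mul_pow (m := k + 1) hx k.succ_ne_zero)
    simpa only [boundedCount_succ_mul_pow] using h

theorem tsum_boundedCount_mul_pow [CompleteSpace 𝕜] (hx : ‖x‖ < 1) (k : ℕ) :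
    ∑' n, (boundedCount k n : 𝕜) * x ^ n = ∏ i ∈ range k, (1 - x ^ (i + 1))⁻¹ := by
  induction k with
  | zero =>
    rw [tsum_eq_single 0 fun n hn ↦ by simp [boundedCount_zero, hn]]
    simp [boundedCount_zero]
  | succ k ih =>
    simp_rw [boundedCount_succ_mul_pow]
    rw [← tsum_mul_tsum_eq_tsum_sum_antidiagonal_of_summable_norm
      (summable_norm_boundedCount_mul_pow hx k) (summable_norm_ite_dvd_mul_pow hx k.succ_ne_zero),
      ih, (hasSum_ite_dvd_mul_pow hx k.succ_ne_zero).tsum_eq, prod_range_succ]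

end NormedField

theorem sum_pow_pow_le_one_div {s : ℝ} (hs : 0 < s) (j k : ℕ) :
    ∑ i ∈ range k, (rexp (-s) ^ (i + 1)) ^ (j + 1) ≤ 1 / ((j + 1) * s) := by
  set y := rexp (-s) ^ (j + 1) with hy
  have hy0 : 0 < y := by positivity
  have hy1 : y < 1 :=
    pow_lt_one₀ (exp_pos _).le (exp_lt_one_iff.2 (neg_neg_of_pos hs)) j.succ_ne_zero
  have hgeom : ∑ i ∈ range k, y ^ i ≤ (1 - y)⁻¹ := by
    rw [← tsum_geometric_of_lt_one hy0.le hy1]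
    exact (summable_geometric_of_lt_one hy0.le hy1).sum_le_tsum _ fun _ _ ↦ by positivity
  have hinv : (j + 1) * s + 1 ≤ y⁻¹ := by
    rw [hy, ← exp_nat_mul, ← exp_neg]
    exact (add_one_le_exp _).trans' (by push_cast; linarith)
  calc ∑ i ∈ range k, (rexp (-s) ^ (i + 1)) ^ (j + 1) = y * ∑ i ∈ range k, y ^ i := by
        rw [mul_sum]
        exact sum_congr rfl fun i _ ↦ by rw [hy]; ring
    _ ≤ y * (1 - y)⁻¹ := by gcongr
    _ = 1 / (y⁻¹ - 1) := by
        have : 1 - y ≠ 0 := by linarith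
        field_simp
    _ ≤ 1 / ((j + 1) * s) := by gcongr; linarith

theorem prod_inv_one_sub_exp_le {s : ℝ} (hs : 0 < s) (k : ℕ) :
    ∏ i ∈ range k, (1 - rexp (-s) ^ (i + 1))⁻¹ ≤ rexp (π ^ 2 / 6 / s) := by
  have hlt (i : ℕ) : rexp (-s) ^ (i + 1) < 1 :=
    pow_lt_one₀ (exp_pos _).le (exp_lt_one_iff.2 (neg_neg_of_pos hs)) i.succ_ne_zero
  have hlog (i : ℕ) : (1 - rexp (-s) ^ (i + 1))⁻¹ = rexp (-log (1 - rexp (-s) ^ (i + 1))) := by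
    rw [exp_neg (log _), exp_log (by linarith [hlt i])]
  simp_rw [hlog]
  rw [← exp_sum, exp_le_exp]
  have hsum : HasSum (fun j : ℕ ↦ ∑ i ∈ range k, (rexp (-s) ^ (i + 1)) ^ (j + 1) / ((j : ℝ) + 1))
      (∑ i ∈ range k, -log (1 - rexp (-s) ^ (i + 1))) :=
    hasSum_sum fun i _ ↦ hasSum_pow_div_log_of_abs_lt_one <| by
      rw [abs_of_nonneg (by positivity)]
      exact hlt i
  have hzeta : HasSum (fun j : ℕ ↦ 1 / ((j : ℝ) + 1) ^ 2 / s) (π ^ 2 / 6 / s) := by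
    simpa using ((hasSum_nat_add_iff' 1).2 hasSum_zeta_two).div_const s
  refine hasSum_le (fun j ↦ ?_) hsum hzeta
  rw [← sum_div]
  calc (∑ i ∈ range k, (rexp (-s) ^ (i + 1)) ^ (j + 1)) / ((j : ℝ) + 1)
      ≤ 1 / ((j + 1) * s) / (j + 1) := by gcongr; exact sum_pow_pow_le_one_div hs j k
    _ = 1 / ((j : ℝ) + 1) ^ 2 / s := by field_simp

theorem norm_exp_neg_lt_one {z : ℂ} (hz : 0 < z.re) : ‖Complex.exp (-z)‖ < 1 := by
  simpa [Complex.norm_exp] using hz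

theorem sum_p_mul_exp_le {s : ℝ} (hs : 0 < s) (N : ℕ) :
    ∑ n ∈ range N, p n * rexp (-s) ^ n ≤ rexp (π ^ 2 / 6 / s) := by
  have hx : ‖rexp (-s)‖ < 1 := by simpa using hs
  calc ∑ n ∈ range N, p n * rexp (-s) ^ n
      = ∑ n ∈ range N, (boundedCount N n : ℝ) * rexp (-s) ^ n :=
        sum_congr rfl fun n hn ↦ by rw [boundedCount_of_le (mem_range.1 hn).le]
    _ ≤ ∑' n, (boundedCount N n : ℝ) * rexp (-s) ^ n :=
        (summable_norm_boundedCount_mul_pow hx N).of_norm.sum_le_tsum _ fun _ _ ↦ by positivity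
    _ ≤ rexp (π ^ 2 / 6 / s) := by
        rw [tsum_boundedCount_mul_pow hx]
        exact prod_inv_one_sub_exp_le hs N

theorem summable_p_mul_exp {s : ℝ} (hs : 0 < s) : Summable fun n ↦ p n * rexp (-s) ^ n :=
  summable_of_sum_range_le (fun n ↦ mul_nonneg (p_nonneg n) (by positivity)) (sum_p_mul_exp_le hs)

theorem tsum_p_mul_exp_le {s : ℝ} (hs : 0 < s) :
    ∑' n, p n * rexp (-s) ^ n ≤ rexp (π ^ 2 / 6 / s) :=
  (summable_p_mul_exp hs).tsum_le_of_sum_range_le (sum_p_mul_exp_le hs)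

/-- The generating function of the partition numbers, in the coordinate `z` with `q = exp (-z)`
that puts the cusp `q = 1` at `z = 0`. -/
noncomputable def genFun (z : ℂ) : ℂ := ∑' n, (p n : ℂ) * Complex.exp (-z) ^ n

theorem norm_genFun_term (z : ℂ) (n : ℕ) :
    ‖(p n : ℂ) * Complex.exp (-z) ^ n‖ = p n * rexp (-z.re) ^ n := by
  simp [Complex.norm_exp, abs_of_nonneg (p_nonneg n)]

theorem tendsto_tsum_boundedCount_mul_pow {z : ℂ} (hz : 0 < z.re) :
    Filter.Tendsto (fun k ↦ ∑' n, (boundedCount k n : ℂ) * Complex.exp (-z) ^ n) Filter.atTop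
      (nhds (genFun z)) := by
  refine tendsto_tsum_of_dominated_convergence (summable_p_mul_exp hz) (fun n ↦ ?_)
    (.of_forall fun k n ↦ ?_)
  · refine tendsto_const_nhds.congr' ?_
    filter_upwards [Filter.eventually_ge_atTop n] with k hk
    rw [← boundedCount_of_le hk, Complex.ofReal_natCast]
  · rw [norm_mul, norm_pow, Complex.norm_exp, Complex.norm_natCast, Complex.neg_re]
    gcongr
    exact boundedCount_le_p k n

theorem genFun_eq_tprod {z : ℂ} (hz : 0 < z.re) :
    genFun z = (∏' n : ℕ, (1 - Complex.exp (-z) ^ (n + 1)))⁻¹ := by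
  have hq := norm_exp_neg_lt_one hz
  have hprod := (ModularForm.multipliable_one_sub_pow hq).hasProd.tendsto_prod_nat
  have h := (tendsto_tsum_boundedCount_mul_pow hz).mul hprod
  have hcancel (k : ℕ) : (∏ i ∈ range k, (1 - Complex.exp (-z) ^ (i + 1))⁻¹) *
      ∏ i ∈ range k, (1 - Complex.exp (-z) ^ (i + 1)) = 1 := by
    rw [← prod_mul_distrib]
    refine prod_eq_one fun i _ ↦ inv_mul_cancel₀ (sub_ne_zero.2 fun h1 ↦ ?_)
    exact (pow_lt_one₀ (norm_nonneg _) hq i.succ_ne_zero).ne (by rw [← norm_pow, ← h1, norm_one])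
  simp_rw [tsum_boundedCount_mul_pow hq, hcancel] at h
  exact eq_inv_of_mul_eq_one_left (tendsto_nhds_unique h tendsto_const_nhds)

end GeneratingFunction

section ModularTransformation

theorem sqrt_I_mul {w : ℂ} (hw : 0 < w.re) :
    Complex.sqrt (Complex.I * w) = Complex.sqrt Complex.I * w ^ (1 / 2 : ℂ) := by
  have hw0 : w ≠ 0 := Complex.ne_zero_of_re_pos hw
  have harg := abs_lt.1 (Complex.abs_arg_lt_pi_div_two_iff.2 (Or.inl hw))
  have hlog : Complex.log (Complex.I * w) = Complex.log Complex.I + Complex.log w := by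
    refine Complex.log_mul Complex.I_ne_zero hw0 ?_
    rw [Complex.arg_I]
    constructor <;> linarith [pi_pos]
  rw [sqrt_eq_exp (mul_ne_zero Complex.I_ne_zero hw0), sqrt_eq_exp Complex.I_ne_zero,
    Complex.cpow_def_of_ne_zero hw0, ← Complex.exp_add, hlog]
  ring_nf

theorem eta_mul_genFun {z τ : ℂ} (hz : 0 < z.re) (h : 2 * π * Complex.I * τ = -z) :
    ModularForm.eta τ * genFun z = Complex.exp (-z / 24) := by
  have hτ : 0 < τ.im := by
    have him : z.re = 2 * π * τ.im := by simpa using (congrArg Complex.re h).symm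
    exact pos_of_mul_pos_right (him ▸ hz) (by positivity)
  have h1 : Function.Periodic.qParam 1 τ = Complex.exp (-z) := by
    simp [Function.Periodic.qParam, ← h]
  have h24 : Function.Periodic.qParam 24 τ = Complex.exp (-z / 24) := by
    simp [Function.Periodic.qParam, ← h]
  have hne : ∏' n : ℕ, (1 - Complex.exp (-z) ^ (n + 1)) ≠ 0 := by
    simpa only [ModularForm.eta_q, h1] using ModularForm.eta_tprod_ne_zero hτ
  simp only [genFun_eq_tprod hz, ModularForm.eta, h24, ModularForm.eta_q, h1]
  rw [mul_assoc, mul_inv_cancel₀ hne, mul_one]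

theorem eta_neg_one_div_I_mul {w : ℂ} (hw : 0 < w.re) :
    ModularForm.eta (-1 / (Complex.I * w)) =
      w ^ (1 / 2 : ℂ) * ModularForm.eta (Complex.I * w) := by
  have hmem : Complex.I * w ∈ UpperHalfPlane.upperHalfPlaneSet := by
    simpa [UpperHalfPlane.upperHalfPlaneSet] using hw
  have h := ModularForm.eta_comp_eq_csqrt_I_inv hmem
  simp only [Function.comp, Pi.smul_apply, Pi.mul_apply, smul_eq_mul] at h
  have hI : Complex.sqrt Complex.I ≠ 0 := by
    rw [sqrt_eq_exp Complex.I_ne_zero]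
    exact Complex.exp_ne_zero _
  rw [h, sqrt_I_mul hw]
  field_simp

/-- The principal part of the generating function near the cusp `q = 1`, up to the factor
`exp (-z / 24)`, which is left out so that it can be absorbed in the shift `n - 1 / 24`. -/
noncomputable def cuspFactor (z : ℂ) : ℂ :=
  (z / (2 * π)) ^ (1 / 2 : ℂ) * Complex.exp (π ^ 2 / 6 / z)

theorem genFun_eq_cuspFactor_mul {z : ℂ} (hz : 0 < z.re) :
    genFun z = cuspFactor z * Complex.exp (-z / 24) * genFun (4 * π ^ 2 / z) := by
  have hz0 : z ≠ 0 := Complex.ne_zero_of_re_pos hz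
  have hpi : (π : ℂ) ≠ 0 := Complex.ofReal_ne_zero.2 pi_ne_zero
  set w : ℂ := z / (2 * π) with hw
  have hwre : 0 < w.re := by
    rw [hw, ← Complex.ofReal_ofNat, ← Complex.ofReal_mul, Complex.div_ofReal_re]
    positivity
  have hinv : 0 < (4 * π ^ 2 / z).re := by
    rw [div_eq_mul_inv, show (4 * π ^ 2 : ℂ) = ((4 * π ^ 2 : ℝ) : ℂ) by push_cast; rfl,
      Complex.re_ofReal_mul, Complex.inv_re]
    have := Complex.normSq_pos.2 hz0
    positivity
  have heta : ModularForm.eta (Complex.I * w) ≠ 0 :=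
    ModularForm.eta_ne_zero (by simpa [UpperHalfPlane.upperHalfPlaneSet] using hwre)
  have hgen := eta_mul_genFun (τ := Complex.I * w) hz (by
    rw [hw]; field_simp; rw [Complex.I_sq])
  have hgen_inv := eta_mul_genFun (τ := -1 / (Complex.I * w)) hinv (by
    rw [hw]; field_simp; norm_num)
  have hexp : Complex.exp (-(4 * π ^ 2 / z) / 24) * Complex.exp (π ^ 2 / 6 / z) = 1 := by
    rw [← Complex.exp_add, Complex.exp_eq_one_iff]
    exact ⟨0, by field_simp; ring⟩
  rw [eta_neg_one_div_I_mul hwre] at hgen_inv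
  apply mul_left_cancel₀ heta
  rw [hgen, cuspFactor]
  linear_combination (-Complex.exp (-z / 24)) * hexp -
    Complex.exp (π ^ 2 / 6 / z) * Complex.exp (-z / 24) * hgen_inv

end ModularTransformation

section LaplaceTransform

open MeasureTheory Set

theorem integrable_pow_mul_cexp_neg_mul_sq {z : ℂ} (hz : 0 < z.re) (m : ℕ) :
    Integrable fun v : ℝ ↦ (v : ℂ) ^ m * Complex.exp (-z * v ^ 2) := by
  have hm : (-1 : ℝ) < m := neg_one_lt_zero.trans_le m.cast_nonneg
  refine (integrable_rpow_mul_exp_neg_mul_sq hz hm).norm.mono' (by fun_prop)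
    (.of_forall fun v ↦ ?_)
  rw [norm_mul, norm_pow, Complex.norm_real, norm_cexp_neg_mul_sq, norm_mul, rpow_natCast, norm_pow,
    norm_of_nonneg (exp_pos _).le]

theorem integral_pow_add_two_mul_cexp_neg_mul_sq {z : ℂ} (hz : 0 < z.re) (m : ℕ) :
    ∫ v : ℝ, (v : ℂ) ^ (m + 2) * Complex.exp (-z * v ^ 2) =
      (m + 1) / (2 * z) * ∫ v : ℝ, (v : ℂ) ^ m * Complex.exp (-z * v ^ 2) := by
  have hz0 : z ≠ 0 := Complex.ne_zero_of_re_pos hz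
  have hderiv (v : ℝ) : HasDerivAt (fun v : ℝ ↦ (v : ℂ) ^ (m + 1) * Complex.exp (-z * v ^ 2))
      ((m + 1) * ((v : ℂ) ^ m * Complex.exp (-z * v ^ 2)) -
        2 * z * ((v : ℂ) ^ (m + 2) * Complex.exp (-z * v ^ 2))) v := by
    have h : HasDerivAt (fun v : ℂ ↦ v ^ (m + 1) * Complex.exp (-z * v ^ 2)) _ (v : ℂ) :=
      (hasDerivAt_pow (m + 1) (v : ℂ)).mul (((hasDerivAt_pow 2 (v : ℂ)).const_mul (-z)).cexp)
    convert! h.comp_ofReal using 1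
    push_cast
    ring
  have hi := (integrable_pow_mul_cexp_neg_mul_sq hz m).const_mul (m + 1 : ℂ)
  have hi2 := (integrable_pow_mul_cexp_neg_mul_sq hz (m + 2)).const_mul (2 * z)
  have h := integral_eq_zero_of_hasDerivAt_of_integrable hderiv (hi.sub hi2)
    (integrable_pow_mul_cexp_neg_mul_sq hz (m + 1))
  rw [integral_sub hi hi2, integral_const_mul, integral_const_mul] at h
  rw [div_mul_eq_mul_div, eq_div_iff (by simpa using hz0)]
  linear_combination -h

theorem integral_pow_two_mul_mul_cexp_neg_mul_sq {z : ℂ} (hz : 0 < z.re) (m : ℕ) :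
    ∫ v : ℝ, (v : ℂ) ^ (2 * m) * Complex.exp (-z * v ^ 2) =
      (π / z) ^ (1 / 2 : ℂ) * ((2 * m).factorial / (m.factorial * (4 * z) ^ m)) := by
  have hz0 : z ≠ 0 := Complex.ne_zero_of_re_pos hz
  induction m with
  | zero => simpa using integral_gaussian_complex hz
  | succ m ih =>
    have hm : (m : ℂ) + 1 ≠ 0 := m.cast_add_one_ne_zero
    rw [mul_add_one, integral_pow_add_two_mul_cexp_neg_mul_sq hz, ih]
    simp only [Nat.factorial_succ]
    push_cast
    field_simp
    ring

/-- The numerator of the inverse Laplace transform of `z ^ (1/2) * (exp (A / z) - 1 - A / z)`. -/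
noncomputable def kernelNum (x : ℝ) : ℝ := x * sinh x - cosh x + 1 - x ^ 2 / 2

@[fun_prop]
theorem continuous_kernelNum : Continuous kernelNum := by
  unfold kernelNum
  fun_prop

/-- The coefficient of `x ^ (2 * j + 4)` in the power series of `kernelNum`. -/
noncomputable def kernelCoeff (j : ℕ) : ℝ := (2 * j + 3) / (2 * j + 4).factorial

theorem kernelCoeff_nonneg (j : ℕ) : 0 ≤ kernelCoeff j := by
  unfold kernelCoeff
  positivity

theorem hasSum_kernelNum (x : ℝ) :
    HasSum (fun j ↦ kernelCoeff j * x ^ (2 * j + 4)) (kernelNum x) := by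
  have hcosh := (hasSum_nat_add_iff' 2).2 (hasSum_cosh x)
  have hsinh := ((hasSum_nat_add_iff' 1).2 (hasSum_sinh x)).mul_left x
  convert! hsinh.sub hcosh using 1
  · funext j
    simp only [kernelCoeff, show 2 * (j + 2) = 2 * j + 3 + 1 by ring,
      show 2 * (j + 1) + 1 = 2 * j + 3 by ring,
      show 2 * j + 4 = 2 * j + 3 + 1 by ring, Nat.factorial_succ (2 * j + 3)]
    have := Nat.factorial_ne_zero (2 * j + 3)
    push_cast
    field_simp
    ring
  · simp [kernelNum, Finset.sum_range_succ]
    ring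

theorem kernelNum_neg (x : ℝ) : kernelNum (-x) = kernelNum x := by
  simp [kernelNum]

theorem hasSum_kernelNum_div_sq_mul_cexp (c : ℝ) (z : ℂ) (v : ℝ) :
    HasSum (fun j : ℕ ↦ (kernelCoeff j * c ^ (2 * j + 4) : ℂ) *
      ((v : ℂ) ^ (2 * (j + 1)) * Complex.exp (-z * v ^ 2)))
      ((kernelNum (c * v) / v ^ 2 : ℝ) * Complex.exp (-z * v ^ 2)) := by
  have h := (Complex.hasSum_ofReal.2 ((hasSum_kernelNum (c * v)).div_const (v ^ 2))).mul_right
    (Complex.exp (-z * v ^ 2))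
  refine h.congr_fun fun j ↦ ?_
  rcases eq_or_ne v 0 with rfl | hv
  · simp
  · have : (v : ℂ) ≠ 0 := Complex.ofReal_ne_zero.2 hv
    push_cast
    field_simp
    ring

theorem integral_kernelNum_term (c : ℝ) {z : ℂ} (hz : 0 < z.re) (j : ℕ) :
    ∫ v : ℝ, (kernelCoeff j * c ^ (2 * j + 4) : ℂ) *
      ((v : ℂ) ^ (2 * (j + 1)) * Complex.exp (-z * v ^ 2)) =
    2 * z * (π / z) ^ (1 / 2 : ℂ) * ((c ^ 2 / 4 / z) ^ (j + 2) / (j + 2).factorial) := by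
  have hz0 : z ≠ 0 := Complex.ne_zero_of_re_pos hz
  have hfact : (kernelCoeff j : ℂ) * ((2 * j + 2).factorial / (j + 1).factorial) =
      1 / (2 * (j + 2).factorial) := by
    rw [kernelCoeff,
      show (2 * j + 4).factorial = (2 * j + 4) * ((2 * j + 3) * (2 * j + 2).factorial) from rfl,
      show (j + 2).factorial = (j + 2) * (j + 1).factorial from rfl]
    have h2 : (j + 2 : ℂ) ≠ 0 := by exact_mod_cast (j + 1).succ_ne_zero
    have h3 : (2 * j + 3 : ℂ) ≠ 0 := by exact_mod_cast (2 * j + 2).succ_ne_zero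
    have h4 : (2 * j + 4 : ℂ) ≠ 0 := by exact_mod_cast (2 * j + 3).succ_ne_zero
    have := Nat.factorial_ne_zero (2 * j + 2)
    have := Nat.factorial_ne_zero (j + 1)
    push_cast
    field_simp
    ring
  rw [integral_const_mul, integral_pow_two_mul_mul_cexp_neg_mul_sq hz, mul_add_one]
  generalize (π / z : ℂ) ^ (1 / 2 : ℂ) = g
  calc _ = (kernelCoeff j * ((2 * j + 2).factorial / (j + 1).factorial)) *
      (g * c ^ (2 * j + 4) / (4 * z) ^ (j + 1)) := by ring
    _ = _ := by
      rw [hfact, div_pow, div_pow, mul_pow]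
      field_simp
      ring

theorem hasSum_pow_add_two_div_factorial (w : ℂ) :
    HasSum (fun j : ℕ ↦ w ^ (j + 2) / (j + 2).factorial) (Complex.exp w - 1 - w) := by
  have h := (hasSum_nat_add_iff' 2).2 (NormedSpace.expSeries_div_hasSum_exp w)
  rw [← Complex.exp_eq_exp_ℂ] at h
  simpa [Finset.sum_range_succ, sub_sub] using h

theorem summable_integral_norm_kernelNum_term (c : ℝ) {z : ℂ} (hz : 0 < z.re) :
    Summable fun j : ℕ ↦ ∫ v : ℝ, ‖(kernelCoeff j * c ^ (2 * j + 4) : ℂ) *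
      ((v : ℂ) ^ (2 * (j + 1)) * Complex.exp (-z * v ^ 2))‖ := by
  have hre : 0 < (z.re : ℂ).re := hz
  have h := ((hasSum_pow_add_two_div_factorial (c ^ 2 / 4 / z.re)).mul_left
    (2 * z.re * (π / z.re : ℂ) ^ (1 / 2 : ℂ))).summable
  rw [← Complex.summable_ofReal]
  refine h.congr fun j ↦ ?_
  rw [← integral_kernelNum_term c hre j, ← integral_complex_ofReal]
  refine integral_congr_ae (.of_forall fun v ↦ ?_)
  have hc : ‖(c : ℂ) ^ (2 * j + 4)‖ = c ^ (2 * j + 4) := by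
    rw [norm_pow, Complex.norm_real, norm_eq_abs, Even.pow_abs (by grind)]
  have hv : ‖(v : ℂ) ^ (2 * (j + 1))‖ = v ^ (2 * (j + 1)) := by
    rw [norm_pow, Complex.norm_real, norm_eq_abs, Even.pow_abs (by grind)]
  simp only [norm_mul, hc, hv, Complex.norm_real, norm_of_nonneg (kernelCoeff_nonneg j),
    norm_cexp_neg_mul_sq]
  push_cast
  rfl

theorem integral_kernelNum_div_sq (c : ℝ) {z : ℂ} (hz : 0 < z.re) :
    ∫ v : ℝ, ((kernelNum (c * v) / v ^ 2 : ℝ) : ℂ) * Complex.exp (-z * v ^ 2) =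
      2 * z * (π / z) ^ (1 / 2 : ℂ) *
        (Complex.exp (c ^ 2 / 4 / z) - 1 - c ^ 2 / 4 / z) := by
  have h := hasSum_integral_of_summable_integral_norm
    (fun j ↦ (integrable_pow_mul_cexp_neg_mul_sq hz _).const_mul _)
    (summable_integral_norm_kernelNum_term c hz)
  simp_rw [(hasSum_kernelNum_div_sq_mul_cexp c z _).tsum_eq, integral_kernelNum_term c hz] at h
  exact h.unique ((hasSum_pow_add_two_div_factorial _).mul_left _)

theorem integrable_kernelNum_div_sq {c : ℝ} (hc : c ≠ 0) {z : ℂ} (hz : 0 < z.re) :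
    Integrable fun v : ℝ ↦ ((kernelNum (c * v) / v ^ 2 : ℝ) : ℂ) * Complex.exp (-z * v ^ 2) := by
  have hre : 0 < (z.re : ℂ).re := hz
  have hreal : Integrable fun v : ℝ ↦
      ((kernelNum (c * v) / v ^ 2 : ℝ) : ℂ) * Complex.exp (-(z.re : ℂ) * v ^ 2) := by
    refine .of_integral_ne_zero ?_
    have hpi : (π : ℂ) / z.re ≠ 0 := by
      exact_mod_cast div_ne_zero pi_ne_zero hz.ne'
    have hexp : Complex.exp (c ^ 2 / 4 / z.re) - 1 - c ^ 2 / 4 / z.re ≠ 0 := by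
      have := add_one_lt_exp (x := c ^ 2 / 4 / z.re) (by positivity)
      have hne : rexp (c ^ 2 / 4 / z.re) - 1 - c ^ 2 / 4 / z.re ≠ 0 := by linarith
      exact_mod_cast hne
    rw [integral_kernelNum_div_sq c hre]
    refine mul_ne_zero (mul_ne_zero (by simpa using hz.ne') ?_) hexp
    exact fun h ↦ hpi ((Complex.cpow_eq_zero_iff _ _).1 h).1
  refine hreal.norm.mono' (Measurable.aestronglyMeasurable (by fun_prop))
    (.of_forall fun v ↦ le_of_eq ?_)
  rw [norm_mul, norm_mul, norm_cexp_neg_mul_sq, norm_cexp_neg_mul_sq, Complex.ofReal_re]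

/-- The inverse Laplace transform of `√π * z ^ (1/2) * (exp (A / z) - 1 - A / z)`, where
`A = c ^ 2 / 4`. -/
noncomputable def laplaceKernel (c t : ℝ) : ℝ := kernelNum (c * √t) / (2 * t * √t)

theorem smul_laplaceKernel_sq (c : ℝ) (z : ℂ) {v : ℝ} (hv : 0 < v) :
    (2 * v ^ ((2 : ℝ) - 1)) •
      ((laplaceKernel c (v ^ (2 : ℝ)) : ℂ) * Complex.exp (-z * (v ^ (2 : ℝ) : ℝ))) =
    ((kernelNum (c * v) / v ^ 2 : ℝ) : ℂ) * Complex.exp (-z * v ^ 2) := by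
  have hv0 : (v : ℂ) ≠ 0 := by exact_mod_cast hv.ne'
  rw [show (2 : ℝ) - 1 = 1 by norm_num, rpow_one, rpow_two, laplaceKernel, sqrt_sq hv.le,
    Complex.real_smul]
  push_cast
  field_simp

theorem integrableOn_laplaceKernel {c : ℝ} (hc : c ≠ 0) {z : ℂ} (hz : 0 < z.re) :
    IntegrableOn (fun t : ℝ ↦ (laplaceKernel c t : ℂ) * Complex.exp (-z * t)) (Ioi 0) := by
  rw [← integrableOn_Ioi_comp_rpow_iff _ (two_ne_zero (α := ℝ)), abs_of_pos two_pos]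
  exact (integrable_kernelNum_div_sq hc hz).integrableOn.congr_fun
    (fun v hv ↦ (smul_laplaceKernel_sq c z hv).symm) measurableSet_Ioi

theorem mul_pi_div_cpow_half {z : ℂ} (hz : 0 < z.re) :
    z * (π / z) ^ (1 / 2 : ℂ) = √π * z ^ (1 / 2 : ℂ) := by
  have hz0 : z ≠ 0 := Complex.ne_zero_of_re_pos hz
  have harg : z.arg ≠ π := by
    have := (abs_lt.1 (Complex.abs_arg_lt_pi_div_two_iff.2 (Or.inl hz))).2
    linarith [pi_pos]
  have hinv : (π / z : ℂ) ^ (1 / 2 : ℂ) = √π * (z ^ (1 / 2 : ℂ))⁻¹ := by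
    rw [← Complex.inv_cpow _ _ harg, div_eq_mul_inv,
      Complex.cpow_def_of_ne_zero (mul_ne_zero (by exact_mod_cast pi_ne_zero) (inv_ne_zero hz0)),
      Complex.cpow_def_of_ne_zero (inv_ne_zero hz0),
      Complex.log_ofReal_mul pi_pos (inv_ne_zero hz0), add_mul, Complex.exp_add,
      sqrt_eq_rpow, rpow_def_of_pos pi_pos]
    push_cast
    rfl
  have hsq : z ^ (1 / 2 : ℂ) * z ^ (1 / 2 : ℂ) = z := by
    rw [← Complex.cpow_add _ _ hz0]
    norm_num
  have hne : z ^ (1 / 2 : ℂ) ≠ 0 := fun h ↦ hz0 ((Complex.cpow_eq_zero_iff _ _).1 h).1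
  rw [hinv]
  nth_rewrite 1 [← hsq]
  field_simp

/-- The function `z ^ (1/2) * (exp (A / z) - 1 - A / z)`: subtracting the first two terms of the
exponential makes it integrable on vertical lines. -/
noncomputable def laplaceImage (A : ℝ) (z : ℂ) : ℂ :=
  z ^ (1 / 2 : ℂ) * (Complex.exp (A / z) - 1 - A / z)

theorem integral_Ioi_eq_half_of_even {f : ℝ → ℂ} (hf : Integrable f) (heven : ∀ v, f (-v) = f v) :
    ∫ v in Ioi 0, f v = (∫ v, f v) / 2 := by
  have h := integral_comp_neg_Ioi 0 f
  simp only [heven, neg_zero] at h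
  rw [← integral_add_compl (measurableSet_Ioi (a := (0 : ℝ))) hf, compl_Ioi, ← h]
  ring

theorem integral_laplaceKernel {c : ℝ} (hc : c ≠ 0) {z : ℂ} (hz : 0 < z.re) :
    ∫ t in Ioi (0 : ℝ), (laplaceKernel c t : ℂ) * Complex.exp (-z * t) =
      √π * laplaceImage (c ^ 2 / 4) z := by
  rw [← integral_comp_rpow_Ioi_of_pos two_pos, setIntegral_congr_fun measurableSet_Ioi
    (fun v hv ↦ smul_laplaceKernel_sq c z hv),
    integral_Ioi_eq_half_of_even (integrable_kernelNum_div_sq hc hz)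
      fun v ↦ by simp [kernelNum_neg], integral_kernelNum_div_sq c hz, laplaceImage]
  push_cast
  linear_combination
    (Complex.exp (c ^ 2 / 4 / z) - 1 - c ^ 2 / 4 / z) * mul_pi_div_cpow_half hz

end LaplaceTransform

section LaplaceInversion

open MeasureTheory Set FourierTransform

/-- The vertical line `Re z = y`, parametrized so that `ξ ∈ [-1/2, 1/2]` is one period of
`Complex.exp` and integrals over the line are Fourier integrals in Mathlib's normalization. -/
noncomputable def linePt (y ξ : ℝ) : ℂ := y + 2 * π * ξ * Complex.I

@[simp] theorem linePt_re (y ξ : ℝ) : (linePt y ξ).re = y := by simp [linePt]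

@[simp] theorem linePt_im (y ξ : ℝ) : (linePt y ξ).im = 2 * π * ξ := by simp [linePt]

@[fun_prop]
theorem continuous_linePt (y : ℝ) : Continuous (linePt y) := by
  unfold linePt
  fun_prop

theorem linePt_ne_zero {y : ℝ} (hy : 0 < y) (ξ : ℝ) : linePt y ξ ≠ 0 :=
  Complex.ne_zero_of_re_pos (by simpa)

theorem sq_norm_linePt (y ξ : ℝ) : ‖linePt y ξ‖ ^ 2 = y ^ 2 + 4 * π ^ 2 * ξ ^ 2 := by
  rw [Complex.sq_norm, Complex.normSq_apply, linePt_re, linePt_im]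
  ring

theorem le_norm_linePt (y ξ : ℝ) : y ≤ ‖linePt y ξ‖ := by
  simpa using Complex.re_le_norm (linePt y ξ)

theorem norm_linePt_pos {y : ℝ} (hy : 0 < y) (ξ : ℝ) : 0 < ‖linePt y ξ‖ :=
  norm_pos_iff.2 (linePt_ne_zero hy ξ)

theorem norm_exp_linePt_mul (y ξ t : ℝ) : ‖Complex.exp (linePt y ξ * t)‖ = rexp (t * y) := by
  rw [Complex.norm_exp]
  simp [mul_comm]

theorem norm_cpow_half (z : ℂ) : ‖z ^ (1 / 2 : ℂ)‖ = √‖z‖ := by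
  rw [sqrt_eq_rpow, ← Complex.norm_cpow_real]
  norm_num

theorem norm_laplaceImage_le {A : ℝ} (hA : 0 ≤ A) {z : ℂ} (hz : z ≠ 0) :
    ‖laplaceImage A z‖ ≤ A ^ 2 * rexp (A / ‖z‖) * ‖z‖ ^ (-(3 / 2) : ℝ) := by
  have hpos : 0 < ‖z‖ := norm_pos_iff.2 hz
  have htaylor := Complex.norm_exp_sub_sum_le_norm_mul_exp (A / z) 2
  simp only [Finset.sum_range_succ, Finset.sum_range_zero, pow_zero, pow_one, Nat.factorial,
    norm_div, Complex.norm_real, norm_of_nonneg hA] at htaylor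
  have hpow : ‖z‖ ^ (-(3 / 2) : ℝ) = √‖z‖ / ‖z‖ ^ 2 := by
    rw [sqrt_eq_rpow, ← rpow_natCast, ← rpow_sub hpos]
    norm_num
  calc ‖laplaceImage A z‖
      ≤ √‖z‖ * ((A / ‖z‖) ^ 2 * rexp (A / ‖z‖)) := by
        rw [laplaceImage, norm_mul, norm_cpow_half]
        gcongr
        convert! htaylor using 2
        norm_num [sub_sub]
    _ = A ^ 2 * rexp (A / ‖z‖) * ‖z‖ ^ (-(3 / 2) : ℝ) := by rw [hpow]; ring

theorem continuous_laplaceImage_linePt (A : ℝ) {y : ℝ} (hy : 0 < y) :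
    Continuous fun ξ ↦ laplaceImage A (linePt y ξ) := by
  have hne := linePt_ne_zero hy
  have hslit (ξ : ℝ) : linePt y ξ ∈ Complex.slitPlane := Or.inl (by simpa)
  unfold laplaceImage
  exact (Continuous.cpow (by fun_prop) continuous_const hslit).mul
    (by fun_prop (disch := assumption))

theorem integrable_norm_linePt_rpow {y : ℝ} (hy : 0 < y) {s : ℝ} (hs : 1 < s) :
    Integrable fun ξ ↦ ‖linePt y ξ‖ ^ (-s) := by
  set κ := min (y ^ 2) (4 * π ^ 2)
  have hκ : 0 < κ := lt_min (by positivity) (by positivity)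
  have hmeas : Continuous fun ξ ↦ ‖linePt y ξ‖ ^ (-s) :=
    (continuous_linePt y).norm.rpow_const fun ξ ↦ .inl (norm_linePt_pos hy ξ).ne'
  refine ((integrable_rpow_neg_one_add_norm_sq (by simpa using hs)).const_mul
    (κ ^ (-s / 2))).mono' hmeas.aestronglyMeasurable (.of_forall fun ξ ↦ ?_)
  have hlower : κ * (1 + ‖ξ‖ ^ 2) ≤ ‖linePt y ξ‖ ^ 2 := by
    rw [sq_norm_linePt, norm_eq_abs, sq_abs]
    nlinarith [min_le_left (y ^ 2) (4 * π ^ 2), min_le_right (y ^ 2) (4 * π ^ 2), sq_nonneg ξ]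
  calc ‖‖linePt y ξ‖ ^ (-s)‖ = (‖linePt y ξ‖ ^ 2) ^ (-s / 2) := by
        rw [norm_of_nonneg (by positivity), ← rpow_natCast, ← rpow_mul (norm_nonneg _)]
        congr 1
        push_cast
        ring
    _ ≤ (κ * (1 + ‖ξ‖ ^ 2)) ^ (-s / 2) :=
        rpow_le_rpow_of_nonpos (by positivity) hlower (by linarith)
    _ = κ ^ (-s / 2) * (1 + ‖ξ‖ ^ 2) ^ (-s / 2) := mul_rpow hκ.le (by positivity)

theorem integrable_laplaceImage_linePt {A : ℝ} (hA : 0 ≤ A) {y : ℝ} (hy : 0 < y) :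
    Integrable fun ξ ↦ laplaceImage A (linePt y ξ) := by
  refine ((integrable_norm_linePt_rpow hy (s := 3 / 2) (by norm_num)).const_mul
    (A ^ 2 * rexp (A / y))).mono'
    (continuous_laplaceImage_linePt A hy).aestronglyMeasurable (.of_forall fun ξ ↦ ?_)
  refine (norm_laplaceImage_le hA (linePt_ne_zero hy ξ)).trans ?_
  gcongr
  exact le_norm_linePt y ξ

theorem integrable_exp_mul_laplaceImage {A : ℝ} (hA : 0 ≤ A) {y : ℝ} (hy : 0 < y) (t : ℝ) :
    Integrable fun ξ ↦ Complex.exp (linePt y ξ * t) * laplaceImage A (linePt y ξ) :=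
  (integrable_laplaceImage_linePt hA hy).bdd_mul (c := rexp (t * y))
    (by fun_prop : Continuous _).aestronglyMeasurable
    (.of_forall fun ξ ↦ (norm_exp_linePt_mul y ξ t).le)

/-- The function `s ↦ laplaceKernel c s * exp (-y s)` on `(0, ∞)`, extended by zero: its Fourier
transform is the Laplace transform of `laplaceKernel c` along the line `Re z = y`. -/
noncomputable def dampedKernel (c y : ℝ) : ℝ → ℂ :=
  (Ioi 0).indicator fun s ↦ (laplaceKernel c s : ℂ) * Complex.exp (-(y : ℂ) * s)

theorem dampedKernel_of_pos (c y : ℝ) {s : ℝ} (hs : 0 < s) :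
    dampedKernel c y s = laplaceKernel c s * Complex.exp (-(y : ℂ) * s) :=
  indicator_of_mem (mem_Ioi.2 hs) _

theorem integrable_dampedKernel {c y : ℝ} (hc : c ≠ 0) (hy : 0 < y) :
    Integrable (dampedKernel c y) :=
  (integrable_indicator_iff measurableSet_Ioi).2 (integrableOn_laplaceKernel hc (by simpa))

theorem fourier_dampedKernel {c y : ℝ} (hc : c ≠ 0) (hy : 0 < y) :
    𝓕 (dampedKernel c y) = fun ξ ↦ √π * laplaceImage (c ^ 2 / 4) (linePt y ξ) := by
  funext ξ
  rw [Real.fourier_real_eq_integral_exp_smul,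
    ← integral_laplaceKernel hc (z := linePt y ξ) (by simpa),
    ← integral_indicator measurableSet_Ioi]
  refine integral_congr_ae (.of_forall fun s ↦ ?_)
  by_cases hs : s ∈ Ioi (0 : ℝ)
  · simp only [dampedKernel, indicator_of_mem hs, smul_eq_mul]
    rw [mul_left_comm, ← Complex.exp_add]
    congr 2
    rw [linePt]
    push_cast
    ring
  · simp [dampedKernel, indicator_of_notMem hs]

theorem continuousAt_dampedKernel (c y : ℝ) {t : ℝ} (ht : 0 < t) :
    ContinuousAt (dampedKernel c y) t := by
  have hkernel : ContinuousAt (laplaceKernel c) t := by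
    have := continuous_kernelNum
    unfold laplaceKernel
    exact ContinuousAt.div (by fun_prop) (by fun_prop) (by positivity)
  have hdamped : ContinuousAt
      (fun s : ℝ ↦ (laplaceKernel c s : ℂ) * Complex.exp (-(y : ℂ) * s)) t := by fun_prop
  refine hdamped.congr ?_
  filter_upwards [Ioi_mem_nhds ht] with s hs
  rw [dampedKernel_of_pos c y hs]

theorem integral_exp_mul_laplaceImage {c y t : ℝ} (hc : c ≠ 0) (hy : 0 < y) (ht : 0 < t) :
    ∫ ξ, Complex.exp (linePt y ξ * t) * laplaceImage (c ^ 2 / 4) (linePt y ξ) =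
      (laplaceKernel c t / √π : ℝ) := by
  have hfourier_int : Integrable (𝓕 (dampedKernel c y)) := by
    rw [fourier_dampedKernel hc hy]
    exact (integrable_laplaceImage_linePt (by positivity) hy).const_mul _
  have hinv := (integrable_dampedKernel hc hy).fourierInv_fourier_eq hfourier_int
    (continuousAt_dampedKernel c y ht)
  rw [Real.fourierInv_eq', fourier_dampedKernel hc hy, dampedKernel_of_pos c y ht] at hinv
  have hpi : (√π : ℂ) ≠ 0 := by exact_mod_cast (sqrt_pos.2 pi_pos).ne'
  have hintegrand (ξ : ℝ) :
      Complex.exp (linePt y ξ * t) * laplaceImage (c ^ 2 / 4) (linePt y ξ) =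
      Complex.exp (y * t) / √π * (Complex.exp ((2 * π * inner ℝ ξ t : ℝ) * Complex.I) •
        (√π * laplaceImage (c ^ 2 / 4) (linePt y ξ))) := by
    rw [smul_eq_mul, show linePt y ξ * t = y * t + (2 * π * inner ℝ ξ t : ℝ) * Complex.I by
      simp [linePt]; ring, Complex.exp_add]
    field_simp
  simp_rw [hintegrand]
  rw [integral_const_mul, hinv, neg_mul, Complex.exp_neg]
  have := Complex.exp_ne_zero (y * t)
  push_cast
  field_simp

theorem integral_exp_int_mul_linePt (y : ℝ) (k : ℤ) :
    ∫ ξ in (-1 / 2 : ℝ)..(1 / 2), Complex.exp (k * linePt y ξ) = if k = 0 then 1 else 0 := by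
  split_ifs with hk
  · simp only [hk, Int.cast_zero, zero_mul, Complex.exp_zero, intervalIntegral.integral_const]
    norm_num
  have hne : (2 * π * k * Complex.I : ℂ) ≠ 0 := by
    simp [hk, pi_ne_zero]
  have hsplit (ξ : ℝ) : Complex.exp (k * linePt y ξ) =
      Complex.exp (k * y) * Complex.exp (2 * π * k * Complex.I * ξ) := by
    rw [← Complex.exp_add, linePt]
    congr 1
    ring
  have hperiodic : Complex.exp (2 * π * k * Complex.I * (1 / 2 : ℝ)) =
      Complex.exp (2 * π * k * Complex.I * (-1 / 2 : ℝ)) :=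
    Complex.exp_eq_exp_iff_exists_int.2 ⟨k, by push_cast; ring⟩
  simp_rw [hsplit]
  rw [intervalIntegral.integral_const_mul, integral_exp_mul_complex hne, hperiodic]
  simp

theorem hasSum_genFun {z : ℂ} (hz : 0 < z.re) :
    HasSum (fun n ↦ (p n : ℂ) * Complex.exp (-z) ^ n) (genFun z) := by
  refine (Summable.of_norm ?_).hasSum
  simpa only [norm_genFun_term] using summable_p_mul_exp hz

theorem p_eq_integral {y : ℝ} (hy : 0 < y) (n : ℕ) :
    (p n : ℂ) =
      ∫ ξ in (-1 / 2 : ℝ)..(1 / 2), genFun (linePt y ξ) * Complex.exp (n * linePt y ξ) := by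
  have hterm (m : ℕ) (ξ : ℝ) : (p m : ℂ) * Complex.exp (-linePt y ξ) ^ m *
      Complex.exp (n * linePt y ξ) = p m * Complex.exp (((n - m : ℤ) : ℂ) * linePt y ξ) := by
    rw [mul_assoc, ← Complex.exp_nat_mul, ← Complex.exp_add]
    congr 2
    push_cast
    ring
  have hsum := intervalIntegral.hasSum_integral_of_dominated_convergence (μ := volume)
    (a := (-1 / 2 : ℝ)) (b := 1 / 2)
    (F := fun m ξ ↦ (p m : ℂ) * Complex.exp (-linePt y ξ) ^ m * Complex.exp (n * linePt y ξ))
    (f := fun ξ ↦ genFun (linePt y ξ) * Complex.exp (n * linePt y ξ))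
    (fun m _ ↦ p m * rexp (-y) ^ m * rexp (n * y))
    (fun m ↦ (by fun_prop : Continuous _).aestronglyMeasurable)
    (fun m ↦ .of_forall fun ξ _ ↦ by
      rw [norm_mul, norm_genFun_term, Complex.norm_exp]
      simp)
    (.of_forall fun ξ _ ↦ (summable_p_mul_exp hy).mul_right _)
    intervalIntegrable_const
    (.of_forall fun ξ _ ↦ (hasSum_genFun (by simpa)).mul_right _)
  simp_rw [hterm, intervalIntegral.integral_const_mul, integral_exp_int_mul_linePt] at hsum
  rw [← hsum.tsum_eq, tsum_eq_single n fun m hm ↦ by rw [if_neg (by omega), mul_zero]]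
  simp

end LaplaceInversion

section CircleMethod

open MeasureTheory Set

/-- The constant `c = π √(2/3)` of the Hardy–Ramanujan growth rate `exp (c √n)`. -/
noncomputable def growthConst : ℝ := π * √(2 / 3)

theorem growthConst_pos : 0 < growthConst := by
  unfold growthConst
  positivity

theorem growthConst_sq : growthConst ^ 2 = 2 / 3 * π ^ 2 := by
  rw [growthConst, mul_pow, sq_sqrt (by norm_num)]
  ring

theorem cuspFactor_eq (z : ℂ) : cuspFactor z =
    (√(2 * π) : ℂ)⁻¹ * (laplaceImage (π ^ 2 / 6) z + z ^ (1 / 2 : ℂ) * (1 + π ^ 2 / 6 / z)) := by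
  have hsqrt : (z / (2 * π)) ^ (1 / 2 : ℂ) = (√(2 * π) : ℂ)⁻¹ * z ^ (1 / 2 : ℂ) := by
    rcases eq_or_ne z 0 with rfl | hz
    · simp
    have hpos : (0 : ℝ) < (2 * π)⁻¹ := by positivity
    rw [show z / (2 * π) = ((2 * π)⁻¹ : ℝ) * z by push_cast; field_simp,
      Complex.cpow_def_of_ne_zero (mul_ne_zero (by exact_mod_cast hpos.ne') hz),
      Complex.cpow_def_of_ne_zero hz, Complex.log_ofReal_mul hpos hz, add_mul, Complex.exp_add]
    congr 1
    rw [← Complex.ofReal_inv, ← sqrt_inv, sqrt_eq_rpow, rpow_def_of_pos hpos]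
    push_cast
    rfl
  rw [cuspFactor, hsqrt, laplaceImage]
  push_cast
  ring

theorem norm_genFun_sub_one_le {z : ℂ} {s : ℝ} (hs : 0 < s) (hsz : s ≤ z.re) :
    ‖genFun z - 1‖ ≤ rexp (-(z.re - s)) * rexp (π ^ 2 / 6 / s) := by
  have htail : genFun z - 1 = ∑' n, (p (n + 1) : ℂ) * Complex.exp (-z) ^ (n + 1) := by
    rw [genFun, (hasSum_genFun (hs.trans_le hsz)).summable.tsum_eq_zero_add]
    simp [p]
  have hsum := summable_p_mul_exp hs
  rw [htail]
  refine (tsum_of_norm_bounded (((summable_nat_add_iff 1).2 hsum).mul_left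
    (rexp (-(z.re - s)))).hasSum fun n ↦ ?_).trans ?_
  · rw [norm_genFun_term, mul_left_comm]
    gcongr
    · exact p_nonneg _
    rw [← exp_nat_mul, ← exp_nat_mul, ← exp_add, exp_le_exp]
    push_cast
    nlinarith [mul_nonneg (Nat.cast_nonneg (α := ℝ) n) (sub_nonneg.2 hsz)]
  · rw [tsum_mul_left]
    gcongr
    refine le_trans ?_ (tsum_p_mul_exp_le hs)
    rw [hsum.tsum_eq_zero_add]
    exact le_add_of_nonneg_left (mul_nonneg (p_nonneg 0) (by positivity))

theorem re_ofReal_div (a : ℝ) (z : ℂ) : ((a : ℂ) / z).re = a * (z.re / ‖z‖ ^ 2) := by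
  rw [div_eq_mul_inv, Complex.re_ofReal_mul, Complex.inv_re, Complex.sq_norm]

theorem norm_cuspFactor_le {z : ℂ} (hz : ‖z‖ ≤ 2 * π) :
    ‖cuspFactor z‖ ≤ rexp (π ^ 2 / 6 * (z.re / ‖z‖ ^ 2)) := by
  have hre : (π ^ 2 / 6 / z : ℂ).re = π ^ 2 / 6 * (z.re / ‖z‖ ^ 2) := by
    rw [← re_ofReal_div]
    push_cast
    rfl
  have hdiv : ‖z / (2 * π)‖ ≤ 1 := by
    rw [norm_div, show (2 * π : ℂ) = ((2 * π : ℝ) : ℂ) by push_cast; rfl, Complex.norm_real,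
      norm_of_nonneg (by positivity)]
    exact div_le_one_of_le₀ hz (by positivity)
  rw [cuspFactor, norm_mul, norm_cpow_half, Complex.norm_exp, hre]
  exact mul_le_of_le_one_left (exp_pos _).le (sqrt_le_one.2 hdiv)

theorem norm_cuspFactor_mul_genFun_sub_one_le {z : ℂ} {m : ℝ} (hm : 0 < m) (hm1 : m ≤ 1)
    (hmz : m ≤ z.re / ‖z‖ ^ 2) (hz : ‖z‖ ≤ 2 * π) :
    ‖cuspFactor z * (genFun (4 * π ^ 2 / z) - 1)‖ ≤ rexp (π ^ 2 / 6 + 1 / (24 * m)) := by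
  set r := z.re / ‖z‖ ^ 2
  have hre : (4 * π ^ 2 / z : ℂ).re = 4 * π ^ 2 * r := by
    rw [← re_ofReal_div]
    push_cast
    rfl
  have hgen := norm_genFun_sub_one_le (z := 4 * π ^ 2 / z) (s := 4 * π ^ 2 * m)
    (by positivity) (by rw [hre]; gcongr)
  have hsimp : π ^ 2 / 6 / (4 * π ^ 2 * m) = 1 / (24 * m) := by
    field_simp
    norm_num
  rw [hre, hsimp] at hgen
  calc ‖cuspFactor z * (genFun (4 * π ^ 2 / z) - 1)‖
      ≤ rexp (π ^ 2 / 6 * r) * (rexp (-(4 * π ^ 2 * r - 4 * π ^ 2 * m)) * rexp (1 / (24 * m))) := by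
        rw [norm_mul]
        gcongr
        exact norm_cuspFactor_le hz
    _ = rexp (π ^ 2 / 6 * r - 4 * π ^ 2 * (r - m) + 1 / (24 * m)) := by
        rw [← exp_add, ← exp_add]
        ring_nf
    _ ≤ rexp (π ^ 2 / 6 + 1 / (24 * m)) := by
        gcongr
        nlinarith [mul_nonneg (sq_nonneg π) (sub_nonneg.2 hmz),
          mul_nonneg (sq_nonneg π) (sub_nonneg.2 hm1)]

theorem sq_norm_linePt_le (y : ℝ) {ξ : ℝ} (hξ : |ξ| ≤ 1 / 2) :
    ‖linePt y ξ‖ ^ 2 ≤ π ^ 2 + y ^ 2 := by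
  have : ξ ^ 2 ≤ 1 / 4 := by
    rw [← sq_abs]
    nlinarith [abs_nonneg ξ]
  rw [sq_norm_linePt]
  nlinarith [sq_nonneg π]

theorem norm_linePt_le {y ξ : ℝ} (hy : 0 < y) (hy1 : y ≤ 1) (hξ : |ξ| ≤ 1 / 2) :
    ‖linePt y ξ‖ ≤ 2 * π := by
  refine abs_le_of_sq_le_sq' ?_ (by positivity) |>.2
  nlinarith [pi_gt_three, sq_norm_linePt_le y hξ]

theorem norm_cuspFactor_linePt_mul_le {y ξ : ℝ} (hy : 0 < y) (hy1 : y ≤ 1) (hξ : |ξ| ≤ 1 / 2) :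
    ‖cuspFactor (linePt y ξ) * (genFun (4 * π ^ 2 / linePt y ξ) - 1)‖ ≤
      rexp (π ^ 2 / 6 + (π ^ 2 + y ^ 2) / (24 * y)) := by
  have hpos := norm_linePt_pos hy ξ
  have hm1 : y / (π ^ 2 + y ^ 2) ≤ 1 :=
    div_le_one_of_le₀ (by nlinarith [pi_gt_three]) (by positivity)
  have hmz : y / (π ^ 2 + y ^ 2) ≤ (linePt y ξ).re / ‖linePt y ξ‖ ^ 2 := by
    rw [linePt_re]
    gcongr
    exact sq_norm_linePt_le y hξ
  convert norm_cuspFactor_mul_genFun_sub_one_le (by positivity) hm1 hmz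
    (norm_linePt_le hy hy1 hξ) using 3
  field_simp

theorem norm_inv_sqrt_two_pi : ‖(√(2 * π) : ℂ)⁻¹‖ = (√(2 * π))⁻¹ := by
  rw [norm_inv, Complex.norm_real, norm_of_nonneg (sqrt_nonneg _)]

theorem norm_inv_sqrt_mul_singularPart_le {y ξ : ℝ} (hy : 0 < y) (hy1 : y ≤ 1)
    (hξ : |ξ| ≤ 1 / 2) :
    ‖(√(2 * π) : ℂ)⁻¹ * linePt y ξ ^ (1 / 2 : ℂ) * (1 + π ^ 2 / 6 / linePt y ξ)‖ ≤
      1 + π ^ 2 / 6 / y := by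
  have hroot : ‖(√(2 * π) : ℂ)⁻¹ * linePt y ξ ^ (1 / 2 : ℂ)‖ ≤ 1 := by
    rw [norm_mul, norm_cpow_half, norm_inv_sqrt_two_pi, inv_mul_le_iff₀ (by positivity), mul_one]
    exact sqrt_le_sqrt (norm_linePt_le hy hy1 hξ)
  have hpole : ‖(π ^ 2 / 6 / linePt y ξ : ℂ)‖ ≤ π ^ 2 / 6 / y := by
    rw [show (π ^ 2 / 6 : ℂ) = ((π ^ 2 / 6 : ℝ) : ℂ) by push_cast; rfl, norm_div,
      Complex.norm_real, norm_of_nonneg (by positivity)]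
    gcongr
    exact le_norm_linePt y ξ
  rw [norm_mul]
  refine (mul_le_of_le_one_left (norm_nonneg _) hroot).trans ((norm_add_le _ _).trans ?_)
  rw [norm_one]
  gcongr

theorem norm_genFun_mul_exp_sub_le {y ξ : ℝ} (n : ℕ) (hy : 0 < y) (hy1 : y ≤ 1)
    (hξ : |ξ| ≤ 1 / 2) :
    ‖genFun (linePt y ξ) * Complex.exp (n * linePt y ξ) - (√(2 * π) : ℂ)⁻¹ *
      (Complex.exp (linePt y ξ * (n - 1 / 24 : ℝ)) * laplaceImage (π ^ 2 / 6) (linePt y ξ))‖ ≤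
      rexp ((n - 1 / 24) * y) *
        (1 + π ^ 2 / 6 / y + rexp (π ^ 2 / 6 + (π ^ 2 + y ^ 2) / (24 * y))) := by
  set z := linePt y ξ with hz
  have hexp : Complex.exp (-z / 24) * Complex.exp (n * z) =
      Complex.exp (z * (n - 1 / 24 : ℝ)) := by
    rw [← Complex.exp_add]
    congr 1
    push_cast
    ring
  have hdecomp : genFun z * Complex.exp (n * z) - (√(2 * π) : ℂ)⁻¹ *
      (Complex.exp (z * (n - 1 / 24 : ℝ)) * laplaceImage (π ^ 2 / 6) z) =
      Complex.exp (z * (n - 1 / 24 : ℝ)) *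
        ((√(2 * π) : ℂ)⁻¹ * z ^ (1 / 2 : ℂ) * (1 + π ^ 2 / 6 / z) +
          cuspFactor z * (genFun (4 * π ^ 2 / z) - 1)) := by
    rw [genFun_eq_cuspFactor_mul (by simpa [hz])]
    linear_combination cuspFactor z * genFun (4 * π ^ 2 / z) * hexp +
      Complex.exp (z * (n - 1 / 24 : ℝ)) * cuspFactor_eq z
  rw [hdecomp, norm_mul, hz, norm_exp_linePt_mul]
  gcongr
  exact (norm_add_le _ _).trans (add_le_add (norm_inv_sqrt_mul_singularPart_le hy hy1 hξ)
    (norm_cuspFactor_linePt_mul_le hy hy1 hξ))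

theorem norm_p_sub_integral_le {y : ℝ} (n : ℕ) (hy : 0 < y) (hy1 : y ≤ 1) :
    ‖(p n : ℂ) - (√(2 * π) : ℂ)⁻¹ * ∫ ξ in (-1 / 2 : ℝ)..(1 / 2),
      Complex.exp (linePt y ξ * (n - 1 / 24 : ℝ)) * laplaceImage (π ^ 2 / 6) (linePt y ξ)‖ ≤
      rexp ((n - 1 / 24) * y) *
        (1 + π ^ 2 / 6 / y + rexp (π ^ 2 / 6 + (π ^ 2 + y ^ 2) / (24 * y))) := by
  have hp := p_eq_integral hy n
  -- The integral is `p n ≠ 0`, whereas the integral of a non-integrable function is `0`.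
  have hp_int : IntervalIntegrable
      (fun ξ ↦ genFun (linePt y ξ) * Complex.exp (n * linePt y ξ)) volume (-1 / 2) (1 / 2) := by
    by_contra h
    rw [intervalIntegral.integral_undef h] at hp
    exact (p_pos n).ne' (by exact_mod_cast hp)
  have himage_int := (integrable_exp_mul_laplaceImage (A := π ^ 2 / 6) (by positivity) hy
    (n - 1 / 24)).const_mul (√(2 * π) : ℂ)⁻¹
  rw [hp, ← intervalIntegral.integral_const_mul,
    ← intervalIntegral.integral_sub hp_int himage_int.intervalIntegrable]
  have hpointwise (ξ : ℝ) (hξ : ξ ∈ uIoc (-1 / 2 : ℝ) (1 / 2)) := by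
    rw [uIoc_of_le (by norm_num)] at hξ
    exact norm_genFun_mul_exp_sub_le n hy hy1 (abs_le.2 ⟨by linarith [hξ.1], hξ.2⟩)
  refine (intervalIntegral.norm_integral_le_of_norm_le_const hpointwise).trans_eq ?_
  norm_num

theorem norm_integral_sub_intervalIntegral_le {E : Type*} [NormedAddCommGroup E] [NormedSpace ℝ E]
    {f : ℝ → E} (hf : Integrable f) {a s C : ℝ} (ha : 0 < a) (hs : 1 < s)
    (hbound : ∀ ξ, a < |ξ| → ‖f ξ‖ ≤ C * |ξ| ^ (-s)) :
    ‖(∫ ξ, f ξ) - ∫ ξ in (-a)..a, f ξ‖ ≤ 2 * C * (a ^ (1 - s) / (s - 1)) := by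
  have hhalf (g : ℝ → E) (hg : ∀ ξ, a < ξ → ‖g ξ‖ ≤ C * ξ ^ (-s)) :
      ‖∫ ξ in Ioi a, g ξ‖ ≤ C * (a ^ (1 - s) / (s - 1)) := by
    refine (norm_integral_le_of_norm_le
      ((integrableOn_Ioi_rpow_of_lt (by linarith) ha).const_mul C)
      ((ae_restrict_iff' measurableSet_Ioi).2 (.of_forall hg))).trans_eq ?_
    rw [integral_const_mul, integral_Ioi_rpow_of_lt (by linarith) ha, neg_add_eq_sub, ← neg_sub s 1,
      neg_div_neg_eq]
  have hright := hhalf f fun ξ hξ ↦ by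
    simpa [abs_of_pos (ha.trans hξ)] using hbound ξ (hξ.trans_le (le_abs_self ξ))
  have hleft := hhalf (fun ξ ↦ f (-ξ)) fun ξ hξ ↦ by
    simpa [abs_of_pos (ha.trans hξ)] using hbound (-ξ) (by simpa using hξ.trans_le (le_abs_self ξ))
  rw [integral_comp_neg_Ioi] at hleft
  have hsplit : (∫ ξ, f ξ) - ∫ ξ in (-a)..a, f ξ = (∫ ξ in Iic (-a), f ξ) + ∫ ξ in Ioi a, f ξ := by
    rw [← intervalIntegral.integral_Iic_add_Ioi (b := -a) hf.integrableOn hf.integrableOn,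
      ← intervalIntegral.integral_interval_add_Ioi (a := -a) (b := a) hf.integrableOn
        hf.integrableOn]
    abel
  rw [hsplit]
  linarith [norm_add_le (∫ ξ in Iic (-a), f ξ) (∫ ξ in Ioi a, f ξ)]

theorem norm_laplaceImage_linePt_le {y ξ : ℝ} (hy : 0 < y) (hξ : 1 / 2 < |ξ|) :
    ‖laplaceImage (π ^ 2 / 6) (linePt y ξ)‖ ≤ 9 * |ξ| ^ (-(3 / 2) : ℝ) := by
  have hpos := norm_linePt_pos hy ξ
  have hnorm : 2 * π * |ξ| ≤ ‖linePt y ξ‖ := by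
    refine abs_le_of_sq_le_sq' ?_ hpos.le |>.2
    rw [sq_norm_linePt, mul_pow, sq_abs]
    nlinarith [sq_nonneg y]
  have hexp : rexp (π ^ 2 / 6 / ‖linePt y ξ‖) ≤ 3 := by
    have : π ^ 2 / 6 / ‖linePt y ξ‖ ≤ 1 := by
      rw [div_le_one hpos]
      nlinarith [pi_lt_four, pi_pos]
    linarith [exp_le_exp.2 this, exp_one_lt_d9]
  have hconst : (π ^ 2 / 6) ^ 2 ≤ 3 := by
    have : π ^ 2 ≤ 9.87 := by nlinarith [pi_lt_d6, pi_gt_three]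
    nlinarith [sq_nonneg π]
  calc ‖laplaceImage (π ^ 2 / 6) (linePt y ξ)‖
      ≤ (π ^ 2 / 6) ^ 2 * rexp (π ^ 2 / 6 / ‖linePt y ξ‖) * ‖linePt y ξ‖ ^ (-(3 / 2) : ℝ) :=
        norm_laplaceImage_le (by positivity) (linePt_ne_zero hy ξ)
    _ ≤ 3 * 3 * |ξ| ^ (-(3 / 2) : ℝ) := by
        gcongr ?_ * ?_ * ?_
        exact rpow_le_rpow_of_nonpos (by linarith) (by nlinarith [pi_gt_three]) (by norm_num)
    _ = 9 * |ξ| ^ (-(3 / 2) : ℝ) := by norm_num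

theorem norm_integral_laplaceImage_tail_le {y : ℝ} (hy : 0 < y) (t : ℝ) :
    ‖(∫ ξ, Complex.exp (linePt y ξ * t) * laplaceImage (π ^ 2 / 6) (linePt y ξ)) -
      ∫ ξ in (-1 / 2 : ℝ)..(1 / 2),
        Complex.exp (linePt y ξ * t) * laplaceImage (π ^ 2 / 6) (linePt y ξ)‖ ≤
      54 * rexp (t * y) := by
  have htail := norm_integral_sub_intervalIntegral_le (a := 1 / 2) (s := 3 / 2)
    (C := rexp (t * y) * 9)
    (integrable_exp_mul_laplaceImage (A := π ^ 2 / 6) (by positivity) hy t)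
    (by norm_num) (by norm_num) fun ξ hξ ↦ by
      rw [norm_mul, norm_exp_linePt_mul, mul_assoc]
      gcongr
      exact norm_laplaceImage_linePt_le hy hξ
  have hsqrt : (1 / 2 : ℝ) ^ (1 - 3 / 2 : ℝ) ≤ 3 / 2 := by
    rw [show (1 - 3 / 2 : ℝ) = -(1 / 2) by norm_num, one_div, ← rpow_neg_eq_inv_rpow, neg_neg,
      ← one_div, ← sqrt_eq_rpow, sqrt_le_left (by norm_num)]
    norm_num
  rw [neg_div]
  refine htail.trans ?_
  calc 2 * (rexp (t * y) * 9) * ((1 / 2 : ℝ) ^ (1 - 3 / 2 : ℝ) / (3 / 2 - 1))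
      ≤ 2 * (rexp (t * y) * 9) * (3 / 2 / (3 / 2 - 1)) := by gcongr
    _ = 54 * rexp (t * y) := by ring

theorem integral_exp_mul_laplaceImage_growthConst {y t : ℝ} (hy : 0 < y) (ht : 0 < t) :
    (√(2 * π) : ℂ)⁻¹ *
      ∫ ξ, Complex.exp (linePt y ξ * t) * laplaceImage (π ^ 2 / 6) (linePt y ξ) =
      (laplaceKernel growthConst t / (√2 * π) : ℝ) := by
  have hinv := integral_exp_mul_laplaceImage growthConst_pos.ne' hy ht
  rw [growthConst_sq, show 2 / 3 * π ^ 2 / 4 = π ^ 2 / 6 by ring] at hinv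
  rw [hinv, ← Complex.ofReal_inv, ← Complex.ofReal_mul]
  congr 1
  have : √(2 * π) * √π = √2 * π := by
    rw [sqrt_mul (by norm_num), mul_assoc, mul_self_sqrt pi_pos.le]
  rw [← this]
  field_simp

theorem abs_p_sub_laplaceKernel_le {y : ℝ} {n : ℕ} (hn : 0 < n) (hy : 0 < y) (hy1 : y ≤ 1) :
    |p n - laplaceKernel growthConst (n - 1 / 24) / (√2 * π)| ≤ rexp ((n - 1 / 24) * y) *
      (55 + π ^ 2 / 6 / y + rexp (π ^ 2 / 6 + (π ^ 2 + y ^ 2) / (24 * y))) := by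
  have ht : (0 : ℝ) < n - 1 / 24 := by
    have : (1 : ℝ) ≤ n := by exact_mod_cast hn
    linarith
  have hinv := integral_exp_mul_laplaceImage_growthConst hy ht
  have harc := norm_p_sub_integral_le n hy hy1
  have htail := norm_integral_laplaceImage_tail_le hy (n - 1 / 24)
  set κ := (√(2 * π) : ℂ)⁻¹
  set line := ∫ ξ, Complex.exp (linePt y ξ * (n - 1 / 24 : ℝ)) *
    laplaceImage (π ^ 2 / 6) (linePt y ξ)
  set arc := ∫ ξ in (-1 / 2 : ℝ)..(1 / 2),
    Complex.exp (linePt y ξ * (n - 1 / 24 : ℝ)) * laplaceImage (π ^ 2 / 6) (linePt y ξ)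
  have hκ : ‖κ‖ ≤ 1 := by
    rw [norm_inv_sqrt_two_pi]
    exact inv_le_one_of_one_le₀ (one_le_sqrt.2 (by linarith [pi_gt_three]))
  calc |p n - laplaceKernel growthConst (n - 1 / 24) / (√2 * π)|
      = ‖((p n : ℂ) - κ * arc) - κ * (line - arc)‖ := by
        rw [← norm_eq_abs, ← Complex.norm_real, Complex.ofReal_sub, ← hinv]
        ring_nf
    _ ≤ ‖(p n : ℂ) - κ * arc‖ + ‖κ‖ * ‖line - arc‖ := by
        rw [← norm_mul]
        exact norm_sub_le _ _
    _ ≤ _ := by linarith [mul_le_of_le_one_left (norm_nonneg (line - arc)) hκ]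

end CircleMethod

section MainTerm

theorem growthConst_gt : 2.56 < growthConst := by
  nlinarith [growthConst_pos, growthConst_sq, pi_gt_d4]

theorem growthConst_lt : growthConst < 2.57 := by
  have hpi : π ^ 2 < 9.87 := by nlinarith [pi_pos, pi_lt_d4]
  nlinarith [growthConst_pos, growthConst_sq]

/-- The leading term `(c √t - 1) exp (c √t) / (4 √2 π t^(3/2))` of `p n` for `t = n - 1/24`, where
`c = growthConst`. -/
noncomputable def mainTerm (t : ℝ) : ℝ :=
  (growthConst * √t - 1) * rexp (growthConst * √t) / (4 * √2 * π * (t * √t))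

theorem mainTerm_pos {t : ℝ} (ht : 1 ≤ t) : 0 < mainTerm t := by
  have hsqrt : 1 ≤ √t := one_le_sqrt.2 ht
  have hnum : 0 < growthConst * √t - 1 := by nlinarith [growthConst_gt]
  unfold mainTerm
  positivity

theorem laplaceKernel_div_eq {t : ℝ} (ht : 0 < t) :
    laplaceKernel growthConst t / (√2 * π) = mainTerm t +
      (1 - (growthConst * √t) ^ 2 / 2 - (growthConst * √t + 1) * rexp (-(growthConst * √t)) / 2) /
        (2 * √2 * π * (t * √t)) := by
  rw [laplaceKernel, mainTerm, kernelNum, sinh_eq, cosh_eq]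
  field_simp
  ring

theorem abs_laplaceKernel_sub_mainTerm_le {t : ℝ} (ht : 1 ≤ t) :
    |laplaceKernel growthConst t / (√2 * π) - mainTerm t| ≤
      8 * rexp (growthConst * √t / 2) := by
  rw [laplaceKernel_div_eq (by linarith), add_sub_cancel_left]
  set u := growthConst * √t
  have hu : 0 < u := mul_pos growthConst_pos (sqrt_pos.2 (by linarith))
  have hden : 1 ≤ 2 * √2 * π * (t * √t) := by
    have hsqrt : 1 ≤ t * √t := one_le_mul_of_one_le_of_one_le ht (one_le_sqrt.2 ht)
    have htwo : 1 ≤ √2 := one_le_sqrt.2 (by norm_num)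
    nlinarith [pi_gt_three, mul_nonneg (sub_nonneg.2 htwo) pi_pos.le]
  rw [abs_div, abs_of_pos (zero_lt_one.trans_le hden)]
  refine (div_le_self (abs_nonneg _) hden).trans ?_
  have hquad := quadratic_le_exp_of_nonneg (half_pos hu).le
  have hdecay : (u + 1) * rexp (-u) ≤ u + 1 :=
    mul_le_of_le_one_right (by positivity) (exp_le_one_iff.2 (by linarith))
  have hdecay_pos : 0 ≤ (u + 1) * rexp (-u) := by positivity
  rw [abs_le]
  constructor <;> nlinarith

/-- The abscissa `y = π² / (3 u)` balances the exponents: `t y = π² / (6 y) = u / 2`. -/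
theorem abs_p_sub_laplaceKernel_le_exp {n : ℕ} (hn : 0 < n) {u : ℝ}
    (hu_def : u = growthConst * √(n - 1 / 24)) (hu : 80 ≤ u) :
    |p n - laplaceKernel growthConst (n - 1 / 24) / (√2 * π)| ≤
      rexp (u / 2) * (55 + u / 2 + 8 * rexp (u / 8)) := by
  have hn1 : (1 : ℝ) ≤ n := by exact_mod_cast hn
  have hu_sq : u ^ 2 = 2 / 3 * π ^ 2 * (n - 1 / 24) := by
    rw [hu_def, mul_pow, growthConst_sq, sq_sqrt (by linarith)]
  have hpi : π ^ 2 < 9.87 := by nlinarith [pi_gt_three, pi_lt_d4]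
  have : 0 < u := by linarith
  set y := π ^ 2 / (3 * u) with hy
  have hy_pos : 0 < y := by positivity
  have hy_le : y ≤ 1 / 24 := by
    rw [hy, div_le_iff₀ (by positivity)]
    linarith
  have hty : (n - 1 / 24) * y = u / 2 := by
    rw [hy]
    field_simp
    linarith
  have hpole : π ^ 2 / 6 / y = u / 2 := by
    rw [hy]
    field_simp
    norm_num
  have hexponent : π ^ 2 / 6 + (π ^ 2 + y ^ 2) / (24 * y) ≤ 2 + u / 8 := by
    have : (π ^ 2 + y ^ 2) / (24 * y) = π ^ 2 / 6 / y / 4 + y / 24 := by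
      field_simp
      ring
    rw [this, hpole]
    linarith
  have hbound := abs_p_sub_laplaceKernel_le hn hy_pos (hy_le.trans (by norm_num))
  rw [hty, hpole] at hbound
  have hexp_two : rexp 2 ≤ 8 := by
    rw [show (2 : ℝ) = 1 + 1 by norm_num, exp_add]
    nlinarith [exp_one_lt_d9, exp_pos 1]
  refine hbound.trans ?_
  gcongr
  calc rexp (π ^ 2 / 6 + (π ^ 2 + y ^ 2) / (24 * y)) ≤ rexp (2 + u / 8) := exp_le_exp.2 hexponent
    _ = rexp 2 * rexp (u / 8) := exp_add _ _
    _ ≤ 8 * rexp (u / 8) := by gcongr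

theorem abs_p_sub_mainTerm_le_exp {n : ℕ} (hn : 0 < n) {u : ℝ}
    (hu_def : u = growthConst * √(n - 1 / 24)) (hu : 80 ≤ u) :
    |p n - mainTerm (n - 1 / 24)| ≤ 9 * rexp (5 / 8 * u) := by
  have ht : (1 : ℝ) ≤ n - 1 / 24 := by
    have hsqrt : 1 ≤ √(n - 1 / 24) := by
      nlinarith [growthConst_lt, sqrt_nonneg ((n : ℝ) - 1 / 24)]
    exact one_le_sqrt.1 hsqrt
  have hgrow : 63 + u / 2 ≤ rexp (u / 8) := by
    refine le_trans ?_ (pow_div_factorial_le_exp (u / 8) (by linarith) 3)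
    norm_num [Nat.factorial]
    nlinarith [mul_nonneg (by linarith : 0 ≤ u)
      (mul_nonneg (sub_nonneg.2 hu) (by linarith : 0 ≤ u + 80))]
  have hkernel := abs_laplaceKernel_sub_mainTerm_le ht
  rw [← hu_def] at hkernel
  calc |p n - mainTerm (n - 1 / 24)|
      ≤ rexp (u / 2) * (55 + u / 2 + 8 * rexp (u / 8)) + 8 * rexp (u / 2) :=
        (abs_sub_le _ _ _).trans (add_le_add (abs_p_sub_laplaceKernel_le_exp hn hu_def hu) hkernel)
    _ = rexp (u / 2) * (63 + u / 2 + 8 * rexp (u / 8)) := by ring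
    _ ≤ rexp (u / 2) * (rexp (u / 8) + 8 * rexp (u / 8)) := by gcongr
    _ = 9 * (rexp (u / 2) * rexp (u / 8)) := by ring
    _ = 9 * rexp (5 / 8 * u) := by
        rw [← exp_add]
        ring_nf

theorem pow_six_le_exp {u : ℝ} (hu : 80 ≤ u) : (1.3 * u) ^ 6 ≤ rexp (3 / 8 * u) := by
  have hexp_five : (148 : ℝ) ≤ rexp 5 := by
    rw [show (5 : ℝ) = (5 : ℕ) * 1 by norm_num, exp_nat_mul]
    calc (148 : ℝ) ≤ 2.718 ^ 5 := by norm_num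
      _ ≤ rexp 1 ^ 5 := by
        gcongr
        linarith [exp_one_gt_d9]
  have hlinear : 1.3 * u ≤ rexp (u / 16) :=
    calc 1.3 * u ≤ 148 * (u / 16 - 5 + 1) := by linarith
      _ ≤ rexp 5 * rexp (u / 16 - 5) := by
        gcongr
        · linarith
        · exact add_one_le_exp _
      _ = rexp (u / 16) := by
        rw [← exp_add]
        ring_nf
  calc (1.3 * u) ^ 6 ≤ rexp (u / 16) ^ 6 := by gcongr
    _ = rexp (3 / 8 * u) := by
      rw [← exp_nat_mul]
      push_cast
      ring_nf

theorem exp_le_mainTerm {t : ℝ} (hu : 80 ≤ growthConst * √t) :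
    9 * rexp (5 / 8 * (growthConst * √t)) ≤ mainTerm t / (20 * t ^ 2) := by
  have hsqrt : 31 ≤ √t := by nlinarith [growthConst_lt, sqrt_nonneg t]
  have ht : 0 < t := sqrt_pos.1 (by linarith)
  have hpow : 1358 * t ^ 3 ≤ rexp (3 / 8 * (growthConst * √t)) := by
    refine le_trans ?_ (pow_six_le_exp hu)
    calc 1358 * t ^ 3 ≤ (1.3 * 2.56) ^ 6 * t ^ 3 := by
          gcongr
          norm_num
      _ = (1.3 * (2.56 * √t)) ^ 6 := by
          rw [show t ^ 3 = (√t ^ 2) ^ 3 by rw [sq_sqrt ht.le]]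
          ring
      _ ≤ (1.3 * (growthConst * √t)) ^ 6 := by
          gcongr
          exact growthConst_gt.le
  have hconst : 720 * (√2 * π) ≤ 3206 := by
    have := mul_le_mul (sqrt_le_iff.2 (by norm_num) : √2 ≤ 1.415) pi_lt_d4.le pi_pos.le
      (by norm_num)
    linarith
  have hlinear : 2.52 * √t ≤ growthConst * √t - 1 := by nlinarith [growthConst_gt]
  set u := growthConst * √t with hu_def
  rw [mainTerm, ← hu_def, div_div, le_div_iff₀ (by positivity)]
  calc 9 * rexp (5 / 8 * u) * (4 * √2 * π * (t * √t) * (20 * t ^ 2))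
      = 720 * (√2 * π) * (√t * t ^ 3) * rexp (5 / 8 * u) := by ring
    _ ≤ 3206 * (√t * t ^ 3) * rexp (5 / 8 * u) := by gcongr
    _ ≤ 2.52 * √t * (1358 * t ^ 3) * rexp (5 / 8 * u) := by
        gcongr ?_ * _
        nlinarith [mul_pos (sqrt_pos.2 ht) (pow_pos ht 3)]
    _ ≤ (u - 1) * rexp (3 / 8 * u) * rexp (5 / 8 * u) := by
        gcongr
        linarith
    _ = (u - 1) * rexp u := by
        rw [mul_assoc, ← exp_add]
        ring_nf

theorem abs_p_sub_mainTerm_le {n : ℕ} (hn : 1000 ≤ n) :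
    |p n - mainTerm (n - 1 / 24)| ≤ mainTerm (n - 1 / 24) / (20 * (n - 1 / 24) ^ 2) := by
  have hn1 : (1000 : ℝ) ≤ n := by exact_mod_cast hn
  have hsqrt : 31.5 ≤ √(n - 1 / 24) := le_sqrt_of_sq_le (by norm_num; linarith)
  have hu : 80 ≤ growthConst * √(n - 1 / 24) := by nlinarith [growthConst_gt]
  exact (abs_p_sub_mainTerm_le_exp (by omega) rfl hu).trans (exp_le_mainTerm hu)

end MainTerm

section SecondDifference

theorem one_div_sq_le {t : ℝ} (ht : 999 ≤ t) : 1 / t ^ 2 ≤ 0.00001 := by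
  rw [div_le_iff₀ (by positivity)]
  nlinarith

theorem sqrt_sub_one_mul_sqrt_add_one_le {t : ℝ} (ht : 1 ≤ t) :
    √(t - 1) * √(t + 1) ≤ t * (1 - 1 / t ^ 2 / 2) := by
  have hb : 1 / t ^ 2 ≤ 1 := div_le_one_of_le₀ (by nlinarith) (by positivity)
  have hsq : t ^ 2 * (1 / t ^ 2) = 1 := by field_simp
  rw [← sqrt_mul (by linarith)]
  refine sqrt_le_iff.2 ⟨mul_nonneg (by linarith) (by linarith), ?_⟩
  nlinarith [mul_nonneg (sq_nonneg t) (sq_nonneg (1 / t ^ 2))]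

theorem le_sqrt_sub_one_mul_sqrt_add_one {t : ℝ} (ht : 1 ≤ t) :
    t * (1 - 1 / t ^ 2 / 2 - (1 / t ^ 2) ^ 2 / 2) ≤ √(t - 1) * √(t + 1) := by
  have hsq : t ^ 2 * (1 / t ^ 2) = 1 := by field_simp
  have hb1 : 1 / t ^ 2 ≤ 1 := div_le_one_of_le₀ (by nlinarith) (by positivity)
  have hb0 : 0 < 1 / t ^ 2 := by positivity
  set b := 1 / t ^ 2
  rw [← sqrt_mul (by linarith)]
  refine le_sqrt_of_sq_le ?_
  have hpoly : (1 - b / 2 - b ^ 2 / 2) ^ 2 ≤ 1 - b := by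
    nlinarith [mul_nonneg (sq_nonneg b) (sub_nonneg.2 hb1),
      mul_nonneg (mul_nonneg (sq_nonneg b) hb0.le) (sub_nonneg.2 hb1)]
  calc (t * (1 - b / 2 - b ^ 2 / 2)) ^ 2 = t ^ 2 * (1 - b / 2 - b ^ 2 / 2) ^ 2 := mul_pow _ _ 2
    _ ≤ t ^ 2 * (1 - b) := by gcongr
    _ = (t - 1) * (t + 1) := by linear_combination -hsq

theorem two_mul_sqrt_sub_le {t : ℝ} (ht : 1 ≤ t) :
    2 * √t - (√(t - 1) + √(t + 1)) ≤ √t * (1 / t ^ 2 / 4 + (1 / t ^ 2) ^ 2 / 2) := by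
  have hprod := le_sqrt_sub_one_mul_sqrt_add_one ht
  have hb0 : 0 < 1 / t ^ 2 := by positivity
  have hb1 : 1 / t ^ 2 ≤ 1 := div_le_one_of_le₀ (by nlinarith) (by positivity)
  set b := 1 / t ^ 2
  suffices √t * (2 - (b / 4 + b ^ 2 / 2)) ≤ √(t - 1) + √(t + 1) by linarith
  refine (abs_le_of_sq_le_sq' ?_ (by positivity)).2
  have hpoly : (2 - (b / 4 + b ^ 2 / 2)) ^ 2 ≤ 4 - b - b ^ 2 := by
    nlinarith [mul_nonneg (sq_nonneg b) (sub_nonneg.2 hb1),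
      mul_nonneg (mul_nonneg (sq_nonneg b) hb0.le) (sub_nonneg.2 hb1)]
  calc (√t * (2 - (b / 4 + b ^ 2 / 2))) ^ 2 = t * (2 - (b / 4 + b ^ 2 / 2)) ^ 2 := by
        rw [mul_pow, sq_sqrt (by linarith)]
    _ ≤ t * (4 - b - b ^ 2) := by gcongr
    _ ≤ (√(t - 1) + √(t + 1)) ^ 2 := by
        rw [add_sq, sq_sqrt (by linarith), sq_sqrt (by linarith)]
        linarith

theorem sqrt_sub_one_add_sqrt_add_one_le {t : ℝ} (ht : 1 ≤ t) :
    √(t - 1) + √(t + 1) ≤ 2 * √t := by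
  refine (abs_le_of_sq_le_sq' ?_ (by positivity)).2
  nlinarith [sq_nonneg (√(t - 1) - √(t + 1)), sq_sqrt (by linarith : 0 ≤ t),
    sq_sqrt (by linarith : 0 ≤ t - 1), sq_sqrt (by linarith : 0 ≤ t + 1)]

theorem sq_growthConst_mul_sqrt_sub_one_le {t : ℝ} (ht : 999 ≤ t) :
    (growthConst * √t - 1) ^ 2 * (1 - 0.53 * (1 / t ^ 2)) ≤
      (growthConst * √(t - 1) - 1) * (growthConst * √(t + 1) - 1) := by
  have hsum := mul_le_mul_of_nonneg_left (sqrt_sub_one_add_sqrt_add_one_le (by linarith : 1 ≤ t))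
    growthConst_pos.le
  have hprod := mul_le_mul_of_nonneg_left
    (le_sqrt_sub_one_mul_sqrt_add_one (by linarith : 1 ≤ t)) (sq_nonneg growthConst)
  have hb0 : 0 < 1 / t ^ 2 := by positivity
  have hb1 := one_div_sq_le ht
  set b := 1 / t ^ 2
  set u := growthConst * √t with hu
  have hu_sq : u ^ 2 = growthConst ^ 2 * t := by rw [hu, mul_pow, sq_sqrt (by linarith)]
  have hu_ge : 79 ≤ u := by
    have hsqrt : 31 ≤ √t := le_sqrt_of_sq_le (by linarith)
    nlinarith [growthConst_gt]
  have hmid : 0.501 * b * u ^ 2 ≤ 0.53 * b * (u - 1) ^ 2 := by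
    have : 0.501 * u ^ 2 ≤ 0.53 * (u - 1) ^ 2 := by nlinarith
    nlinarith
  have hsmall : u ^ 2 * (1 - 0.501 * b) ≤ u ^ 2 * (1 - b / 2 - b ^ 2 / 2) :=
    mul_le_mul_of_nonneg_left (by nlinarith) (sq_nonneg u)
  calc (u - 1) ^ 2 * (1 - 0.53 * b) ≤ u ^ 2 * (1 - b / 2 - b ^ 2 / 2) - 2 * u + 1 := by linarith
    _ ≤ _ := by
      rw [hu_sq]
      linarith

theorem mul_sqrt_sub_one_mul_mul_sqrt_add_one_le {t : ℝ} (ht : 1 ≤ t) :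
    (t - 1) * √(t - 1) * ((t + 1) * √(t + 1)) ≤
      (t * √t) ^ 2 * ((1 - 1 / t ^ 2) * (1 - 1 / t ^ 2 / 2)) :=
  calc (t - 1) * √(t - 1) * ((t + 1) * √(t + 1))
      = (t ^ 2 - 1) * (√(t - 1) * √(t + 1)) := by ring
    _ ≤ (t ^ 2 - 1) * (t * (1 - 1 / t ^ 2 / 2)) :=
        mul_le_mul_of_nonneg_left (sqrt_sub_one_mul_sqrt_add_one_le ht) (by nlinarith)
    _ = (t * √t) ^ 2 * ((1 - 1 / t ^ 2) * (1 - 1 / t ^ 2 / 2)) := by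
        rw [mul_pow, sq_sqrt (by linarith)]
        field_simp

theorem sq_mainTerm_mul_le {t : ℝ} (ht : 999 ≤ t) :
    mainTerm t ^ 2 * (1 - 0.53 * (1 / t ^ 2)) ≤
      mainTerm (t - 1) * mainTerm (t + 1) * ((1 - 1 / t ^ 2) * (1 - 1 / t ^ 2 / 2) *
        rexp (growthConst * (2 * √t - (√(t - 1) + √(t + 1))))) := by
  have hb1 := one_div_sq_le ht
  have hnum := sq_growthConst_mul_sqrt_sub_one_le ht
  have hden := mul_sqrt_sub_one_mul_mul_sqrt_add_one_le (by linarith : 1 ≤ t)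
  have : 0 < t * √t := mul_pos (by linarith) (sqrt_pos.2 (by linarith))
  have htm : 0 < (t - 1) * √(t - 1) := mul_pos (by linarith) (sqrt_pos.2 (by linarith))
  have : 0 < (t + 1) * √(t + 1) := mul_pos (by linarith) (sqrt_pos.2 (by linarith))
  have hexp : rexp (growthConst * √t) ^ 2 =
      rexp (growthConst * √(t - 1)) * rexp (growthConst * √(t + 1)) *
        rexp (growthConst * (2 * √t - (√(t - 1) + √(t + 1)))) := by
    rw [← exp_nat_mul, ← exp_add, ← exp_add]
    push_cast
    ring_nf
  set β := (1 - 1 / t ^ 2) * (1 - 1 / t ^ 2 / 2)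
  set N := (growthConst * √(t - 1) - 1) * (growthConst * √(t + 1) - 1) with hN_def
  have hN : 0 ≤ N := le_trans (mul_nonneg (sq_nonneg _) (by linarith)) hnum
  set X := rexp (growthConst * √t) ^ 2 / (4 * √2 * π) ^ 2 with hX
  have hinv : 1 / (t * √t) ^ 2 ≤ β / ((t - 1) * √(t - 1) * ((t + 1) * √(t + 1))) := by
    rw [div_le_div_iff₀ (by positivity) (by positivity)]
    linarith
  calc mainTerm t ^ 2 * (1 - 0.53 * (1 / t ^ 2))
      = (growthConst * √t - 1) ^ 2 * (1 - 0.53 * (1 / t ^ 2)) * X * (1 / (t * √t) ^ 2) := by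
        rw [mainTerm, hX]
        field_simp
    _ ≤ N * X * (β / ((t - 1) * √(t - 1) * ((t + 1) * √(t + 1)))) := by gcongr
    _ = _ := by
        rw [mainTerm, mainTerm, hX, hexp, hN_def]
        field_simp

theorem sq_growthConst_div_le {t : ℝ} (ht : 999 ≤ t) :
    (growthConst / 4 / (t * √t)) ^ 2 ≤ 0.0005 * (1 / t ^ 2) := by
  have hc := growthConst_lt
  have hc0 := growthConst_pos
  have ht0 : 0 < t := by linarith
  calc (growthConst / 4 / (t * √t)) ^ 2 = growthConst ^ 2 / 16 / t * (1 / t ^ 2) := by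
        rw [div_pow, mul_pow, sq_sqrt ht0.le]
        field_simp
        norm_num
    _ ≤ 0.0005 * (1 / t ^ 2) := by
        gcongr
        rw [div_le_iff₀ ht0]
        nlinarith

theorem exp_growthConst_mul_le {t : ℝ} (ht : 999 ≤ t) :
    rexp (growthConst * (2 * √t - (√(t - 1) + √(t + 1)))) ≤
      (1 + growthConst / 4 / (t * √t)) * (1 + 0.002 * (1 / t ^ 2)) := by
  have hdiff := mul_le_mul_of_nonneg_left (two_mul_sqrt_sub_le (by linarith : 1 ≤ t))
    growthConst_pos.le
  have hc := growthConst_lt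
  have hc0 := growthConst_pos
  have hw : 31 ≤ √t := le_sqrt_of_sq_le (by linarith)
  have ht0 : 0 < t := by linarith
  have hb0 : 0 < 1 / t ^ 2 := by positivity
  have hb1 := one_div_sq_le ht
  have hX0 : 0 < growthConst / 4 / (t * √t) := by positivity
  have hX1 : growthConst / 4 / (t * √t) ≤ 0.0001 := by
    rw [div_le_iff₀ (by positivity)]
    nlinarith [mul_le_mul ht hw (by norm_num) ht0.le]
  have hX_sq := sq_growthConst_div_le ht
  have hexponent : growthConst * (√t * (1 / t ^ 2 / 4 + (1 / t ^ 2) ^ 2 / 2)) =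
      growthConst / 4 / (t * √t) * (1 + 2 * (1 / t ^ 2)) := by
    field_simp
    rw [sq_sqrt ht0.le]
    ring
  rw [hexponent] at hdiff
  set b := 1 / t ^ 2
  set X := growthConst / 4 / (t * √t)
  have hsmall : X * (1 + 2 * b) ≤ 0.001 := by nlinarith
  have hexp :=
    exp_bound' (x := X * (1 + 2 * b)) (by positivity) (by linarith) (n := 2) (by norm_num)
  norm_num [Finset.sum_range_succ, Nat.factorial] at hexp
  refine (exp_le_exp.2 hdiff).trans (hexp.trans ?_)
  have hsq : (X * (1 + 2 * b)) ^ 2 ≤ 0.0005 * b * 1.01 := by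
    rw [mul_pow]
    gcongr
    nlinarith
  nlinarith [mul_pos hX0 hb0]

theorem one_sub_div_le_one_div_mul_sqrt {t δ : ℝ} (ht : 0 < t) (hδ : 0 ≤ δ) :
    (1 - 3 * δ / (2 * t)) / (t * √t) ≤ 1 / ((t + δ) * √(t + δ)) := by
  set a := δ / (2 * t) with ha
  have ha0 : 0 ≤ a := by positivity
  have hshift : t + δ = t * (1 + 2 * a) := by
    rw [ha]
    field_simp
  have hsqrt : √(1 + 2 * a) ≤ 1 + a := sqrt_le_iff.2 ⟨by positivity, by nlinarith⟩
  rw [show 3 * δ / (2 * t) = 3 * a by rw [ha]; ring, hshift, sqrt_mul ht.le,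
    div_le_div_iff₀ (by positivity) (by positivity)]
  rcases le_total (1 - 3 * a) 0 with hneg | hpos
  · exact (mul_nonpos_of_nonpos_of_nonneg hneg (by positivity)).trans (by positivity)
  calc (1 - 3 * a) * (t * (1 + 2 * a) * (√t * √(1 + 2 * a)))
      ≤ (1 - 3 * a) * (t * (1 + 2 * a) * (√t * (1 + a))) := by gcongr
    _ = (1 - 7 * a ^ 2 - 6 * a ^ 3) * (t * √t) := by ring
    _ ≤ 1 * (t * √t) := by
        gcongr
        nlinarith [pow_nonneg ha0 3]

theorem one_add_div_mul_le {t : ℝ} (ht : 999 ≤ t) :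
    (1 + growthConst / 4 / (t * √t)) * (1 - 0.002 * (1 / t ^ 2)) ≤
      1 + growthConst / 4 / ((t + 1 / 24) * √(t + 1 / 24)) := by
  have hc := growthConst_lt
  have hc0 := growthConst_pos
  have hw : 31 ≤ √t := le_sqrt_of_sq_le (by linarith)
  have ht0 : 0 < t := by linarith
  have htangent := mul_le_mul_of_nonneg_left
    (one_sub_div_le_one_div_mul_sqrt ht0 (by norm_num : (0 : ℝ) ≤ 1 / 24))
    (by positivity : 0 ≤ growthConst / 4)
  have hcorr : growthConst / 4 / (t * √t) * (1 / (16 * t)) ≤ 0.002 * (1 / t ^ 2) :=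
    calc growthConst / 4 / (t * √t) * (1 / (16 * t)) = growthConst / 64 / √t * (1 / t ^ 2) := by
          field_simp
          norm_num
      _ ≤ 0.002 * (1 / t ^ 2) := by
          gcongr
          rw [div_le_iff₀ (by positivity)]
          linarith
  have hshift : growthConst / 4 * ((1 - 3 * (1 / 24) / (2 * t)) / (t * √t)) =
      growthConst / 4 / (t * √t) - growthConst / 4 / (t * √t) * (1 / (16 * t)) := by
    field_simp
    ring
  have hcross : 0 < growthConst / 4 / (t * √t) * (0.002 * (1 / t ^ 2)) := by positivity
  rw [hshift, mul_one_div (growthConst / 4) ((t + 1 / 24) * _)] at htangent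
  linarith

theorem error_factor_lt {b : ℝ} (hb0 : 0 < b) (hb1 : b ≤ 0.00001) :
    (1 - b) * (1 - b / 2) * (1 + 0.002 * b) * (1 + b / 19) ^ 2 <
      (1 - 0.53 * b) * (1 - b / 19) ^ 2 * (1 - 0.002 * b) := by
  have hupper : (1 - b) * (1 - b / 2) * (1 + 0.002 * b) * (1 + b / 19) ^ 2 ≤ 1 - 1.3 * b :=
    calc (1 - b) * (1 - b / 2) * (1 + 0.002 * b) * (1 + b / 19) ^ 2
        = (1 - b) * (1 - b / 2) * ((1 + 0.002 * b) * (1 + b / 19) ^ 2) := by ring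
      _ ≤ (1 - 1.49 * b) * ((1 + 0.002 * b) * (1 + 0.106 * b)) := by
          gcongr <;> nlinarith
      _ ≤ 1 - 1.3 * b := by nlinarith [mul_pos hb0 hb0, pow_pos hb0 3]
  have hlower : 1 - 0.7 * b ≤ (1 - 0.53 * b) * (1 - b / 19) ^ 2 * (1 - 0.002 * b) :=
    calc 1 - 0.7 * b ≤ (1 - 0.53 * b) * (1 - 0.106 * b) * (1 - 0.002 * b) := by
          nlinarith [mul_pos hb0 hb0, pow_pos hb0 3]
      _ ≤ (1 - 0.53 * b) * (1 - b / 19) ^ 2 * (1 - 0.002 * b) := by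
          gcongr <;> nlinarith
  linarith

theorem sq_mainTerm_mul_lt {t b : ℝ} (ht : 999 ≤ t) (hb : b = 1 / t ^ 2) :
    (mainTerm t * (1 + b / 19)) ^ 2 <
      mainTerm (t - 1) * (1 - b / 19) * (mainTerm (t + 1) * (1 - b / 19)) *
        (1 + growthConst / 4 / ((t + 1 / 24) * √(t + 1 / 24))) := by
  have hb0 : 0 < b := by rw [hb]; positivity
  have hb1 : b ≤ 0.00001 := hb ▸ one_div_sq_le ht
  have hratio := sq_mainTerm_mul_le ht
  have hexp := exp_growthConst_mul_le ht
  have hshift := one_add_div_mul_le ht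
  have hX : 0 < 1 + growthConst / 4 / (t * √t) := by
    have := growthConst_pos
    positivity
  have hm := mainTerm_pos (t := t - 1) (by linarith)
  have hp := mainTerm_pos (t := t + 1) (by linarith)
  rw [← hb] at hratio hexp hshift
  set X := 1 + growthConst / 4 / (t * √t)
  set Y := 1 + growthConst / 4 / ((t + 1 / 24) * √(t + 1 / 24))
  set M := mainTerm (t - 1) * mainTerm (t + 1) with hM
  have hM0 : 0 < M := mul_pos hm hp
  refine lt_of_mul_lt_mul_right (a := 1 - 0.53 * b) ?_ (by linarith)
  calc (mainTerm t * (1 + b / 19)) ^ 2 * (1 - 0.53 * b)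
      = mainTerm t ^ 2 * (1 - 0.53 * b) * (1 + b / 19) ^ 2 := by ring
    _ ≤ M * ((1 - b) * (1 - b / 2) * (X * (1 + 0.002 * b))) * (1 + b / 19) ^ 2 := by
        refine mul_le_mul_of_nonneg_right (hratio.trans ?_) (sq_nonneg _)
        gcongr
        exact mul_nonneg (by linarith) (by linarith)
    _ = M * X * ((1 - b) * (1 - b / 2) * (1 + 0.002 * b) * (1 + b / 19) ^ 2) := by ring
    _ < M * X * ((1 - 0.53 * b) * (1 - b / 19) ^ 2 * (1 - 0.002 * b)) :=
        mul_lt_mul_of_pos_left (error_factor_lt hb0 hb1) (by positivity)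
    _ = M * (1 - b / 19) ^ 2 * (1 - 0.53 * b) * (X * (1 - 0.002 * b)) := by ring
    _ ≤ M * (1 - b / 19) ^ 2 * (1 - 0.53 * b) * Y :=
        mul_le_mul_of_nonneg_left hshift
          (mul_nonneg (mul_nonneg hM0.le (sq_nonneg _)) (by linarith))
    _ = _ := by
        rw [hM]
        ring

theorem abs_p_sub_mainTerm_le_mul {t s : ℝ} {k : ℕ} (ht : 999 ≤ t) (hts : t - 1 ≤ s)
    (hk : 1000 ≤ k) (hs : s = k - 1 / 24) :
    |p k - mainTerm s| ≤ mainTerm s * (1 / t ^ 2 / 19) := by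
  have herr := abs_p_sub_mainTerm_le hk
  rw [← hs, div_eq_mul_one_div] at herr
  rw [div_div]
  exact herr.trans (mul_le_mul_of_nonneg_left
    (one_div_le_one_div_of_le (by positivity) (by nlinarith)) (mainTerm_pos (by linarith)).le)

theorem sq_p_lt_of_ge {m : ℕ} (hm : 1000 ≤ m) :
    p (m + 1) ^ 2 < p m * p (m + 2) *
      (1 + growthConst / 4 / (((m + 1 : ℕ) : ℝ) * √((m + 1 : ℕ) : ℝ))) := by
  have hm_real : (1000 : ℝ) ≤ m := by exact_mod_cast hm
  obtain ⟨t, ht⟩ : ∃ t : ℝ, t = ((m + 1 : ℕ) : ℝ) - 1 / 24 := ⟨_, rfl⟩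
  have ht999 : 999 ≤ t := by
    push_cast at ht
    linarith
  obtain ⟨b, hb⟩ : ∃ b, b = 1 / t ^ 2 := ⟨_, rfl⟩
  have hb0 : 0 < b := by rw [hb]; positivity
  have hb1 : b ≤ 0.00001 := hb ▸ one_div_sq_le (by linarith)
  have hprev := abs_p_sub_mainTerm_le_mul (s := t - 1) ht999 le_rfl hm (by rw [ht]; push_cast; ring)
  have hmid := abs_p_sub_mainTerm_le_mul ht999 (by linarith) (hm.trans (Nat.le_succ m)) ht
  have hnext := abs_p_sub_mainTerm_le_mul (s := t + 1) (k := m + 2) ht999 (by linarith) (by omega)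
    (by rw [ht]; push_cast; ring)
  rw [← hb] at hprev hmid hnext
  have := mainTerm_pos (t := t - 1) (by linarith)
  have hp0 := mainTerm_pos (t := t + 1) (by linarith)
  have hmain := sq_mainTerm_mul_lt (by linarith) hb
  rw [show t + 1 / 24 = ((m + 1 : ℕ) : ℝ) by rw [ht]; ring] at hmain
  have hY : 0 < 1 + growthConst / 4 / (((m + 1 : ℕ) : ℝ) * √((m + 1 : ℕ) : ℝ)) := by
    have := growthConst_pos
    positivity
  calc p (m + 1) ^ 2 ≤ (mainTerm t * (1 + b / 19)) ^ 2 := by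
        gcongr
        · exact p_nonneg _
        · linarith [(abs_le.1 hmid).2]
    _ < _ := hmain
    _ ≤ _ := by
        have hfactor : 0 ≤ 1 - b / 19 := by linarith
        gcongr
        · exact p_nonneg m
        · linarith [(abs_le.1 hprev).1]
        · linarith [(abs_le.1 hnext).1]

end SecondDifference

section KroneckerSubstitution

open Finset PowerSeries

theorem eval₂_trunc_coe {R S : Type*} [CommRing R] [CommRing S] (φ : R →+* S) {x : S} {N : ℕ}
    (hx : x ^ N = 0) (q : Polynomial R) :
    (trunc N (q : R⟦X⟧)).eval₂ φ x = q.eval₂ φ x := by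
  have htail (m : ℕ) : ∑ i ∈ range m, φ (q.coeff (N + i)) * x ^ (N + i) = 0 :=
    sum_eq_zero fun i _ ↦ by rw [pow_add, hx, zero_mul, mul_zero]
  rw [eval₂_trunc_eq_sum_range, Polynomial.eval₂_eq_sum_range' φ (n := N + (q.natDegree + 1))
    (by lia), sum_range_add, htail, add_zero]
  simp only [Polynomial.coeff_coe]

/-- Evaluation of a power series at a nilpotent point `x`, along the coefficient map `φ`: only the
terms of degree less than `N` matter, so it is the evaluation of the truncated polynomial. -/
noncomputable def nilpotentEval {R S : Type*} [CommRing R] [CommRing S] (φ : R →+* S) {x : S}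
    {N : ℕ} (hx : x ^ N = 0) : R⟦X⟧ →+* S where
  toFun f := (trunc N f).eval₂ φ x
  map_zero' := by simp
  map_one' := by simpa using eval₂_trunc_coe φ hx 1
  map_add' f g := by rw [map_add, Polynomial.eval₂_add]
  map_mul' f g := by
    rw [← trunc_trunc_mul_trunc, ← Polynomial.coe_mul, eval₂_trunc_coe φ hx, Polynomial.eval₂_mul]

theorem nilpotentEval_mk {R S : Type*} [CommRing R] [CommRing S] (φ : R →+* S) {x : S} {N : ℕ}
    (hx : x ^ N = 0) (f : ℕ → R) :
    nilpotentEval φ hx (PowerSeries.mk f) = ∑ n ∈ range N, φ (f n) * x ^ n := by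
  simp [nilpotentEval, eval₂_trunc_eq_sum_range]

theorem nilpotentEval_X {R S : Type*} [CommRing R] [CommRing S] (φ : R →+* S) {x : S} {N : ℕ}
    (hx : x ^ N = 0) : nilpotentEval φ hx X = x := by
  simpa [nilpotentEval] using eval₂_trunc_coe φ hx Polynomial.X

/-- `∑_{n < N} boundedCount k n * B ^ n` modulo `B ^ N`, computed as
`∏_{i < k} (1 + B ^ (i + 1) + B ^ (2 * (i + 1)) + ⋯)`. -/
def packedCount (B N : ℕ) : ℕ → ℕ
  | 0 => 1 % B ^ N
  | k + 1 => packedCount B N k *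
      (((B ^ (k + 1)) ^ (N / (k + 1) + 1) - 1) / (B ^ (k + 1) - 1)) % B ^ N

theorem packedCount_mul_prod {B N : ℕ} (hB : 2 ≤ B) (k : ℕ) :
    (packedCount B N k : ZMod (B ^ N)) * ∏ i ∈ range k, (1 - (B : ZMod (B ^ N)) ^ (i + 1)) = 1 := by
  have hx : (B : ZMod (B ^ N)) ^ N = 0 := by exact_mod_cast ZMod.natCast_self (B ^ N)
  induction k with
  | zero => simp [packedCount, ZMod.natCast_mod]
  | succ k ih =>
    have hgeom := mul_neg_geom_sum ((B : ZMod (B ^ N)) ^ (k + 1)) (N / (k + 1) + 1)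
    rw [← pow_mul, pow_eq_zero_of_le (Nat.lt_mul_div_succ N k.succ_pos).le hx, sub_zero] at hgeom
    rw [packedCount, ZMod.natCast_mod, prod_range_succ,
      ← Nat.geomSum_eq (hB.trans (Nat.le_self_pow (by simp) B))]
    push_cast
    rw [mul_mul_mul_comm, ih, one_mul, mul_comm, hgeom]

theorem sum_boundedCount_mul_pow_modEq {B N : ℕ} (hB : 2 ≤ B) (k : ℕ) :
    ∑ n ∈ range N, boundedCount k n * B ^ n ≡ packedCount B N k [MOD B ^ N] := by
  rw [← ZMod.natCast_eq_natCast_iff]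
  have hx : (B : ZMod (B ^ N)) ^ N = 0 := by exact_mod_cast ZMod.natCast_self (B ^ N)
  have heval := congrArg (nilpotentEval (Int.castRingHom _) hx) (mk_boundedCount_mul_prod k)
  simp only [map_mul, map_prod, map_sub, map_one, map_pow, nilpotentEval_X, nilpotentEval_mk,
    eq_intCast, Int.cast_natCast] at heval
  push_cast
  exact left_inv_eq_right_inv heval ((mul_comm _ _).trans (packedCount_mul_prod hB k))

theorem sum_mul_pow_lt {B : ℕ} {f : ℕ → ℕ} (N : ℕ) (hf : ∀ n < N, f n < B) :
    ∑ n ∈ range N, f n * B ^ n < B ^ N := by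
  induction N with
  | zero => simp
  | succ N ih =>
    have hlow := ih fun n hn ↦ hf n (by lia)
    have htop := Nat.mul_le_mul_right (B ^ N) (hf N N.lt_succ_self)
    rw [sum_range_succ, pow_succ']
    lia

theorem sum_mul_pow_div_mod {B N n : ℕ} {f : ℕ → ℕ} (hf : ∀ n < N, f n < B) (hn : n < N) :
    (∑ i ∈ range N, f i * B ^ i) / B ^ n % B = f n := by
  obtain ⟨m, rfl⟩ := Nat.exists_eq_add_of_lt hn
  have hB : 0 < B := (Nat.zero_le _).trans_lt (hf n hn)
  have hsplit : ∑ i ∈ range (n + m + 1), f i * B ^ i = ∑ i ∈ range n, f i * B ^ i +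
      B ^ n * (f n + B * ∑ j ∈ range m, f (n + (j + 1)) * B ^ j) := by
    rw [add_assoc, sum_range_add, sum_range_succ', mul_add, mul_sum, mul_sum, add_zero]
    congr 1
    rw [add_comm, mul_comm]
    congr 1
    exact sum_congr rfl fun j _ ↦ by ring
  rw [hsplit, Nat.add_mul_div_left _ _ (by positivity), Nat.div_eq_of_lt
    (sum_mul_pow_lt n fun i hi ↦ hf i (by lia)), zero_add, Nat.add_mul_mod_self_left,
    Nat.mod_eq_of_lt (hf n hn)]

theorem packedCount_lt {B N : ℕ} (hB : 0 < B) (k : ℕ) : packedCount B N k < B ^ N := by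
  cases k <;> exact Nat.mod_lt _ (by positivity)

/-- The base `B` digit of `F` of weight `B ^ n`. -/
def digit (B F n : ℕ) : ℕ := F / B ^ n % B

theorem digit_packedCount {B N n : ℕ} (hB : 2 ≤ B) (hp : ∀ n < N, p n < B) (hn : n < N) :
    (digit B (packedCount B N N) n : ℝ) = p n := by
  have hlt : ∀ n < N, boundedCount N n < B := fun n hn ↦
    Nat.cast_lt.1 ((boundedCount_le_p N n).trans_lt (hp n hn))
  rw [digit, ← (sum_boundedCount_mul_pow_modEq hB N).eq_of_lt_of_lt (sum_mul_pow_lt N hlt)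
    (packedCount_lt (by lia) N), sum_mul_pow_div_mod hlt hn, boundedCount_of_le hn.le]

end KroneckerSubstitution

section SmallCases

theorem p_le_exp {s : ℝ} (hs : 0 < s) (n : ℕ) : p n ≤ rexp (π ^ 2 / 6 / s + n * s) := by
  have hterm := ((summable_p_mul_exp hs).le_tsum n fun k _ ↦
    mul_nonneg (p_nonneg k) (pow_nonneg (exp_pos _).le k)).trans (tsum_p_mul_exp_le hs)
  rw [exp_add]
  refine le_trans (le_of_eq ?_) (mul_le_mul_of_nonneg_right hterm (exp_pos _).le)
  rw [mul_assoc, ← exp_nat_mul, ← exp_add, mul_neg, neg_add_cancel, exp_zero, mul_one]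

theorem p_lt_two_pow {n : ℕ} (hn : n < 1002) : p n < 2 ^ 128 := by
  have hn_real : (n : ℝ) < 1002 := by exact_mod_cast hn
  have hpi : π ^ 2 < 10 := by nlinarith [pi_lt_d2, pi_pos]
  calc p n ≤ rexp (π ^ 2 / 6 / (1 / 20) + n * (1 / 20)) := p_le_exp (by norm_num) n
    _ ≤ rexp ((88 : ℕ) * 1) := exp_le_exp.2 (by push_cast; linarith)
    _ = rexp 1 ^ 88 := exp_nat_mul _ _
    _ ≤ 2.7182818286 ^ 88 := by
      gcongr
      exact exp_one_lt_d9.le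
    _ < 2 ^ 128 := by norm_num

/-- The squared inequality for consecutive values `a`, `b`, `c` at `n - 1`, `n`, `n + 1`, with
`3.1415` for `π`; where `b ^ 2 < a * c` the subtraction truncates to `0`. -/
def ratioCheck (n a b c : ℕ) : Bool :=
  (b ^ 2 - a * c) ^ 2 * (24 * n ^ 3) * 10000 ^ 2 < (31415 * (a * c)) ^ 2

/-- `ratioCheck` at `45, …, 44 + k`, with the values read off the base `B` digits of `F`. -/
def packedCheck (B F : ℕ) : ℕ → Bool
  | 0 => true
  | k + 1 => ratioCheck (k + 45) (digit B F (k + 44)) (digit B F (k + 45)) (digit B F (k + 46)) &&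
      packedCheck B F k

/-- `packedCheck`, behind a case analysis on `F` that makes the kernel evaluate `F` only once. -/
def packedCheckForced (B k : ℕ) : ℕ → Bool
  | 0 => false
  | F + 1 => packedCheck B (F + 1) k

theorem packedCheckForced_packedCount :
    packedCheckForced (2 ^ 128) 956 (packedCount (2 ^ 128) 1002 1002) = true := by
  decide +kernel

theorem packedCheck_of_packedCheckForced {B F k : ℕ} (h : packedCheckForced B k F = true) :
    packedCheck B F k = true := by
  cases F with
  | zero => exact absurd h Bool.false_ne_true
  | succ F => exact h

theorem ratioCheck_of_packedCheck {B F K k : ℕ} (h : packedCheck B F K = true) (hk : k < K) :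
    ratioCheck (k + 45) (digit B F (k + 44)) (digit B F (k + 45)) (digit B F (k + 46)) = true := by
  induction K with
  | zero => lia
  | succ K ih =>
    rw [packedCheck, Bool.and_eq_true] at h
    rcases Nat.lt_succ_iff_lt_or_eq.1 hk with hlt | rfl
    · exact ih h.2 hlt
    · exact h.1

theorem sq_lt_of_ratioCheck {n a b c : ℕ} (hn : 0 < n) (h : ratioCheck n a b c = true) :
    (b : ℝ) ^ 2 < a * c * (1 + growthConst / 4 / (n * √n)) := by
  have hcheck := of_decide_eq_true h
  have hn_real : (0 : ℝ) < n := by exact_mod_cast hn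
  have := growthConst_pos
  have hac : 0 < a * c := by
    by_contra! hzero
    rw [Nat.le_zero.1 hzero] at hcheck
    simp at hcheck
  have hac_real : (0 : ℝ) < a * c := by exact_mod_cast hac
  have hcheck_real : ((b ^ 2 - a * c : ℕ) : ℝ) ^ 2 * (24 * n ^ 3) * 10000 ^ 2 <
      (31415 * (a * c)) ^ 2 := by
    exact_mod_cast hcheck
  have htrunc : (b : ℝ) ^ 2 ≤ ((b ^ 2 - a * c : ℕ) : ℝ) + a * c := by
    exact_mod_cast le_tsub_add
  have hpi : (3.1415 : ℝ) ^ 2 ≤ π ^ 2 := by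
    gcongr
    exact pi_gt_d4.le
  have hdiff : ((b ^ 2 - a * c : ℕ) : ℝ) < a * c * (growthConst / 4 / (n * √n)) := by
    refine (abs_lt_of_sq_lt_sq' ?_ (by positivity)).2
    rw [mul_pow, div_pow, div_pow, mul_pow (n : ℝ), growthConst_sq, sq_sqrt hn_real.le,
      mul_div_assoc', lt_div_iff₀ (by positivity)]
    nlinarith [mul_le_mul_of_nonneg_left hpi (sq_nonneg ((a : ℝ) * c))]
  linarith

theorem sq_p_lt_of_lt {m : ℕ} (hm : 44 ≤ m) (hm' : m < 1000) :
    p (m + 1) ^ 2 < p m * p (m + 2) *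
      (1 + growthConst / 4 / (((m + 1 : ℕ) : ℝ) * √((m + 1 : ℕ) : ℝ))) := by
  obtain ⟨k, rfl⟩ := Nat.exists_eq_add_of_le' hm
  have hcheck := sq_lt_of_ratioCheck (by lia) (ratioCheck_of_packedCheck
    (packedCheck_of_packedCheckForced packedCheckForced_packedCount) (by lia : k < 956))
  have hp : ∀ n < 1002, p n < (2 ^ 128 : ℕ) := fun n hn ↦ by exact_mod_cast p_lt_two_pow hn
  rwa [digit_packedCount (by norm_num) hp (by lia), digit_packedCount (by norm_num) hp (by lia),
    digit_packedCount (by norm_num) hp (by lia)] at hcheck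

end SmallCases

theorem sq_p_lt {m : ℕ} (hm : 44 ≤ m) :
    p (m + 1) ^ 2 < p m * p (m + 2) *
      (1 + growthConst / 4 / (((m + 1 : ℕ) : ℝ) * √((m + 1 : ℕ) : ℝ))) :=
  (lt_or_ge m 1000).elim (sq_p_lt_of_lt hm) sq_p_lt_of_ge

theorem growthConst_div_four : growthConst / 4 = π / √24 := by
  have hsqrt : √24 * √(2 / 3) = 4 := by
    rw [← sqrt_mul (by norm_num), sqrt_eq_iff_mul_self_eq] <;> norm_num
  rw [growthConst, div_eq_div_iff (by norm_num) (by positivity)]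
  linear_combination π * hsqrt

theorem rpow_three_div_two {x : ℝ} (hx : 0 < x) : x ^ ((3 : ℝ) / 2) = x * √x := by
  rw [show (3 : ℝ) / 2 = 1 + 1 / 2 by norm_num, rpow_add hx, rpow_one, sqrt_eq_rpow]

end PartitionAsymptotics

open PartitionAsymptotics

theorem partition_ratio_ineq_pi (n : ℕ) (hn : 45 ≤ n) :
    p (n - 1) / p n * (1 + π / (Real.sqrt 24 * (n : ℝ) ^ ((3 : ℝ) / 2))) >
      p n / p (n + 1) := by
  obtain ⟨m, rfl⟩ := Nat.exists_eq_add_of_le' (Nat.one_le_of_lt hn)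
  rw [gt_iff_lt, Nat.add_sub_cancel, rpow_three_div_two (by positivity), ← div_div,
    ← growthConst_div_four, div_mul_eq_mul_div, div_lt_div_iff₀ (p_pos _) (p_pos _), ← sq]
  calc p (m + 1) ^ 2 < p m * p (m + 2) *
        (1 + growthConst / 4 / (((m + 1 : ℕ) : ℝ) * √((m + 1 : ℕ) : ℝ))) := sq_p_lt (by lia)
    _ = _ := by ring
end

section
/- The limit as n → ∞ of -n^{3/2} · (log p(n) + log p(n-2) - 2·log p(n-1)) equals π/√24. -/
open Real Filter Topology

/-!
Let `Z(s) = ∑ p(n) exp(-n s) = ∏ (1 - exp(-k s))⁻¹`. For `t > 0` the random integer taking the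
value `n` with probability `p(n) exp(-n t) / Z(t)` has some mean `N`, which tends to infinity
continuously as `t → 0`, and a characteristic function `φ` once centred at `N`. Fourier inversion
gives `p(N + j) exp(-(N + j) t) / Z(t) = (2 π)⁻¹ ∫ φ(θ) exp(-i j θ) dθ`, and in
`p(N + 1) p(N - 1) / p(N)²` both `Z(t)` and the exponentials cancel: this ratio is
`(C² + S²) / A²`, where `C`, `S`, `A` are the integrals of `φ` against `cos`, `sin` and `1`. On the
scale `θ = u t ^ (3 / 2)` the function `φ` tends to the Gaussian `exp(-π² u² / 6)`, so the logarithm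
of the ratio is asymptotic to `-3 t³ / π²`, whereas `t² N → π² / 6`. The asymptotics of `p` itself
are not needed.
-/

/-! ### Euler's product for the partition generating function -/

section AbsoluteConvergence

open PowerSeries

variable {R : Type*} [NormedCommRing R] {q : R}

/-- Absolute convergence of the formal power series `f` at the point `q`, with value `a`. -/
def AbsConvergesTo (f : R⟦X⟧) (q a : R) : Prop :=
  Summable (fun n => ‖coeff n f * q ^ n‖) ∧ HasSum (fun n => coeff n f * q ^ n) a

namespace AbsConvergesTo

theorem one : AbsConvergesTo (1 : R⟦X⟧) q 1 := by
  have hzero : ∀ n ∉ ({0} : Finset ℕ), coeff n (1 : R⟦X⟧) * q ^ n = 0 := fun n hn => by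
    rw [coeff_one, if_neg (by simpa using hn), zero_mul]
  exact ⟨summable_of_ne_finset_zero (s := {0}) fun n hn => by rw [hzero n hn, norm_zero],
    by simpa using hasSum_sum_of_ne_finset_zero hzero⟩

theorem mul [CompleteSpace R] {f g : R⟦X⟧} {a b : R} (hf : AbsConvergesTo f q a)
    (hg : AbsConvergesTo g q b) : AbsConvergesTo (f * g) q (a * b) := by
  have hcauchy : ∀ n, coeff n (f * g) * q ^ n =
      ∑ kl ∈ Finset.HasAntidiagonal.antidiagonal n,
        coeff kl.1 f * q ^ kl.1 * (coeff kl.2 g * q ^ kl.2) := fun n => by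
    rw [coeff_mul, Finset.sum_mul]
    refine Finset.sum_congr rfl fun kl hkl => ?_
    rw [← Finset.HasAntidiagonal.mem_antidiagonal.mp hkl, pow_add]
    ring
  have hsummable := summable_norm_sum_mul_antidiagonal_of_summable_norm hf.1 hg.1
  have htsum := tsum_mul_tsum_eq_tsum_sum_antidiagonal_of_summable_norm hf.1 hg.1
  rw [hf.2.tsum_eq, hg.2.tsum_eq] at htsum
  simp only [AbsConvergesTo, hcauchy, htsum]
  exact ⟨hsummable, hsummable.of_norm.hasSum⟩

theorem prod [CompleteSpace R] {ι : Type*} {f : ι → R⟦X⟧} {a : ι → R} (s : Finset ι)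
    (h : ∀ i ∈ s, AbsConvergesTo (f i) q (a i)) :
    AbsConvergesTo (∏ i ∈ s, f i) q (∏ i ∈ s, a i) := by
  classical
  induction s using Finset.induction_on with
  | empty => exact one
  | insert i s hi ih =>
    rw [Finset.prod_insert hi, Finset.prod_insert hi]
    exact (h i (Finset.mem_insert_self i s)).mul
      (ih fun j hj => h j (Finset.mem_insert_of_mem hj))

end AbsConvergesTo

end AbsoluteConvergence

section EulerProduct

open PowerSeries PowerSeries.WithPiTopology

theorem hasSum_X_pow_mul (R : Type*) [Semiring R] [TopologicalSpace R] {d : ℕ} (hd : d ≠ 0) :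
    HasSum (fun j => (X : R⟦X⟧) ^ (d * j)) (PowerSeries.mk fun n => if d ∣ n then 1 else 0) := by
  rw [hasSum_iff_hasSum_coeff]
  intro n
  simp only [coeff_X_pow, coeff_mk]
  split_ifs with h
  · obtain ⟨j, rfl⟩ := h
    simpa only [Nat.mul_right_inj hd, eq_comm] using hasSum_ite_eq j (1 : R)
  · convert hasSum_zero with j
    exact if_neg fun hj => h ⟨j, hj⟩

variable {𝕜 : Type*} [RCLike 𝕜] {q : 𝕜}

theorem absConvergesTo_dvd_indicator {d : ℕ} (hd : d ≠ 0) (hq : ‖q‖ < 1) :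
    AbsConvergesTo (PowerSeries.mk fun n => if d ∣ n then (1 : 𝕜) else 0) q (1 - q ^ d)⁻¹ := by
  have hsum : HasSum (fun n => (if d ∣ n then (1 : 𝕜) else 0) * q ^ n) (1 - q ^ d)⁻¹ := by
    rw [← (mul_right_injective₀ hd).hasSum_iff]
    · have hqd : ‖q ^ d‖ < 1 := by
        rw [norm_pow]
        exact pow_lt_one₀ (norm_nonneg _) hq hd
      simpa [Function.comp_def, pow_mul] using hasSum_geometric_of_norm_lt_one hqd
    · intro n hn
      rw [if_neg fun ⟨j, hj⟩ => hn ⟨j, hj.symm⟩, zero_mul]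
  simpa only [AbsConvergesTo, coeff_mk] using And.intro hsum.summable.norm hsum

theorem mk_card_restricted_le_eq_prod (R : Type*) [CommSemiring R] [TopologicalSpace R]
    [IsTopologicalSemiring R] [T2Space R] (N : ℕ) :
    (PowerSeries.mk fun n => ((Nat.Partition.restricted n (· ≤ N)).card : R)) =
      ∏ i ∈ Finset.range N, PowerSeries.mk fun n => if i + 1 ∣ n then (1 : R) else 0 := by
  refine (Nat.Partition.hasProd_powerSeriesMk_card_restricted R (· ≤ N)).unique ?_
  have hfactor : ∀ i ∈ Finset.range N,
      (if i + 1 ≤ N then ∑' j, (X : R⟦X⟧) ^ ((i + 1) * j) else 1) =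
        PowerSeries.mk fun n => if i + 1 ∣ n then (1 : R) else 0 := fun i hi => by
    rw [if_pos (Nat.succ_le_of_lt (Finset.mem_range.mp hi)),
      (hasSum_X_pow_mul R i.succ_ne_zero).tsum_eq]
  rw [← Finset.prod_congr rfl hfactor]
  exact hasProd_prod_of_ne_finset_one fun i hi => if_neg (by simpa using hi)

theorem hasSum_card_restricted_mul_pow (hq : ‖q‖ < 1) (N : ℕ) :
    HasSum (fun n => ((Nat.Partition.restricted n (· ≤ N)).card : 𝕜) * q ^ n)
      (∏ i ∈ Finset.range N, (1 - q ^ (i + 1))⁻¹) := by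
  have h := AbsConvergesTo.prod (Finset.range N) fun i _ =>
    absConvergesTo_dvd_indicator i.succ_ne_zero hq
  rw [← mk_card_restricted_le_eq_prod] at h
  simpa only [coeff_mk] using h.2

theorem card_restricted_le_card (n N : ℕ) :
    (Nat.Partition.restricted n (· ≤ N)).card ≤ Fintype.card n.Partition :=
  Finset.card_le_univ _

theorem card_restricted_eq_card {n N : ℕ} (h : n ≤ N) :
    (Nat.Partition.restricted n (· ≤ N)).card = Fintype.card n.Partition := by
  rw [Nat.Partition.restricted, Finset.filter_true_of_mem, Finset.card_univ]
  exact fun _ _ i hi => (Nat.Partition.le_of_mem_parts hi).trans h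

theorem multipliable_inv_one_sub_pow (hq : ‖q‖ < 1) :
    Multipliable fun i : ℕ => (1 - q ^ (i + 1))⁻¹ := by
  have hsummable : Summable fun i : ℕ => ‖q ^ (i + 1) / (1 - q ^ (i + 1))‖ := by
    have h := (summable_norm_pow_mul_geometric_div_one_sub 0 hq).norm
    simpa using (summable_nat_add_iff 1).mpr h
  refine (multipliable_one_add_of_summable hsummable).congr fun i => ?_
  have hne : 1 - q ^ (i + 1) ≠ 0 := fun h => by
    have hlt : ‖q ^ (i + 1)‖ < 1 := by
      rw [norm_pow]
      exact pow_lt_one₀ (norm_nonneg _) hq i.succ_ne_zero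
    rw [← sub_eq_zero.mp h, norm_one] at hlt
    exact lt_irrefl _ hlt
  field_simp
  ring

theorem summable_card_partition_mul_pow {r : ℝ} (h0 : 0 ≤ r) (h1 : r < 1) :
    Summable fun n : ℕ => (Fintype.card n.Partition : ℝ) * r ^ n := by
  have hr : ‖r‖ < 1 := by rwa [Real.norm_of_nonneg h0]
  obtain ⟨B, hB⟩ := (multipliable_inv_one_sub_pow hr).hasProd.tendsto_prod_nat.bddAbove_range
  refine summable_of_sum_range_le (c := B) (fun n => by positivity) fun N => ?_
  calc ∑ n ∈ Finset.range N, (Fintype.card n.Partition : ℝ) * r ^ n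
      = ∑ n ∈ Finset.range N, ((Nat.Partition.restricted n (· ≤ N)).card : ℝ) * r ^ n :=
        Finset.sum_congr rfl fun n hn => by
          rw [card_restricted_eq_card (Finset.mem_range.mp hn).le]
    _ ≤ ∏ i ∈ Finset.range N, (1 - r ^ (i + 1))⁻¹ :=
        sum_le_hasSum _ (fun n _ => by positivity) (hasSum_card_restricted_mul_pow hr N)
    _ ≤ B := hB ⟨N, rfl⟩

theorem hasSum_card_partition_mul_pow (hq : ‖q‖ < 1) :
    HasSum (fun n : ℕ => (Fintype.card n.Partition : 𝕜) * q ^ n)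
      (∏' i : ℕ, (1 - q ^ (i + 1))⁻¹) := by
  have hsummable := summable_card_partition_mul_pow (norm_nonneg q) hq
  have hlim := tendsto_tsum_of_dominated_convergence (𝓕 := atTop)
    (f := fun N n => ((Nat.Partition.restricted n (· ≤ N)).card : 𝕜) * q ^ n) hsummable
    (fun n => tendsto_const_nhds.congr' <| by
      filter_upwards [eventually_ge_atTop n] with N hN
      rw [card_restricted_eq_card hN])
    (Eventually.of_forall fun N n => by
      rw [norm_mul, norm_pow, RCLike.norm_natCast]
      gcongr
      exact card_restricted_le_card n N)
  simp only [(hasSum_card_restricted_mul_pow hq _).tsum_eq] at hlim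
  rw [tendsto_nhds_unique (multipliable_inv_one_sub_pow hq).hasProd.tendsto_prod_nat hlim]
  refine (Summable.of_norm ?_).hasSum
  simpa only [norm_mul, norm_pow, RCLike.norm_natCast] using hsummable

end EulerProduct

/-! ### Cumulants of the size of a random partition -/

section Cumulants

theorem pow_mul_exp_neg_le_factorial (n : ℕ) {y : ℝ} (hy : 0 ≤ y) :
    y ^ n * exp (-y) ≤ n.factorial := by
  have h := Real.pow_div_factorial_le_exp y hy n
  rw [div_le_iff₀ (by positivity)] at h
  rw [Real.exp_neg, mul_inv_le_iff₀ (exp_pos y), mul_comm]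
  exact h

theorem summable_one_div_succ_sq : Summable fun m : ℕ => 1 / ((m : ℝ) + 1) ^ 2 := by
  simpa using (summable_nat_add_iff 1).mpr hasSum_zeta_two.summable

/-- The exponent `(m + 1) * (k + 1)` of `exp (-t)` in the `m`-th term of the Taylor series of
`-log (1 - exp (-(k + 1) * t))`; the indices are shifted so as to range over all of `ℕ`. -/
noncomputable def freq (x : ℕ × ℕ) : ℝ := ((x.1 : ℝ) + 1) * ((x.2 : ℝ) + 1)

theorem freq_pos (x : ℕ × ℕ) : 0 < freq x := by
  unfold freq
  positivity

theorem summable_one_div_freq_sq : Summable fun x => 1 / freq x ^ 2 := by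
  refine (summable_one_div_succ_sq.mul_of_nonneg summable_one_div_succ_sq
    (fun m => by positivity) fun m => by positivity).congr fun x => ?_
  rw [freq, mul_pow, one_div_mul_one_div]

/-- The term of index `x` in the expansion of `log ∏ k, (1 - exp (-(k + 1) * t))⁻¹`. -/
noncomputable def boltzmannWeight (t : ℝ) (x : ℕ × ℕ) : ℝ := exp (-(freq x * t)) / ((x.1 : ℝ) + 1)

theorem boltzmannWeight_pos (t : ℝ) (x : ℕ × ℕ) : 0 < boltzmannWeight t x := by
  unfold boltzmannWeight
  positivity

/-- The `j`-th cumulant of the size of a random partition `λ` of weight proportional to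
`exp (-t * |λ|)`, that is `(-1) ^ j` times the `j`-th derivative at `t` of the logarithm of the
partition generating function `∏ k, (1 - exp (-(k + 1) * t))⁻¹`. -/
noncomputable def cumulant (j : ℕ) (t : ℝ) : ℝ := ∑' x, freq x ^ j * boltzmannWeight t x

theorem freq_pow_mul_boltzmannWeight_nonneg (j : ℕ) (t : ℝ) (x : ℕ × ℕ) :
    0 ≤ freq x ^ j * boltzmannWeight t x :=
  mul_nonneg (pow_nonneg (freq_pos x).le j) (boltzmannWeight_pos t x).le

theorem freq_pow_mul_boltzmannWeight_le (j : ℕ) {ε t : ℝ} (hε : 0 < ε) (ht : ε ≤ t)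
    (x : ℕ × ℕ) :
    freq x ^ j * boltzmannWeight t x ≤ (j + 2).factorial / ε ^ (j + 2) * (1 / freq x ^ 2) := by
  have hf := freq_pos x
  have hweight : boltzmannWeight t x ≤ exp (-(freq x * ε)) :=
    (div_le_self (exp_pos _).le (by linarith [(Nat.cast_nonneg x.1 : (0 : ℝ) ≤ x.1)])).trans
      (by gcongr)
  rw [div_mul_div_comm, mul_one, le_div_iff₀ (by positivity)]
  calc freq x ^ j * boltzmannWeight t x * (ε ^ (j + 2) * freq x ^ 2)
      ≤ freq x ^ j * exp (-(freq x * ε)) * (ε ^ (j + 2) * freq x ^ 2) := by gcongr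
    _ = (freq x * ε) ^ (j + 2) * exp (-(freq x * ε)) := by ring
    _ ≤ _ := pow_mul_exp_neg_le_factorial (j + 2) (by positivity)

theorem summable_cumulant (j : ℕ) {t : ℝ} (ht : 0 < t) :
    Summable fun x => freq x ^ j * boltzmannWeight t x :=
  .of_nonneg_of_le (freq_pow_mul_boltzmannWeight_nonneg j t)
    (freq_pow_mul_boltzmannWeight_le j ht le_rfl) (summable_one_div_freq_sq.mul_left _)

theorem summable_boltzmannWeight {t : ℝ} (ht : 0 < t) : Summable (boltzmannWeight t) := by
  simpa using summable_cumulant 0 ht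

theorem continuousOn_cumulant (j : ℕ) : ContinuousOn (cumulant j) (Set.Ioi 0) := by
  intro t (ht : 0 < t)
  have hcont : ContinuousOn (cumulant j) (Set.Ici (t / 2)) := by
    refine continuousOn_tsum (fun x => by unfold boltzmannWeight; fun_prop)
      (summable_one_div_freq_sq.mul_left ((j + 2).factorial / (t / 2) ^ (j + 2)))
      fun x s (hs : t / 2 ≤ s) => ?_
    rw [Real.norm_of_nonneg (freq_pow_mul_boltzmannWeight_nonneg j s x)]
    exact freq_pow_mul_boltzmannWeight_le j (half_pos ht) hs x
  exact (hcont.continuousAt (Ici_mem_nhds (half_lt_self ht))).continuousWithinAt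

theorem antitoneOn_cumulant (j : ℕ) : AntitoneOn (cumulant j) (Set.Ioi 0) := by
  intro s hs t ht hst
  refine (summable_cumulant j ht).tsum_le_tsum (fun x => ?_) (summable_cumulant j hs)
  have hf := freq_pos x
  unfold boltzmannWeight
  gcongr

theorem cumulant_nonneg (j : ℕ) (t : ℝ) : 0 ≤ cumulant j t :=
  tsum_nonneg (freq_pow_mul_boltzmannWeight_nonneg j t)

theorem tendsto_cumulant_atTop (j : ℕ) : Tendsto (cumulant j) atTop (𝓝 0) := by
  have hbound : Tendsto (fun t : ℝ => (j + 2).factorial / t ^ (j + 2) * ∑' x, 1 / freq x ^ 2)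
      atTop (𝓝 0) := by
    rw [← zero_mul (∑' x, 1 / freq x ^ 2)]
    exact ((tendsto_pow_atTop (by omega)).const_div_atTop _).mul_const _
  refine squeeze_zero' (.of_forall (cumulant_nonneg j)) ?_ hbound
  filter_upwards [eventually_gt_atTop 0] with t ht
  rw [← tsum_mul_left]
  exact (summable_cumulant j ht).tsum_le_tsum (freq_pow_mul_boltzmannWeight_le j ht le_rfl)
    (summable_one_div_freq_sq.mul_left _)

end Cumulants

/-! ### The cumulants near zero -/

section CumulantAsymptotics

/-- The exponential sum `∑ k ^ j * exp (-k * x)` over `k ≥ 1`. -/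
noncomputable def powExpSum (j : ℕ) (x : ℝ) : ℝ :=
  ∑' k : ℕ, ((k : ℝ) + 1) ^ j * exp (-(((k : ℝ) + 1) * x))

theorem powExpSum_nonneg (j : ℕ) (x : ℝ) : 0 ≤ powExpSum j x :=
  tsum_nonneg fun k => by positivity

theorem exp_neg_lt_one {x : ℝ} (hx : 0 < x) : exp (-x) < 1 :=
  Real.exp_lt_one_iff.mpr (neg_lt_zero.mpr hx)

theorem hasSum_choose_mul_exp (j : ℕ) {x : ℝ} (hx : 0 < x) :
    HasSum (fun k : ℕ => ((k + j).choose j : ℝ) * exp (-(((k : ℝ) + 1) * x)))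
      (exp (-x) / (1 - exp (-x)) ^ (j + 1)) := by
  have hr : ‖exp (-x)‖ < 1 := by
    rw [Real.norm_of_nonneg (exp_pos _).le]
    exact exp_neg_lt_one hx
  have h := (hasSum_choose_mul_geometric_of_norm_lt_one j hr).mul_left (exp (-x))
  rw [mul_one_div] at h
  refine h.congr_fun fun k => ?_
  rw [← Real.exp_nat_mul, mul_left_comm, ← Real.exp_add]
  ring_nf

theorem succ_pow_le_factorial_mul_choose (j k : ℕ) :
    ((k : ℝ) + 1) ^ j ≤ j.factorial * ((k + j).choose j : ℝ) := by
  have h := Nat.pow_succ_le_ascFactorial (k + 1) j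
  rw [Nat.ascFactorial_eq_factorial_mul_choose] at h
  exact_mod_cast h

theorem factorial_mul_choose_le_add_pow (j k : ℕ) :
    j.factorial * ((k + j).choose j : ℝ) ≤ ((k + j : ℕ) + 1 : ℝ) ^ j := by
  have h := (Nat.descFactorial_le_pow (k + j) j).trans (Nat.pow_le_pow_left (Nat.le_succ _) j)
  rw [Nat.descFactorial_eq_factorial_mul_choose] at h
  exact_mod_cast h

theorem succ_pow_mul_exp_le (j k : ℕ) (x : ℝ) :
    ((k : ℝ) + 1) ^ j * exp (-(((k : ℝ) + 1) * x)) ≤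
      j.factorial * (((k + j).choose j : ℝ) * exp (-(((k : ℝ) + 1) * x))) := by
  rw [← mul_assoc]
  exact mul_le_mul_of_nonneg_right (succ_pow_le_factorial_mul_choose j k) (exp_pos _).le

theorem summable_powExpSum (j : ℕ) {x : ℝ} (hx : 0 < x) :
    Summable fun k : ℕ => ((k : ℝ) + 1) ^ j * exp (-(((k : ℝ) + 1) * x)) :=
  .of_nonneg_of_le (fun k => by positivity) (succ_pow_mul_exp_le j · x)
    ((hasSum_choose_mul_exp j hx).summable.mul_left (j.factorial : ℝ))

theorem powExpSum_le (j : ℕ) {x : ℝ} (hx : 0 < x) :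
    powExpSum j x ≤ j.factorial * (exp (-x) / (1 - exp (-x)) ^ (j + 1)) :=
  hasSum_le (succ_pow_mul_exp_le j · x) (summable_powExpSum j hx).hasSum
    ((hasSum_choose_mul_exp j hx).mul_left _)

theorem le_powExpSum (j : ℕ) {x : ℝ} (hx : 0 < x) :
    exp (-(j * x)) * (j.factorial * (exp (-x) / (1 - exp (-x)) ^ (j + 1))) ≤ powExpSum j x := by
  refine hasSum_le_inj (· + j) (add_left_injective j) (fun k _ => by positivity) (fun k => ?_)
    (((hasSum_choose_mul_exp j hx).mul_left _).mul_left _) (summable_powExpSum j hx).hasSum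
  have hexp : exp (-(((k + j : ℕ) + 1 : ℝ) * x)) =
      exp (-(j * x)) * exp (-(((k : ℝ) + 1) * x)) := by
    rw [← Real.exp_add]
    push_cast
    ring_nf
  rw [hexp, ← mul_assoc (j.factorial : ℝ), mul_left_comm (exp (-(j * x)))]
  exact mul_le_mul_of_nonneg_right (factorial_mul_choose_le_add_pow j k) (by positivity)

theorem div_one_sub_exp_neg_le {x : ℝ} (hx : 0 < x) : x / (1 - exp (-x)) ≤ 1 + x := by
  rw [div_le_iff₀ (sub_pos.mpr (exp_neg_lt_one hx))]
  have hinv : (1 + x) * exp (-x) ≤ 1 := by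
    rw [Real.exp_neg, mul_inv_le_iff₀ (exp_pos x), one_mul, add_comm]
    exact Real.add_one_le_exp x
  linarith

theorem pow_mul_powExpSum_le (j : ℕ) {x : ℝ} (hx : 0 < x) :
    x ^ (j + 1) * powExpSum j x ≤ j.factorial * ((j + 1).factorial * exp 1) := by
  have hpos := sub_pos.mpr (exp_neg_lt_one hx)
  calc x ^ (j + 1) * powExpSum j x
      ≤ x ^ (j + 1) * (j.factorial * (exp (-x) / (1 - exp (-x)) ^ (j + 1))) := by
        gcongr
        exact powExpSum_le j hx
    _ = j.factorial * ((x / (1 - exp (-x))) ^ (j + 1) * exp (-x)) := by rw [div_pow]; ring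
    _ ≤ j.factorial * ((1 + x) ^ (j + 1) * exp (-x)) := by
        gcongr
        exact div_one_sub_exp_neg_le hx
    _ = j.factorial * ((1 + x) ^ (j + 1) * exp (-(1 + x)) * exp 1) := by
        rw [mul_assoc _ (exp _) (exp 1), ← Real.exp_add]
        ring_nf
    _ ≤ j.factorial * ((j + 1).factorial * exp 1) := by
        gcongr
        exact pow_mul_exp_neg_le_factorial (j + 1) (by positivity)

theorem tendsto_div_one_sub_exp_neg :
    Tendsto (fun x : ℝ => x / (1 - exp (-x))) (𝓝[>] 0) (𝓝 1) := by
  have hderiv : HasDerivAt (fun x : ℝ => 1 - exp (-x)) 1 0 := by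
    simpa using (hasDerivAt_neg (0 : ℝ)).exp.const_sub 1
  have hslope := (hasDerivAt_iff_tendsto_slope_zero.mp hderiv).mono_left
    (nhdsWithin_mono 0 fun x (hx : x ∈ Set.Ioi 0) => ne_of_gt hx)
  simpa [mul_comm, div_eq_mul_inv] using hslope.inv₀ one_ne_zero

theorem tendsto_pow_mul_powExpSum (j : ℕ) :
    Tendsto (fun x => x ^ (j + 1) * powExpSum j x) (𝓝[>] 0) (𝓝 j.factorial) := by
  have hexp (c : ℝ) : Tendsto (fun x : ℝ => exp (-(c * x))) (𝓝[>] 0) (𝓝 1) := by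
    have h : Continuous fun x : ℝ => exp (-(c * x)) := by fun_prop
    simpa using (h.tendsto 0).mono_left nhdsWithin_le_nhds
  have hupper : Tendsto (fun x : ℝ =>
      j.factorial * ((x / (1 - exp (-x))) ^ (j + 1) * exp (-(1 * x)))) (𝓝[>] 0)
      (𝓝 j.factorial) := by
    simpa using ((tendsto_div_one_sub_exp_neg.pow (j + 1)).mul (hexp 1)).const_mul
      (j.factorial : ℝ)
  have hlower := (hexp j).mul hupper
  rw [one_mul] at hlower
  refine tendsto_of_tendsto_of_tendsto_of_le_of_le' hlower hupper ?_ ?_ <;>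
    filter_upwards [self_mem_nhdsWithin] with x (hx : 0 < x)
  · refine (mul_le_mul_of_nonneg_left (le_powExpSum j hx) (by positivity)).trans_eq' ?_
    rw [div_pow]
    ring_nf
  · refine (mul_le_mul_of_nonneg_left (powExpSum_le j hx) (by positivity)).trans_eq ?_
    rw [div_pow]
    ring_nf

theorem pow_mul_cumulant (j : ℕ) {t : ℝ} (ht : 0 < t) :
    t ^ (j + 1) * cumulant j t = ∑' m : ℕ, 1 / ((m : ℝ) + 1) ^ 2 *
      ((((m : ℝ) + 1) * t) ^ (j + 1) * powExpSum j (((m : ℝ) + 1) * t)) := by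
  unfold cumulant powExpSum
  rw [(summable_cumulant j ht).tsum_prod, ← tsum_mul_left]
  refine tsum_congr fun m => ?_
  simp only [← tsum_mul_left]
  refine tsum_congr fun k => ?_
  have hexp : freq (m, k) * t = ((k : ℝ) + 1) * (((m : ℝ) + 1) * t) := by
    unfold freq
    ring
  rw [boltzmannWeight, hexp, freq, mul_pow _ t, mul_pow _ ((k : ℝ) + 1)]
  field_simp
  ring

theorem tendsto_pow_mul_cumulant (j : ℕ) :
    Tendsto (fun t => t ^ (j + 1) * cumulant j t) (𝓝[>] 0) (𝓝 (π ^ 2 / 6 * j.factorial)) := by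
  have hzeta : ∑' m : ℕ, 1 / ((m : ℝ) + 1) ^ 2 * j.factorial = π ^ 2 / 6 * j.factorial := by
    have h := hasSum_zeta_two.tsum_eq
    rw [hasSum_zeta_two.summable.tsum_eq_zero_add] at h
    rw [tsum_mul_right]
    congr 1
    simpa using h
  rw [← hzeta]
  refine (tendsto_tsum_of_dominated_convergence (𝓕 := 𝓝[>] (0 : ℝ))
    (f := fun t (m : ℕ) => 1 / ((m : ℝ) + 1) ^ 2 *
      ((((m : ℝ) + 1) * t) ^ (j + 1) * powExpSum j (((m : ℝ) + 1) * t)))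
    (summable_one_div_succ_sq.mul_right (j.factorial * ((j + 1).factorial * exp 1)))
    (fun m => ((tendsto_pow_mul_powExpSum j).comp ?_).const_mul _) ?_).congr' ?_
  · refine tendsto_nhdsWithin_iff.mpr ⟨?_, ?_⟩
    · have h : Continuous fun t : ℝ => ((m : ℝ) + 1) * t := by fun_prop
      simpa using (h.tendsto 0).mono_left nhdsWithin_le_nhds
    · filter_upwards [self_mem_nhdsWithin] with t (ht : 0 < t)
      exact mul_pos (by positivity) ht
  · filter_upwards [self_mem_nhdsWithin] with t (ht : 0 < t) m
    have hnonneg := powExpSum_nonneg j (((m : ℝ) + 1) * t)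
    rw [Real.norm_of_nonneg (by positivity)]
    exact mul_le_mul_of_nonneg_left (pow_mul_powExpSum_le j (by positivity)) (by positivity)
  · filter_upwards [self_mem_nhdsWithin] with t ht
    exact (pow_mul_cumulant j ht).symm

end CumulantAsymptotics

/-! ### The characteristic function of the size of a random partition -/

section LogPartitionFunction

open Complex (I)

/-- The logarithm of the partition generating function `∏ k, (1 - q ^ (k + 1))⁻¹` at
`q = exp (-s)`, as a sum over the terms of the Taylor series of all the factors. -/
noncomputable def logPartitionFun (s : ℂ) : ℂ :=
  ∑' x : ℕ × ℕ, Complex.exp (-(freq x * s)) / ((x.1 : ℂ) + 1)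

theorem norm_exp_neg_freq_mul_div (s : ℂ) (x : ℕ × ℕ) :
    ‖Complex.exp (-(freq x * s)) / ((x.1 : ℂ) + 1)‖ = boltzmannWeight s.re x := by
  rw [norm_div, Complex.norm_exp, ← Nat.cast_add_one, Complex.norm_natCast, boltzmannWeight]
  simp

theorem hasSum_logPartitionFun {s : ℂ} (hs : 0 < s.re) :
    HasSum (fun x : ℕ × ℕ => Complex.exp (-(freq x * s)) / ((x.1 : ℂ) + 1))
      (logPartitionFun s) := by
  refine (Summable.of_norm ?_).hasSum
  simpa only [norm_exp_neg_freq_mul_div] using summable_boltzmannWeight hs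

theorem continuous_logPartitionFun_vertical {t : ℝ} (ht : 0 < t) :
    Continuous fun θ : ℝ => logPartitionFun (t - θ * I) := by
  refine continuous_tsum (fun x => by fun_prop) (summable_boltzmannWeight ht) fun x θ => ?_
  rw [norm_exp_neg_freq_mul_div]
  simp

theorem norm_exp_neg_lt_one {s : ℂ} (hs : 0 < s.re) : ‖Complex.exp (-s)‖ < 1 := by
  rw [Complex.norm_exp, Complex.neg_re]
  exact exp_neg_lt_one hs

theorem hasSum_neg_log_one_sub_exp_pow {s : ℂ} (hs : 0 < s.re) :
    HasSum (fun k : ℕ => -Complex.log (1 - Complex.exp (-s) ^ (k + 1))) (logPartitionFun s) := by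
  refine ((Equiv.prodComm ℕ ℕ).hasSum_iff.mpr (hasSum_logPartitionFun hs)).prod_fiberwise
    fun k => ?_
  have hq : ‖Complex.exp (-s) ^ (k + 1)‖ < 1 := by
    rw [norm_pow]
    exact pow_lt_one₀ (norm_nonneg _) (norm_exp_neg_lt_one hs) k.succ_ne_zero
  refine (Complex.hasSum_taylorSeries_neg_log' hq).congr_fun fun m => ?_
  simp only [Function.comp_apply, Equiv.prodComm_apply, Prod.swap, freq]
  rw [← Complex.exp_nat_mul, ← Complex.exp_nat_mul]
  push_cast
  ring_nf

theorem exp_logPartitionFun {s : ℂ} (hs : 0 < s.re) :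
    Complex.exp (logPartitionFun s) = ∏' k : ℕ, (1 - Complex.exp (-s) ^ (k + 1))⁻¹ := by
  rw [← (hasSum_neg_log_one_sub_exp_pow hs).cexp.tprod_eq]
  refine tprod_congr fun k => ?_
  have hne : 1 - Complex.exp (-s) ^ (k + 1) ≠ 0 := fun h => by
    have hlt := pow_lt_one₀ (norm_nonneg _) (norm_exp_neg_lt_one hs) k.succ_ne_zero
    rw [← norm_pow, ← sub_eq_zero.mp h, norm_one] at hlt
    exact lt_irrefl _ hlt
  rw [Function.comp_apply, Complex.exp_neg, Complex.exp_log hne]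

theorem summable_p_mul_exp {t : ℝ} (ht : 0 < t) : Summable fun n : ℕ => p n * exp (-(n * t)) := by
  refine (summable_card_partition_mul_pow (exp_pos (-t)).le (exp_neg_lt_one ht)).congr fun n => ?_
  rw [p, ← Real.exp_nat_mul, mul_neg]

theorem hasSum_p_mul_exp {t : ℝ} (ht : 0 < t) (θ : ℝ) :
    HasSum (fun n : ℕ => ((p n * exp (-(n * t)) : ℝ) : ℂ) * Complex.exp (n * θ * I))
      (Complex.exp (logPartitionFun (t - θ * I))) := by
  have hre : 0 < ((t : ℂ) - θ * I).re := by simpa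
  rw [exp_logPartitionFun hre]
  refine (hasSum_card_partition_mul_pow (norm_exp_neg_lt_one hre)).congr_fun fun n => ?_
  rw [p, ← Complex.exp_nat_mul, Complex.ofReal_mul, Complex.ofReal_exp, mul_assoc,
    ← Complex.exp_add]
  push_cast
  ring_nf

theorem integral_exp_int_mul_I (d : ℤ) :
    ∫ θ in (-π)..π, Complex.exp (d * θ * I) = if d = 0 then (2 * π : ℂ) else 0 := by
  split_ifs with hd
  · simp [hd, two_mul]
  · have hc : (d : ℂ) * I ≠ 0 := mul_ne_zero (Int.cast_ne_zero.mpr hd) Complex.I_ne_zero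
    simp only [mul_right_comm _ _ I]
    rw [integral_exp_mul_complex hc, sub_eq_zero.mpr, zero_div]
    rw [Complex.exp_eq_exp_iff_exists_int]
    refine ⟨d, ?_⟩
    push_cast
    ring

theorem integral_mul_exp_neg_of_hasSum {a : ℕ → ℂ} {f : ℝ → ℂ} (ha : Summable fun n => ‖a n‖)
    (hf : ∀ θ : ℝ, HasSum (fun n : ℕ => a n * Complex.exp (n * θ * I)) (f θ)) (l : ℕ) :
    ∫ θ in (-π)..π, f θ * Complex.exp (-(l * θ * I)) = 2 * π * a l := by
  have hterm (n : ℕ) (θ : ℝ) : a n * Complex.exp (n * θ * I) * Complex.exp (-(l * θ * I)) =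
      a n * Complex.exp (((n - l : ℤ) : ℂ) * θ * I) := by
    rw [mul_assoc, ← Complex.exp_add]
    push_cast
    ring_nf
  have hcont (n : ℕ) :
      Continuous fun θ : ℝ => a n * Complex.exp (((n - l : ℤ) : ℂ) * θ * I) := by
    fun_prop
  have hint := intervalIntegral.hasSum_integral_of_dominated_convergence
    (μ := MeasureTheory.volume) (a := -π) (b := π)
    (F := fun n (θ : ℝ) => a n * Complex.exp (((n - l : ℤ) : ℂ) * θ * I))
    (f := fun θ => f θ * Complex.exp (-(l * θ * I))) (fun n _ => ‖a n‖)
    (fun n => (hcont n).aestronglyMeasurable)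
    (fun n => .of_forall fun θ _ => by rw [norm_mul, Complex.norm_exp]; simp)
    (.of_forall fun θ _ => ha) (by simp)
    (.of_forall fun θ _ => ((hf θ).mul_right _).congr_fun fun n => (hterm n θ).symm)
  simp only [intervalIntegral.integral_const_mul, integral_exp_int_mul_I, sub_eq_zero,
    Nat.cast_inj] at hint
  rw [hint.unique (hasSum_single l fun n hn => by rw [if_neg hn, mul_zero]), if_pos rfl, mul_comm]

theorem integral_exp_logPartitionFun {t : ℝ} (ht : 0 < t) (l : ℕ) :
    ∫ θ in (-π)..π, Complex.exp (logPartitionFun (t - θ * I)) * Complex.exp (-(l * θ * I)) =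
      2 * π * (p l * exp (-(l * t)) : ℝ) :=
  integral_mul_exp_neg_of_hasSum
    (by simpa only [Complex.norm_real] using (summable_p_mul_exp ht).norm) (hasSum_p_mul_exp ht) l

end LogPartitionFunction

section CharacteristicFunction

open Complex (I)

/-- The logarithm of the characteristic function at `θ`, centred at the mean, of the size of a
random partition `λ` of weight proportional to `exp (-t * |λ|)`. -/
noncomputable def logCharFun (t θ : ℝ) : ℂ :=
  logPartitionFun (t - θ * I) - logPartitionFun t - θ * cumulant 1 t * I

theorem continuous_logCharFun {t : ℝ} (ht : 0 < t) : Continuous (logCharFun t) := by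
  have := continuous_logPartitionFun_vertical ht
  unfold logCharFun
  fun_prop

theorem hasSum_logCharFun {t : ℝ} (ht : 0 < t) (θ : ℝ) :
    HasSum (fun x => (boltzmannWeight t x : ℂ) *
      (Complex.exp ((freq x * θ : ℝ) * I) - 1 - (freq x * θ : ℝ) * I)) (logCharFun t θ) := by
  have hline := hasSum_logPartitionFun (s := t - θ * I) (by simpa)
  have hpoint := hasSum_logPartitionFun (s := (t : ℂ)) (by simpa)
  have hmean := (Complex.hasSum_ofReal.mpr (summable_cumulant 1 ht).hasSum).mul_left ((θ : ℂ) * I)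
  rw [logCharFun, mul_right_comm]
  refine ((hline.sub hpoint).sub hmean).congr_fun fun x => ?_
  have hexp : Complex.exp (-(freq x * (t - θ * I))) =
      Complex.exp (-(freq x * t)) * Complex.exp (freq x * θ * I) := by
    rw [← Complex.exp_add]
    ring_nf
  rw [hexp, boltzmannWeight]
  push_cast
  ring

theorem norm_exp_mul_I_sub_taylor_le (y : ℝ) :
    ‖Complex.exp (y * I) - 1 - y * I + (y ^ 2 / 2 : ℝ)‖ ≤ 4 * |y| ^ 3 := by
  have hy : ‖(y : ℂ) * I‖ = |y| := by simp
  rcases le_total |y| 1 with h | h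
  · have hbound := Complex.exp_bound (x := y * I) (by rwa [hy]) (n := 3) (by norm_num)
    have htaylor : ∑ m ∈ Finset.range 3, ((y : ℂ) * I) ^ m / (m.factorial : ℂ) =
        1 + y * I - (y ^ 2 / 2 : ℝ) := by
      simp [Finset.sum_range_succ, mul_pow]
      ring
    rw [hy, htaylor, ← sub_add, ← sub_sub] at hbound
    refine hbound.trans ?_
    rw [mul_comm]
    gcongr
    norm_num [Nat.factorial]
  · have hquad : ‖((y ^ 2 / 2 : ℝ) : ℂ)‖ = |y| ^ 2 / 2 := by
      rw [Complex.norm_real, Real.norm_of_nonneg (by positivity), sq_abs]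
    calc ‖Complex.exp (y * I) - 1 - y * I + (y ^ 2 / 2 : ℝ)‖
        ≤ ‖Complex.exp (y * I)‖ + ‖(1 : ℂ)‖ + ‖(y : ℂ) * I‖ + ‖((y ^ 2 / 2 : ℝ) : ℂ)‖ := by
          refine (norm_add_le _ _).trans ?_
          gcongr
          refine (norm_sub_le _ _).trans ?_
          gcongr
          exact norm_sub_le _ _
      _ = 1 + 1 + |y| + |y| ^ 2 / 2 := by
          rw [Complex.norm_exp_ofReal_mul_I, hquad, hy, norm_one]
      _ ≤ 4 * |y| ^ 3 := by
          have hone : 1 ≤ |y| ^ 3 := one_le_pow₀ h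
          have hlin : |y| ≤ |y| ^ 3 := le_self_pow₀ h (by norm_num)
          have hsq : |y| ^ 2 ≤ |y| ^ 3 := pow_le_pow_right₀ h (by norm_num)
          linarith

theorem norm_logCharFun_add_le {t : ℝ} (ht : 0 < t) (θ : ℝ) :
    ‖logCharFun t θ + (cumulant 2 t * (θ ^ 2 / 2) : ℝ)‖ ≤ cumulant 3 t * (4 * |θ| ^ 3) := by
  have hquad := Complex.hasSum_ofReal.mpr ((summable_cumulant 2 ht).hasSum.mul_right (θ ^ 2 / 2))
  have hcubic := (summable_cumulant 3 ht).hasSum.mul_right (4 * |θ| ^ 3)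
  rw [cumulant, ← ((hasSum_logCharFun ht θ).add hquad).tsum_eq]
  refine tsum_of_norm_bounded hcubic fun x => ?_
  have hweight := (boltzmannWeight_pos t x).le
  calc _ = ‖(boltzmannWeight t x : ℂ) * (Complex.exp ((freq x * θ : ℝ) * I) - 1 -
          (freq x * θ : ℝ) * I + ((freq x * θ) ^ 2 / 2 : ℝ))‖ := by
        push_cast
        ring_nf
    _ ≤ boltzmannWeight t x * (4 * |freq x * θ| ^ 3) := by
        rw [norm_mul, Complex.norm_real, Real.norm_of_nonneg hweight]
        gcongr
        exact norm_exp_mul_I_sub_taylor_le _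
    _ = freq x ^ 3 * boltzmannWeight t x * (4 * |θ| ^ 3) := by
        rw [abs_mul, abs_of_pos (freq_pos x)]
        ring

theorem hasSum_re_logCharFun {t : ℝ} (ht : 0 < t) (θ : ℝ) :
    HasSum (fun x => boltzmannWeight t x * (cos (freq x * θ) - 1)) (logCharFun t θ).re := by
  refine (Complex.hasSum_re (hasSum_logCharFun ht θ)).congr_fun fun x => ?_
  rw [Complex.re_ofReal_mul, Complex.sub_re, Complex.sub_re, Complex.exp_ofReal_mul_I_re,
    Complex.re_ofReal_mul]
  simp

theorem hasSum_pow_mul_cos {r : ℝ} (hr : |r| < 1) (θ : ℝ) :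
    HasSum (fun k : ℕ => r ^ k * cos (k * θ))
      ((1 - r * cos θ) / ((1 - r) ^ 2 + 2 * r * (1 - cos θ))) := by
  set z : ℂ := r * Complex.exp (θ * I) with hz
  have hnorm : ‖z‖ < 1 := by
    rwa [hz, norm_mul, Complex.norm_exp_ofReal_mul_I, mul_one, Complex.norm_real]
  have hre : z.re = r * cos θ := by rw [hz, Complex.re_ofReal_mul, Complex.exp_ofReal_mul_I_re]
  have him : z.im = r * sin θ := by rw [hz, Complex.im_ofReal_mul, Complex.exp_ofReal_mul_I_im]
  have hnormSq : Complex.normSq (1 - z) = (1 - r) ^ 2 + 2 * r * (1 - cos θ) := by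
    rw [Complex.normSq_apply, Complex.sub_re, Complex.sub_im, hre, him, Complex.one_re,
      Complex.one_im]
    linear_combination r ^ 2 * sin_sq_add_cos_sq θ
  have hsum := Complex.hasSum_re (hasSum_geometric_of_norm_lt_one hnorm)
  rw [Complex.inv_re, hnormSq, Complex.sub_re, Complex.one_re, hre] at hsum
  refine hsum.congr_fun fun k => ?_
  rw [hz, mul_pow, ← Complex.exp_nat_mul, ← mul_assoc, ← Complex.ofReal_pow,
    Complex.re_ofReal_mul, ← Complex.ofReal_natCast, ← Complex.ofReal_mul,
    Complex.exp_ofReal_mul_I_re]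

theorem hasSum_pow_mul_one_sub_cos {r : ℝ} (h0 : 0 ≤ r) (h1 : r < 1) (θ : ℝ) :
    HasSum (fun k : ℕ => r ^ k * (1 - cos (k * θ)))
      (r * (1 + r) * (1 - cos θ) / ((1 - r) * ((1 - r) ^ 2 + 2 * r * (1 - cos θ)))) := by
  have hr : 0 < 1 - r := sub_pos.mpr h1
  have hcos : 0 ≤ 1 - cos θ := sub_nonneg.mpr (cos_le_one θ)
  have hdenom : (1 - r) ^ 2 + 2 * r * (1 - cos θ) ≠ 0 := by positivity
  have hsum := (hasSum_geometric_of_lt_one h0 h1).sub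
    (hasSum_pow_mul_cos (by rwa [abs_of_nonneg h0]) θ)
  have hval : (1 - r)⁻¹ - (1 - r * cos θ) / ((1 - r) ^ 2 + 2 * r * (1 - cos θ)) =
      r * (1 + r) * (1 - cos θ) / ((1 - r) * ((1 - r) ^ 2 + 2 * r * (1 - cos θ))) := by
    field_simp [hdenom]
    ring
  rw [← hval]
  exact hsum.congr_fun fun k => mul_one_sub _ _

theorem re_logCharFun_le {t : ℝ} (ht : 0 < t) (θ : ℝ) :
    (logCharFun t θ).re ≤ -(exp (-t) * (1 + exp (-t)) * (1 - cos θ) /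
      ((1 - exp (-t)) * ((1 - exp (-t)) ^ 2 + 2 * exp (-t) * (1 - cos θ)))) := by
  have hsum := (hasSum_nat_add_iff' 1).mpr
    (hasSum_pow_mul_one_sub_cos (exp_pos _).le (exp_neg_lt_one ht) θ)
  simp only [Finset.sum_range_one, Nat.cast_zero, zero_mul, cos_zero, sub_self, mul_zero,
    sub_zero] at hsum
  have hre := (hasSum_re_logCharFun ht θ).neg
  refine le_neg.mpr (hasSum_le_inj (fun k : ℕ => (0, k)) (Prod.mk_right_injective 0)
    (fun x _ => ?_) (fun k => le_of_eq ?_) hsum hre)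
  · rw [← mul_neg, neg_sub]
    exact mul_nonneg (boltzmannWeight_pos t x).le (sub_nonneg.mpr (cos_le_one _))
  · rw [boltzmannWeight, freq, ← Real.exp_nat_mul]
    push_cast
    ring_nf

theorem re_logCharFun_le_of_le_half {t θ : ℝ} (ht : 0 < t) (ht2 : t ≤ 1 / 2) (hθ : |θ| ≤ π) :
    (logCharFun t θ).re ≤ -(θ ^ 2 / (t * (π ^ 2 * t ^ 2 + 4 * θ ^ 2))) := by
  refine (re_logCharFun_le ht θ).trans (neg_le_neg ?_)
  have hcos := Real.cos_le_one_sub_mul_cos_sq hθ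
  set c := 1 - cos θ with hc
  set r := exp (-t)
  have hr1 : 0 < 1 - r := sub_pos.mpr (exp_neg_lt_one ht)
  have hrt : 1 - t ≤ r := by linarith [Real.add_one_le_exp (-t)]
  rcases eq_or_ne θ 0 with rfl | hθ0
  · simp [hc]
  have hcθ : 2 / π ^ 2 * θ ^ 2 ≤ c := by linarith
  have hc0 : 0 < c := lt_of_lt_of_le (by positivity) hcθ
  rw [div_mul_eq_mul_div, div_le_iff₀ (by positivity)] at hcθ
  calc θ ^ 2 / (t * (π ^ 2 * t ^ 2 + 4 * θ ^ 2)) ≤ c / 2 / (t * (t ^ 2 + 2 * c)) := by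
        rw [div_le_div_iff₀ (by positivity) (by positivity)]
        have hscaled : t ^ 3 * (2 * θ ^ 2) ≤ t ^ 3 * (c * π ^ 2) := by gcongr
        linarith
    _ ≤ r * (1 + r) * c / ((1 - r) * ((1 - r) ^ 2 + 2 * r * c)) := by
        have hnum : 1 / 2 ≤ r * (1 + r) := by nlinarith
        gcongr
        · linarith [mul_le_mul_of_nonneg_right hnum hc0.le]
        · linarith
        · linarith
        · linarith

end CharacteristicFunction

/-! ### Laplace's method for the characteristic function -/

section Laplace

open MeasureTheory

/-- The width `t ^ (3 / 2)` of the peak of the characteristic function at the origin. -/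
noncomputable def saddleWidth (t : ℝ) : ℝ := t * √t

theorem saddleWidth_pos {t : ℝ} (ht : 0 < t) : 0 < saddleWidth t :=
  mul_pos ht (Real.sqrt_pos.mpr ht)

theorem saddleWidth_sq {t : ℝ} (ht : 0 ≤ t) : saddleWidth t ^ 2 = t ^ 3 := by
  rw [saddleWidth, mul_pow, Real.sq_sqrt ht]
  ring

theorem tendsto_saddleWidth : Tendsto saddleWidth (𝓝[>] 0) (𝓝[>] 0) := by
  refine tendsto_nhdsWithin_iff.mpr ⟨?_, ?_⟩
  · have h : Continuous saddleWidth := by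
      unfold saddleWidth
      fun_prop
    exact (h.tendsto' 0 0 (by simp [saddleWidth])).mono_left nhdsWithin_le_nhds
  · filter_upwards [self_mem_nhdsWithin] with t ht using saddleWidth_pos ht

theorem one_add_le_mul_one_add_div_pow_three {a t y : ℝ} (ha : 1 ≤ a) (ht : 0 < t) (hy : 0 ≤ y)
    (hyt : y * t ^ 3 ≤ a) : 1 + y ≤ 512 * a * (1 + y / (a + 4 * y * t)) ^ 3 := by
  have ha0 : 0 < a := one_pos.trans_le ha
  set s := y / (a + 4 * y * t) with hs
  have hs0 : 0 ≤ s := by positivity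
  have hys : y = s * (a + 4 * y * t) := (div_mul_cancel₀ y (by positivity)).symm
  rcases le_total (4 * y * t) a with h | h
  · have hone : 1 + s ≤ (1 + s) ^ 3 := le_self_pow₀ (by linarith) (by norm_num)
    calc 1 + y ≤ a + s * (a + a) := by
          rw [hys]
          gcongr
      _ ≤ 512 * a * (1 + s) := by nlinarith
      _ ≤ 512 * a * (1 + s) ^ 3 := by gcongr
  · have hts : 1 ≤ 8 * (s * t) := by
      rw [hs, div_mul_eq_mul_div, mul_div_assoc', le_div_iff₀ (by positivity)]
      linarith
    calc 1 + y ≤ a + y * (8 * (s * t)) ^ 3 :=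
          add_le_add ha (le_mul_of_one_le_right hy (one_le_pow₀ hts))
      _ = a + 512 * s ^ 3 * (y * t ^ 3) := by ring
      _ ≤ a + 512 * s ^ 3 * a := by gcongr
      _ ≤ 512 * a * (1 + s) ^ 3 := by
          nlinarith [mul_nonneg ha0.le hs0, mul_nonneg ha0.le (sq_nonneg s)]

theorem exists_norm_exp_logCharFun_le (n : ℕ) :
    ∃ C, ∀ t u : ℝ, 0 < t → t ≤ 1 / 2 → |u * saddleWidth t| ≤ π →
      ‖Complex.exp (logCharFun t (u * saddleWidth t))‖ ≤ C / (1 + u ^ 2) ^ n := by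
  refine ⟨(512 * π ^ 2) ^ n * ((3 * n).factorial * exp 1), fun t u ht ht2 hu => ?_⟩
  have hut : u ^ 2 * t ^ 3 ≤ π ^ 2 := by
    rw [← saddleWidth_sq ht.le, ← mul_pow, ← sq_abs]
    gcongr
  have hre := re_logCharFun_le_of_le_half ht ht2 hu
  have hscale : u ^ 2 * t ^ 3 / (t * (π ^ 2 * t ^ 2 + 4 * (u ^ 2 * t ^ 3))) =
      u ^ 2 / (π ^ 2 + 4 * u ^ 2 * t) := by
    field_simp
  rw [mul_pow, saddleWidth_sq ht.le, hscale] at hre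
  have hcube := one_add_le_mul_one_add_div_pow_three
    (one_le_pow₀ (one_le_two.trans two_le_pi)) ht (sq_nonneg u) hut
  set s := u ^ 2 / (π ^ 2 + 4 * u ^ 2 * t)
  have hs : 0 ≤ 1 + s := by positivity
  have hexp : exp (-s) = exp (-(1 + s)) * exp 1 := by
    rw [← Real.exp_add]
    ring_nf
  rw [Complex.norm_exp, le_div_iff₀ (by positivity)]
  calc exp (logCharFun t (u * saddleWidth t)).re * (1 + u ^ 2) ^ n
      ≤ exp (-s) * (512 * π ^ 2 * (1 + s) ^ 3) ^ n := by gcongr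
    _ = (512 * π ^ 2) ^ n * ((1 + s) ^ (3 * n) * exp (-(1 + s)) * exp 1) := by
        rw [hexp, mul_pow _ _ n, ← pow_mul]
        ring
    _ ≤ (512 * π ^ 2) ^ n * ((3 * n).factorial * exp 1) := by
        gcongr
        exact pow_mul_exp_neg_le_factorial _ hs

theorem tendsto_logCharFun (u : ℝ) :
    Tendsto (fun t => logCharFun t (u * saddleWidth t)) (𝓝[>] 0)
      (𝓝 ((-(π ^ 2 / 6) * u ^ 2 : ℝ) : ℂ)) := by
  have hsqrt : Tendsto (fun t : ℝ => √t) (𝓝[>] 0) (𝓝 0) :=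
    (Real.continuous_sqrt.tendsto' 0 0 Real.sqrt_zero).mono_left nhdsWithin_le_nhds
  have hcubic : Tendsto (fun t => 4 * |u| ^ 3 * (√t * (t ^ (3 + 1) * cumulant 3 t))) (𝓝[>] 0)
      (𝓝 0) := by
    simpa using (hsqrt.mul (tendsto_pow_mul_cumulant 3)).const_mul (4 * |u| ^ 3)
  have hquad : Tendsto (fun t => cumulant 2 t * ((u * saddleWidth t) ^ 2 / 2)) (𝓝[>] 0)
      (𝓝 (π ^ 2 / 6 * u ^ 2)) := by
    have hlim := (tendsto_pow_mul_cumulant 2).mul_const (u ^ 2 / 2)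
    rw [show π ^ 2 / 6 * Nat.factorial 2 * (u ^ 2 / 2) = π ^ 2 / 6 * u ^ 2 by
      norm_num [Nat.factorial]; ring] at hlim
    refine hlim.congr' ?_
    filter_upwards [self_mem_nhdsWithin] with t ht
    rw [mul_pow, saddleWidth_sq (le_of_lt ht)]
    ring
  have hrem : Tendsto (fun t => logCharFun t (u * saddleWidth t) +
      (cumulant 2 t * ((u * saddleWidth t) ^ 2 / 2) : ℝ)) (𝓝[>] 0) (𝓝 0) := by
    refine squeeze_zero_norm' ?_ hcubic
    filter_upwards [self_mem_nhdsWithin] with t ht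
    refine (norm_logCharFun_add_le ht _).trans_eq ?_
    rw [abs_mul, abs_of_pos (saddleWidth_pos ht), mul_pow, pow_succ (saddleWidth t),
      saddleWidth_sq (le_of_lt ht), saddleWidth]
    ring
  have hdiff := hrem.sub ((Complex.continuous_ofReal.tendsto _).comp hquad)
  simpa only [Function.comp_apply, add_sub_cancel_right, zero_sub, ← Complex.ofReal_neg,
    ← neg_mul] using hdiff

theorem tendsto_inv_smul_integral_of_dominated {ι E : Type*} [NormedAddCommGroup E]
    [NormedSpace ℝ E] {l : Filter ι} [l.IsCountablyGenerated] {w : ι → ℝ} {f : ι → ℝ → E}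
    {F : ℝ → E} {bound : ℝ → ℝ} {a : ℝ} (ha : 0 < a) (hw : Tendsto w l (𝓝[>] 0))
    (hf : ∀ᶠ i in l, Continuous (f i))
    (hbound : ∀ᶠ i in l, ∀ u, |u * w i| ≤ a → ‖f i (u * w i)‖ ≤ bound u)
    (hint : Integrable bound) (hlim : ∀ u, Tendsto (fun i => f i (u * w i)) l (𝓝 (F u))) :
    Tendsto (fun i => (w i)⁻¹ • ∫ θ in -a..a, f i θ) l (𝓝 (∫ u, F u)) := by
  have hpos : ∀ᶠ i in l, 0 < w i := hw.eventually self_mem_nhdsWithin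
  have hdom := tendsto_integral_filter_of_dominated_convergence (l := l) (μ := volume)
    (F := fun i => (Set.Ioc (-(a / w i)) (a / w i)).indicator fun u => f i (u * w i)) (f := F)
    (fun u => ‖bound u‖) ?_ ?_ hint.norm (.of_forall fun u => ?_)
  · refine hdom.congr' ?_
    filter_upwards [hpos] with i hi
    rw [integral_indicator measurableSet_Ioc, ← intervalIntegral.integral_of_le
      (neg_le_self (by positivity)), intervalIntegral.integral_comp_mul_right _ hi.ne', neg_mul,
      div_mul_cancel₀ _ hi.ne']
  · filter_upwards [hf] with i hi
    exact (hi.comp (continuous_mul_const _)).aestronglyMeasurable.indicator measurableSet_Ioc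
  · filter_upwards [hbound, hpos] with i hi hwi
    refine .of_forall fun u => ?_
    by_cases hu : u ∈ Set.Ioc (-(a / w i)) (a / w i)
    · rw [Set.indicator_of_mem hu]
      refine (hi u ?_).trans (le_abs_self _)
      rw [abs_mul, abs_of_pos hwi, ← le_div_iff₀ hwi]
      exact abs_le.mpr ⟨hu.1.le, hu.2⟩
    · rw [Set.indicator_of_notMem hu, norm_zero]
      exact norm_nonneg _
  · refine (hlim u).congr' ?_
    have hsmall : Tendsto (fun i => |u| * w i) l (𝓝 0) := by
      simpa using (tendsto_nhds_of_tendsto_nhdsWithin hw).const_mul |u|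
    filter_upwards [hpos, hsmall.eventually_lt_const ha] with i hi hlt
    rw [← lt_div_iff₀ hi, abs_lt] at hlt
    rw [Set.indicator_of_mem (Set.mem_Ioc.mpr ⟨hlt.1, hlt.2.le⟩)]

/-- The integral of a test function against the characteristic function, over a period. -/
noncomputable def saddleIntegral (t : ℝ) (g : ℝ → ℝ) : ℂ :=
  ∫ θ in (-π)..π, Complex.exp (logCharFun t θ) * g θ

theorem exists_integrable_bound_exp_logCharFun_mul (k : ℕ) {h : ℝ → ℝ} (hh : Continuous h) :
    ∃ bound : ℝ → ℝ, Integrable bound ∧ ∀ᶠ t in 𝓝[>] 0, ∀ u, |u * saddleWidth t| ≤ π →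
      ‖Complex.exp (logCharFun t (u * saddleWidth t)) * (u ^ k * h (u * saddleWidth t) : ℝ)‖ ≤
        bound u := by
  obtain ⟨C, hC⟩ := exists_norm_exp_logCharFun_le (k + 1)
  obtain ⟨M, hM⟩ := isCompact_Icc.exists_bound_of_continuousOn (s := Set.Icc (-π) π)
    hh.continuousOn
  refine ⟨fun u => C * M * (1 + u ^ 2)⁻¹, integrable_inv_one_add_sq.const_mul _, ?_⟩
  filter_upwards [self_mem_nhdsWithin,
    mem_nhdsWithin_of_mem_nhds (Iic_mem_nhds (half_pos one_pos))] with t (ht : 0 < t) ht2 u hu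
  have hpow : |u| ^ k ≤ (1 + u ^ 2) ^ k := by
    gcongr
    nlinarith [sq_nonneg (|u| - 1), sq_abs u]
  have hdecay := hC t u ht ht2 hu
  rw [norm_mul, Complex.norm_real, norm_mul, norm_pow, Real.norm_eq_abs u]
  calc _ ≤ C / (1 + u ^ 2) ^ (k + 1) * ((1 + u ^ 2) ^ k * M) := by
        gcongr
        · exact (norm_nonneg _).trans hdecay
        · exact hM _ (abs_le.mp hu)
    _ = C * M * (1 + u ^ 2)⁻¹ := by
        rw [pow_succ]
        field_simp

theorem tendsto_exp_logCharFun_mul (k : ℕ) {h : ℝ → ℝ} (hh : Continuous h) (u : ℝ) :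
    Tendsto (fun t => Complex.exp (logCharFun t (u * saddleWidth t)) *
      (u ^ k * h (u * saddleWidth t) : ℝ)) (𝓝[>] 0)
      (𝓝 ((u ^ k * exp (-(π ^ 2 / 6) * u ^ 2) * h 0 : ℝ) : ℂ)) := by
  have hpeak := (Complex.continuous_exp.tendsto _).comp (tendsto_logCharFun u)
  have hscale : Tendsto (fun t => u * saddleWidth t) (𝓝[>] 0) (𝓝 0) := by
    simpa using (tendsto_nhds_of_tendsto_nhdsWithin tendsto_saddleWidth).const_mul u
  have htest := (Complex.continuous_ofReal.tendsto _).comp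
    (((hh.tendsto 0).comp hscale).const_mul (u ^ k))
  have hprod := hpeak.mul htest
  rwa [← Complex.ofReal_exp, ← Complex.ofReal_mul, ← mul_assoc, mul_comm (exp _)] at hprod

theorem tendsto_saddleIntegral_pow_mul (k : ℕ) {h : ℝ → ℝ} (hh : Continuous h) :
    Tendsto (fun t => saddleIntegral t (fun θ => θ ^ k * h θ) / saddleWidth t ^ (k + 1)) (𝓝[>] 0)
      (𝓝 (((∫ u, u ^ k * exp (-(π ^ 2 / 6) * u ^ 2)) * h 0 : ℝ) : ℂ)) := by
  obtain ⟨bound, hint, hbound⟩ := exists_integrable_bound_exp_logCharFun_mul k hh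
  have hrescale {t : ℝ} (ht : 0 < t) (u : ℝ) : u * saddleWidth t / saddleWidth t = u :=
    mul_div_cancel_right₀ u (saddleWidth_pos ht).ne'
  have hlaplace := tendsto_inv_smul_integral_of_dominated (l := 𝓝[>] (0 : ℝ)) pi_pos
    tendsto_saddleWidth (bound := bound)
    (f := fun t θ => Complex.exp (logCharFun t θ) * ((θ / saddleWidth t) ^ k * h θ : ℝ))
    ?_ ?_ hint fun u => (tendsto_exp_logCharFun_mul k hh u).congr' ?_
  · rw [integral_complex_ofReal, integral_mul_const] at hlaplace
    refine hlaplace.congr fun t => ?_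
    rw [saddleIntegral, Complex.real_smul, ← intervalIntegral.integral_const_mul,
      ← intervalIntegral.integral_div]
    congr 1
    ext θ
    push_cast
    rw [div_pow, pow_succ]
    ring
  · filter_upwards [self_mem_nhdsWithin] with t ht
    have := continuous_logCharFun ht
    fun_prop
  · filter_upwards [self_mem_nhdsWithin, hbound] with t ht hb
    simpa only [hrescale ht] using hb
  · filter_upwards [self_mem_nhdsWithin] with t ht
    rw [hrescale ht]

theorem integral_mul_exp_neg_mul_sq (b : ℝ) : ∫ u, u * exp (-b * u ^ 2) = 0 := by
  have h := integral_neg_eq_self (fun u : ℝ => u * exp (-b * u ^ 2)) volume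
  simp only [neg_sq, neg_mul _ (exp _), integral_neg] at h
  linarith

theorem integral_sq_mul_exp_neg_mul_sq {b : ℝ} (hb : 0 < b) :
    ∫ u, u ^ 2 * exp (-b * u ^ 2) = √(π / b) / (2 * b) := by
  have hi0 : Integrable fun u : ℝ => exp (-b * u ^ 2) := integrable_exp_neg_mul_sq hb
  have hi2 : Integrable fun u : ℝ => u ^ 2 * exp (-b * u ^ 2) := by
    simpa using integrable_rpow_mul_exp_neg_mul_sq hb (s := 2) (by norm_num)
  have hderiv (u : ℝ) : HasDerivAt (fun u : ℝ => u * exp (-b * u ^ 2))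
      (exp (-b * u ^ 2) - 2 * b * (u ^ 2 * exp (-b * u ^ 2))) u := by
    refine ((hasDerivAt_id u).mul ((hasDerivAt_pow 2 u).const_mul (-b)).exp).congr_deriv ?_
    simp
    ring
  have h := integral_eq_zero_of_hasDerivAt_of_integrable hderiv
    (hi0.sub (hi2.const_mul (2 * b))) (integrable_mul_exp_neg_mul_sq hb)
  rw [integral_sub hi0 (hi2.const_mul (2 * b)), integral_const_mul, integral_gaussian] at h
  rw [eq_div_iff (by positivity)]
  linarith

theorem tendsto_saddleIntegral_one :
    Tendsto (fun t => saddleIntegral t (fun _ => 1) / saddleWidth t) (𝓝[>] 0)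
      (𝓝 (√(π / (π ^ 2 / 6)) : ℝ)) := by
  simpa only [pow_zero, one_mul, mul_one, zero_add, pow_one, integral_gaussian] using
    tendsto_saddleIntegral_pow_mul 0 (continuous_const (y := (1 : ℝ)))

theorem tendsto_saddleIntegral_sin :
    Tendsto (fun t => saddleIntegral t sin / saddleWidth t ^ 2) (𝓝[>] 0) (𝓝 0) := by
  have h := tendsto_saddleIntegral_pow_mul 1 continuous_sinc
  have hsin : (fun θ => θ ^ 1 * sinc θ) = sin := by
    ext θ
    rcases eq_or_ne θ 0 with rfl | hθ
    · simp
    · rw [sinc_of_ne_zero hθ, pow_one, mul_div_cancel₀ _ hθ]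
  simp only [hsin] at h
  simpa only [pow_one, integral_mul_exp_neg_mul_sq, zero_mul, Complex.ofReal_zero] using h

theorem one_sub_cos_eq_sq_mul_sinc_sq (θ : ℝ) : 1 - cos θ = θ ^ 2 * (sinc (θ / 2) ^ 2 / 2) := by
  rcases eq_or_ne θ 0 with rfl | hθ
  · simp
  · rw [sinc_of_ne_zero (by positivity), show cos θ = cos (2 * (θ / 2)) by ring_nf, cos_two_mul,
      cos_sq']
    field_simp
    ring

theorem tendsto_saddleIntegral_one_sub_cos :
    Tendsto (fun t => saddleIntegral t (fun θ => 1 - cos θ) / saddleWidth t ^ 3) (𝓝[>] 0)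
      (𝓝 (√(π / (π ^ 2 / 6)) * (3 / (2 * π ^ 2)) : ℝ)) := by
  have h := tendsto_saddleIntegral_pow_mul 2 (h := fun θ => sinc (θ / 2) ^ 2 / 2)
    (by have := continuous_sinc; fun_prop)
  simp only [← one_sub_cos_eq_sq_mul_sinc_sq] at h
  convert h using 3
  rw [integral_sq_mul_exp_neg_mul_sq (by positivity), zero_div, sinc_zero]
  field_simp
  norm_num

end Laplace

/-! ### The second difference -/

section SecondDifference

open Complex (I)

/-- The saddle point expression for `p (N + 1) * p (N - 1) / p N ^ 2`, where `N = cumulant 1 t`. -/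
noncomputable def saddleRatio (t : ℝ) : ℂ :=
  (saddleIntegral t cos ^ 2 + saddleIntegral t sin ^ 2) / saddleIntegral t (fun _ => 1) ^ 2

theorem p_pos (n : ℕ) : 0 < p n :=
  Nat.cast_pos.mpr Fintype.card_pos

theorem p_mul_exp_eq_saddleIntegral {t : ℝ} (ht : 0 < t) (l : ℕ) :
    2 * π * ((p l * exp (-(l * t)) : ℝ) : ℂ) = Complex.exp (logPartitionFun t) *
      (saddleIntegral t (fun θ => cos ((cumulant 1 t - l) * θ)) +
        saddleIntegral t (fun θ => sin ((cumulant 1 t - l) * θ)) * I) := by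
  have hcont := continuous_logCharFun ht
  rw [← integral_exp_logPartitionFun ht, saddleIntegral, saddleIntegral,
    ← intervalIntegral.integral_mul_const, ← intervalIntegral.integral_add
      (Continuous.intervalIntegrable (by fun_prop) _ _)
      (Continuous.intervalIntegrable (by fun_prop) _ _),
    ← intervalIntegral.integral_const_mul]
  congr 1
  ext θ
  rw [mul_assoc (Complex.exp (logCharFun t θ)), ← mul_add, Complex.ofReal_cos,
    Complex.ofReal_sin, ← Complex.exp_mul_I, ← Complex.exp_add, ← Complex.exp_add,
    ← Complex.exp_add, logCharFun]
  push_cast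
  ring_nf

theorem saddleIntegral_zero (t : ℝ) : saddleIntegral t (fun _ => 0) = 0 := by
  simp [saddleIntegral]

theorem saddleIntegral_neg (t : ℝ) (g : ℝ → ℝ) :
    saddleIntegral t (fun θ => -g θ) = -saddleIntegral t g := by
  simp [saddleIntegral]

theorem saddleRatio_eq_mul_exp {t : ℝ} (ht : 0 < t) {N : ℕ} (hN : cumulant 1 t = (N + 1 : ℕ)) :
    saddleRatio t = ((p (N + 2) * exp (-((N + 2 : ℕ) * t)) * (p N * exp (-(N * t))) /
      (p (N + 1) * exp (-((N + 1 : ℕ) * t))) ^ 2 : ℝ) : ℂ) := by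
  have hprev := p_mul_exp_eq_saddleIntegral ht N
  have hmid := p_mul_exp_eq_saddleIntegral ht (N + 1)
  have hnext := p_mul_exp_eq_saddleIntegral ht (N + 2)
  rw [hN, show ((N + 1 : ℕ) - N : ℝ) = 1 by push_cast; ring] at hprev
  rw [hN, sub_self] at hmid
  rw [hN, show ((N + 1 : ℕ) - (N + 2 : ℕ) : ℝ) = -1 by push_cast; ring] at hnext
  simp only [one_mul] at hprev
  simp only [zero_mul, cos_zero, sin_zero, saddleIntegral_zero, add_zero] at hmid
  simp only [neg_one_mul, cos_neg, sin_neg, saddleIntegral_neg] at hnext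
  set Z := Complex.exp (logPartitionFun t)
  have hZ : Z ≠ 0 := Complex.exp_ne_zero _
  have hpi : (2 * π : ℂ) ≠ 0 := mul_ne_zero two_ne_zero (Complex.ofReal_ne_zero.mpr pi_ne_zero)
  calc saddleRatio t
      = Z ^ 2 * (saddleIntegral t cos ^ 2 + saddleIntegral t sin ^ 2) /
          (Z ^ 2 * saddleIntegral t (fun _ => 1) ^ 2) :=
        (mul_div_mul_left _ _ (pow_ne_zero 2 hZ)).symm
    _ = Z * (saddleIntegral t cos + -saddleIntegral t sin * I) *
          (Z * (saddleIntegral t cos + saddleIntegral t sin * I)) /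
          (Z * saddleIntegral t (fun _ => 1)) ^ 2 := by
        rw [mul_pow]
        congr 1
        linear_combination Z ^ 2 * saddleIntegral t sin ^ 2 * Complex.I_sq
    _ = _ := by
        rw [← hprev, ← hmid, ← hnext, mul_mul_mul_comm, ← sq, mul_pow (2 * π : ℂ),
          mul_div_mul_left _ _ (pow_ne_zero 2 hpi)]
        norm_cast

theorem saddleRatio_eq {t : ℝ} (ht : 0 < t) {N : ℕ} (hN : cumulant 1 t = (N + 1 : ℕ)) :
    saddleRatio t = ((p (N + 2) * p N / p (N + 1) ^ 2 : ℝ) : ℂ) := by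
  have hexp : exp (-((N + 2 : ℕ) * t)) * exp (-(N * t)) = exp (-((N + 1 : ℕ) * t)) ^ 2 := by
    rw [← Real.exp_add, ← Real.exp_nat_mul]
    push_cast
    ring_nf
  rw [saddleRatio_eq_mul_exp ht hN, mul_mul_mul_comm, hexp, mul_pow,
    mul_div_mul_right _ _ (pow_ne_zero 2 (exp_ne_zero _))]

theorem saddleIntegral_cos {t : ℝ} (ht : 0 < t) :
    saddleIntegral t cos =
      saddleIntegral t (fun _ => 1) - saddleIntegral t (fun θ => 1 - cos θ) := by
  have hcont := continuous_logCharFun ht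
  rw [saddleIntegral, saddleIntegral, saddleIntegral, ← intervalIntegral.integral_sub
    (Continuous.intervalIntegrable (by fun_prop) _ _)
    (Continuous.intervalIntegrable (by fun_prop) _ _)]
  congr 1
  ext θ
  push_cast
  ring

theorem tendsto_saddleRatio :
    Tendsto (fun t : ℝ => (saddleRatio t - 1) / (t ^ 3 : ℝ)) (𝓝[>] 0)
      (𝓝 ((-(3 / π ^ 2) : ℝ) : ℂ)) := by
  set G : ℝ := √(π / (π ^ 2 / 6)) with hG
  have hG0 : (G : ℂ) ≠ 0 := Complex.ofReal_ne_zero.mpr (by positivity)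
  have hone := tendsto_saddleIntegral_one
  have hsin := tendsto_saddleIntegral_sin
  have hcos := tendsto_saddleIntegral_one_sub_cos
  rw [← hG] at hone hcos
  have hwidth : Tendsto (fun t => (saddleWidth t : ℂ)) (𝓝[>] 0) (𝓝 0) :=
    (Complex.continuous_ofReal.tendsto 0).comp
      (tendsto_nhds_of_tendsto_nhdsWithin tendsto_saddleWidth)
  have hlim := (((hcos.mul ((hone.const_mul 2).sub ((hwidth.pow 2).mul hcos))).neg).add
    (hsin.pow 2)).div (hone.pow 2) (pow_ne_zero 2 hG0)
  have hvalue : (-(((G * (3 / (2 * π ^ 2)) : ℝ) : ℂ) * (2 * (G : ℂ) -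
      0 ^ 2 * ((G * (3 / (2 * π ^ 2)) : ℝ) : ℂ))) + 0 ^ 2) / (G : ℂ) ^ 2 =
      ((-(3 / π ^ 2) : ℝ) : ℂ) := by
    have : (π : ℂ) ≠ 0 := Complex.ofReal_ne_zero.mpr pi_ne_zero
    push_cast
    field_simp
    ring
  rw [hvalue] at hlim
  refine hlim.congr' ?_
  filter_upwards [self_mem_nhdsWithin, hone.eventually_ne hG0] with t (ht : 0 < t) hne
  have hw : (saddleWidth t : ℂ) ≠ 0 := Complex.ofReal_ne_zero.mpr (saddleWidth_pos ht).ne'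
  have hA : saddleIntegral t (fun _ => 1) ≠ 0 := (div_ne_zero_iff.mp hne).1
  rw [Pi.div_apply, saddleRatio, saddleIntegral_cos ht, ← saddleWidth_sq ht.le, Complex.ofReal_pow]
  field_simp
  ring

theorem tendsto_log_div_of_tendsto_sub_one_div {α : Type*} {l : Filter α} {f g : α → ℝ} {c : ℝ}
    (hf : Tendsto f l (𝓝 1)) (hfg : Tendsto (fun x => (f x - 1) / g x) l (𝓝 c)) :
    Tendsto (fun x => log (f x) / g x) l (𝓝 c) := by
  have hslope : Tendsto (dslope log 1) (𝓝 1) (𝓝 1) := by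
    have h := (continuousAt_dslope_same.mpr (Real.differentiableAt_log one_ne_zero)).tendsto
    rwa [dslope_same, Real.deriv_log, inv_one] at h
  have h := (hslope.comp hf).mul hfg
  rw [one_mul] at h
  refine h.congr fun x => ?_
  have hlog := sub_smul_dslope log 1 (f x)
  rw [Real.log_one, sub_zero, smul_eq_mul] at hlog
  rw [Function.comp_apply, ← hlog]
  ring

theorem tendsto_log_saddleRatio :
    Tendsto (fun t : ℝ => log (saddleRatio t).re / t ^ 3) (𝓝[>] 0) (𝓝 (-(3 / π ^ 2))) := by
  have hdiv : Tendsto (fun t : ℝ => ((saddleRatio t).re - 1) / t ^ 3) (𝓝[>] 0)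
      (𝓝 (-(3 / π ^ 2))) := by
    refine ((Complex.continuous_re.tendsto _).comp tendsto_saddleRatio).congr fun t => ?_
    rw [Function.comp_apply, Complex.div_ofReal_re, Complex.sub_re, Complex.one_re]
  refine tendsto_log_div_of_tendsto_sub_one_div ?_ hdiv
  have hcube : Tendsto (fun t : ℝ => t ^ 3) (𝓝[>] 0) (𝓝 0) :=
    ((continuous_pow 3).tendsto' 0 0 (by simp)).mono_left nhdsWithin_le_nhds
  have h := (hdiv.mul hcube).add_const 1
  rw [mul_zero, zero_add] at h
  refine h.congr' ?_
  filter_upwards [self_mem_nhdsWithin] with t (ht : 0 < t)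
  rw [div_mul_cancel₀ _ (pow_pos ht 3).ne', sub_add_cancel]

theorem tendsto_cumulant_zero_right (j : ℕ) : Tendsto (cumulant j) (𝓝[>] 0) atTop := by
  have hpow : Tendsto (fun t : ℝ => t ^ (j + 1)) (𝓝[>] 0) (𝓝[>] 0) := by
    refine tendsto_nhdsWithin_iff.mpr ⟨?_, ?_⟩
    · exact ((continuous_pow (j + 1)).tendsto' 0 0 (by simp)).mono_left nhdsWithin_le_nhds
    · filter_upwards [self_mem_nhdsWithin] with t (ht : 0 < t) using pow_pos ht _
  refine ((tendsto_pow_mul_cumulant j).pos_mul_atTop (by positivity)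
    (tendsto_inv_nhdsGT_zero.comp hpow)).congr' ?_
  filter_upwards [self_mem_nhdsWithin] with t (ht : 0 < t)
  rw [Function.comp_apply, mul_comm, inv_mul_cancel_left₀ (pow_pos ht _).ne']

theorem exists_cumulant_eq (j : ℕ) {a : ℝ} (ha : 0 < a) : ∃ t, 0 < t ∧ cumulant j t = a :=
  isPreconnected_Ioi.intermediate_value_Ioi (le_principal_iff.mpr (Ioi_mem_atTop 0))
    (le_principal_iff.mpr self_mem_nhdsWithin) (continuousOn_cumulant j)
    (tendsto_cumulant_atTop j) (tendsto_cumulant_zero_right j) ha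

theorem tendsto_zero_right_of_tendsto_cumulant {α : Type*} {l : Filter α} {τ : α → ℝ} {j : ℕ}
    (hτ : ∀ x, 0 < τ x) (h : Tendsto (fun x => cumulant j (τ x)) l atTop) :
    Tendsto τ l (𝓝[>] 0) := by
  refine tendsto_nhdsWithin_iff.mpr ⟨tendsto_order.mpr ⟨fun a ha => ?_, fun ε hε => ?_⟩,
    .of_forall hτ⟩
  · exact .of_forall fun x => ha.trans (hτ x)
  · filter_upwards [h.eventually_gt_atTop (cumulant j ε)] with x hx
    by_contra! hle
    exact hx.not_ge (antitoneOn_cumulant j hε (hτ x) hle)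

theorem pi_sq_div_six_rpow_mul : (π ^ 2 / 6) ^ ((3 : ℝ) / 2) * (3 / π ^ 2) = π / √24 := by
  have h24 : √(24 : ℝ) = 2 * √6 := by
    rw [show (24 : ℝ) = 2 ^ 2 * 6 by norm_num, Real.sqrt_mul (by norm_num),
      Real.sqrt_sq (by norm_num)]
  have hcube : √(6 : ℝ) ^ 3 = 6 * √6 := by rw [pow_succ, Real.sq_sqrt (by norm_num)]
  rw [Real.rpow_div_two_eq_sqrt _ (by positivity), Real.sqrt_div (by positivity),
    Real.sqrt_sq pi_pos.le, Real.rpow_ofNat, div_pow, hcube, h24]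
  field_simp
  norm_num

theorem tendsto_cumulant_rpow_mul_log_saddleRatio :
    Tendsto (fun t : ℝ => -(cumulant 1 t + 1) ^ ((3 : ℝ) / 2) * log (saddleRatio t).re) (𝓝[>] 0)
      (𝓝 (π / √24)) := by
  have hsq : Tendsto (fun t : ℝ => t ^ 2) (𝓝[>] 0) (𝓝 0) :=
    ((continuous_pow 2).tendsto' 0 0 (by simp)).mono_left nhdsWithin_le_nhds
  have hmean : Tendsto (fun t : ℝ => t ^ 2 * (cumulant 1 t + 1)) (𝓝[>] 0) (𝓝 (π ^ 2 / 6)) := by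
    simpa [mul_add] using (tendsto_pow_mul_cumulant 1).add hsq
  have hprod := ((hmean.rpow_const (p := (3 : ℝ) / 2) (Or.inr (by norm_num))).mul
    tendsto_log_saddleRatio).neg
  rw [mul_neg, neg_neg, pi_sq_div_six_rpow_mul] at hprod
  refine hprod.congr' ?_
  filter_upwards [self_mem_nhdsWithin] with t (ht : 0 < t)
  rw [Real.mul_rpow (by positivity) (add_nonneg (cumulant_nonneg 1 t) zero_le_one),
    Real.rpow_div_two_eq_sqrt _ (by positivity), Real.sqrt_sq ht.le, Real.rpow_ofNat]
  field_simp

end SecondDifference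

theorem limit_second_difference_log_p :
    Tendsto (fun n : ℕ =>
        -(n : ℝ) ^ ((3 : ℝ) / 2) *
          (Real.log (p n) + Real.log (p (n - 2)) - 2 * Real.log (p (n - 1))))
      atTop (nhds (π / Real.sqrt 24)) := by
  choose τ hpos hτ using fun n : ℕ => exists_cumulant_eq 1 (a := (n + 1 : ℕ)) (by positivity)
  have hτ0 : Tendsto τ atTop (𝓝[>] 0) := by
    refine tendsto_zero_right_of_tendsto_cumulant (j := 1) hpos ?_
    simpa only [hτ, Function.comp_def] using
      tendsto_natCast_atTop_atTop.comp (tendsto_add_atTop_nat 1)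
  rw [← tendsto_add_atTop_iff_nat 2]
  refine (tendsto_cumulant_rpow_mul_log_saddleRatio.comp hτ0).congr fun n => ?_
  have hp (m : ℕ) : p m ≠ 0 := (p_pos m).ne'
  rw [Function.comp_apply, hτ, saddleRatio_eq (hpos n) (hτ n), Complex.ofReal_re,
    Real.log_div (mul_ne_zero (hp _) (hp _)) (pow_ne_zero 2 (hp _)), Real.log_mul (hp _) (hp _),
    Real.log_pow, Nat.add_sub_cancel, show n + 2 - 1 = n + 1 by lia]
  push_cast
  ring_nf
end
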